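/- arXiv:1908.06000 — 5 statements merged into one kernel-verified Lean document; each statement's English description precedes it below -/
import Mathlib

section
/- Let Z be a free abelian group, let A, B ⊆ Z be finite sets, let G ⊆ A × B, and let C = {a + b : (a, b) ∈ G}. Let N₀ ≥ 1 and M ≥ 1 be such that #A ≤ N₀, #B ≤ N₀, #C ≤ N₀, and for every z ∈ Z the fiber {(a, b) ∈ G : a − b = z} has cardinality at most M. Then #G ≤ M^{1/6} · N₀^{11/6}. -/
/-!
For functions `f 0, …, f (n - 1)` on a finite set `s`, consider the chains `v₀, …, vₙ` in `s` whose
consecutive terms `vᵢ`, `vᵢ₊₁` have the same value under `f i`. If `f i` takes at most `tᵢ` values,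
there are at least `#s ^ (n + 1) / ∏ tᵢ` chains: by AM-GM it is enough to bound from below the
product over `v` of the number of chains starting at `v`, which works by induction on `n`.

Let `V` be the set of pairs of points of `G` with the same first coordinate, so that
`#G ^ 2 ≤ #V * #A`. Chains `v₀, v₁, v₂, v₃` in `V`, where `v₀`, `v₁` have the same two sums, `v₁`,
`v₂` the same two second coordinates, and `v₂`, `v₃` the same first sum and the same last
coordinate, number at least `#V ^ 4 / (#B ^ 3 * #C ^ 3)`. In such a chain, `v₀` and one further
coordinate in each of `A` and `B` determine the difference of the coordinates of the last point, and
together with that point they determine the chain. So there are at most `M * #V * #A * #B` chains,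
whence `#G ^ 6 ≤ M * #A ^ 4 * #B ^ 4 * #C ^ 3`.
-/

open Finset

section AMGM

variable {α β : Type*} [DecidableEq β] {s : Finset α} {w : α → ℝ}

theorem card_pow_card_mul_prod_le_sum_pow_card (hw : ∀ v ∈ s, 0 ≤ w v) :
    (#s : ℝ) ^ #s * ∏ v ∈ s, w v ≤ (∑ v ∈ s, w v) ^ #s := by
  obtain rfl | hs := s.eq_empty_or_nonempty
  · simp
  have hcard : (0 : ℝ) < #s := by exact_mod_cast hs.card_pos
  have amgm := Real.geom_mean_le_arith_mean s (fun _ ↦ 1) w (fun _ _ ↦ zero_le_one)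
    (by simpa using hcard) hw
  simp only [Real.rpow_one, sum_const, nsmul_eq_mul, mul_one, one_mul] at amgm
  have hprod := pow_le_pow_left₀ (Real.rpow_nonneg (prod_nonneg hw) _) amgm #s
  rw [Real.rpow_inv_natCast_pow (prod_nonneg hw) hs.card_pos.ne', div_pow,
    le_div_iff₀ (by positivity)] at hprod
  rwa [mul_comm]

theorem sum_div_sum_fiber_le_card (f : α → β) {t : Finset β} (hf : ∀ v ∈ s, f v ∈ t) :
    ∑ v ∈ s, w v / ∑ u ∈ s with f u = f v, w u ≤ #t := by
  rw [← sum_fiberwise_of_maps_to hf, card_eq_sum_ones, Nat.cast_sum]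
  refine sum_le_sum fun b _ ↦ ?_
  calc ∑ v ∈ s with f v = b, w v / ∑ u ∈ s with f u = f v, w u
      = ∑ v ∈ s with f v = b, w v / ∑ u ∈ s with f u = b, w u :=
        sum_congr rfl fun v hv ↦ by rw [(mem_filter.1 hv).2]
    _ = (∑ v ∈ s with f v = b, w v) / ∑ u ∈ s with f u = b, w u := (sum_div ..).symm
    _ ≤ (1 : ℕ) := by simpa using div_self_le_one _

theorem card_pow_card_mul_prod_le_card_pow_card_mul_prod_sum_fiber (hw : ∀ v ∈ s, 0 < w v)
    (f : α → β) {t : Finset β} (hf : ∀ v ∈ s, f v ∈ t) :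
    (#s : ℝ) ^ #s * ∏ v ∈ s, w v ≤ #t ^ #s * ∏ v ∈ s, ∑ u ∈ s with f u = f v, w u := by
  have hfiber : ∀ v ∈ s, 0 < ∑ u ∈ s with f u = f v, w u := fun v hv ↦
    sum_pos (fun u hu ↦ hw u (mem_filter.1 hu).1) ⟨v, mem_filter.2 ⟨hv, rfl⟩⟩
  have hratio : ∀ v ∈ s, 0 ≤ w v / ∑ u ∈ s with f u = f v, w u := fun v hv ↦
    (div_pos (hw v hv) (hfiber v hv)).le
  have amgm := (card_pow_card_mul_prod_le_sum_pow_card hratio).trans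
    (pow_le_pow_left₀ (sum_nonneg hratio) (sum_div_sum_fiber_le_card f hf) #s)
  rwa [prod_div_distrib, ← mul_div_assoc, div_le_iff₀ (prod_pos hfiber)] at amgm

end AMGM

section FiberChains

variable {α β : Type*} [DecidableEq β] {s : Finset α} {n : ℕ}

/-- The chains `v₀, …, vₙ` in `s` such that `vᵢ` and `vᵢ₊₁` lie in the same fiber of `f i`, whose
number Katz and Tao bound from below. -/
def fiberChains (s : Finset α) (f : Fin n → α → β) : Finset (Fin (n + 1) → α) :=
  {c ∈ Fintype.piFinset fun _ ↦ s | ∀ i : Fin n, f i (c i.castSucc) = f i (c i.succ)}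

theorem mem_fiberChains {f : Fin n → α → β} {c : Fin (n + 1) → α} :
    c ∈ fiberChains s f ↔ (∀ i, c i ∈ s) ∧ ∀ i : Fin n, f i (c i.castSucc) = f i (c i.succ) := by
  simp only [fiberChains, mem_filter, Fintype.mem_piFinset]

theorem cons_mem_fiberChains {f : Fin (n + 1) → α → β} {v : α} {c : Fin (n + 1) → α} :
    (Fin.cons v c : Fin (n + 2) → α) ∈ fiberChains s f ↔
      v ∈ s ∧ f 0 v = f 0 (c 0) ∧ c ∈ fiberChains s (Fin.tail f) := by
  simp only [mem_fiberChains, Fin.forall_fin_succ (n := n + 1), Fin.forall_fin_succ (n := n),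
    Fin.cons_zero, Fin.cons_succ, Fin.castSucc_zero, ← Fin.succ_castSucc, Fin.tail]
  tauto

section ChainsFrom

variable [DecidableEq α]

theorem card_fiberChains_from_pos (f : Fin n → α → β) {v : α} (hv : v ∈ s) :
    0 < #{c ∈ fiberChains s f | c 0 = v} :=
  card_pos.2 ⟨fun _ ↦ v, mem_filter.2 ⟨mem_fiberChains.2 ⟨fun _ ↦ hv, fun _ ↦ rfl⟩, rfl⟩⟩

theorem card_fiberChains_from_succ (f : Fin (n + 1) → α → β) {v : α} (hv : v ∈ s) :
    #{c ∈ fiberChains s f | c 0 = v} =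
      ∑ u ∈ s with f 0 u = f 0 v, #{c ∈ fiberChains s (Fin.tail f) | c 0 = u} := by
  calc #{c ∈ fiberChains s f | c 0 = v}
      = #{c ∈ fiberChains s (Fin.tail f) | f 0 (c 0) = f 0 v} := by
        refine card_nbij' Fin.tail (fun c ↦ Fin.cons v c) ?_ ?_ ?_ ?_
        · intro c hc
          obtain ⟨u, c, rfl⟩ : ∃ u d, c = Fin.cons u d := ⟨c 0, _, (Fin.cons_self_tail c).symm⟩
          obtain ⟨hchain, rfl⟩ := mem_filter.1 hc
          obtain ⟨-, hlink, htail⟩ := cons_mem_fiberChains.1 hchain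
          exact mem_filter.2 ⟨htail, hlink.symm⟩
        · intro c hc
          obtain ⟨htail, hlink⟩ := mem_filter.1 hc
          exact mem_filter.2 ⟨cons_mem_fiberChains.2 ⟨hv, hlink.symm, htail⟩, rfl⟩
        · intro c hc
          obtain ⟨-, rfl⟩ := mem_filter.1 hc
          exact Fin.cons_self_tail c
        · exact fun c _ ↦ Fin.tail_cons ..
    _ = ∑ u ∈ s with f 0 u = f 0 v,
          #{c ∈ {c ∈ fiberChains s (Fin.tail f) | f 0 (c 0) = f 0 v} | c 0 = u} :=
        card_eq_sum_card_fiberwise fun c hc ↦ by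
          obtain ⟨htail, hlink⟩ := mem_filter.1 hc
          exact mem_filter.2 ⟨(mem_fiberChains.1 htail).1 0, hlink⟩
    _ = _ := sum_congr rfl fun u hu ↦ by
        rw [filter_filter]
        exact congrArg card <| filter_congr fun c _ ↦
          and_iff_right_of_imp fun hcu ↦ hcu ▸ (mem_filter.1 hu).2

theorem card_pow_le_prod_card_fiberChains_from {f : Fin n → α → β} {t : Fin n → Finset β}
    (hf : ∀ i, ∀ v ∈ s, f i v ∈ t i) :
    (#s ^ n) ^ #s ≤ (∏ i, #(t i)) ^ #s * ∏ v ∈ s, #{c ∈ fiberChains s f | c 0 = v} := by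
  induction n with
  | zero =>
    simpa using one_le_prod' fun v hv ↦ Nat.succ_le_of_lt (card_fiberChains_from_pos f hv)
  | succ n ih =>
    have hstep : #s ^ #s * ∏ v ∈ s, #{c ∈ fiberChains s (Fin.tail f) | c 0 = v} ≤
        #(t 0) ^ #s * ∏ v ∈ s, #{c ∈ fiberChains s f | c 0 = v} := by
      rw [prod_congr rfl fun v hv ↦ card_fiberChains_from_succ f hv]
      exact_mod_cast card_pow_card_mul_prod_le_card_pow_card_mul_prod_sum_fiber
        (fun v hv ↦ Nat.cast_pos.2 (card_fiberChains_from_pos (Fin.tail f) hv)) (f 0) (hf 0)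
    calc (#s ^ (n + 1)) ^ #s = #s ^ #s * (#s ^ n) ^ #s := by rw [pow_succ', mul_pow]
      _ ≤ #s ^ #s * ((∏ i : Fin n, #(t i.succ)) ^ #s *
            ∏ v ∈ s, #{c ∈ fiberChains s (Fin.tail f) | c 0 = v}) := by
        gcongr
        exact ih fun i ↦ hf i.succ
      _ = (∏ i : Fin n, #(t i.succ)) ^ #s *
            (#s ^ #s * ∏ v ∈ s, #{c ∈ fiberChains s (Fin.tail f) | c 0 = v}) := by ring
      _ ≤ (∏ i : Fin n, #(t i.succ)) ^ #s *
            (#(t 0) ^ #s * ∏ v ∈ s, #{c ∈ fiberChains s f | c 0 = v}) := by gcongr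
      _ = _ := by rw [Fin.prod_univ_succ]; ring

theorem sum_card_fiberChains_from (s : Finset α) (f : Fin n → α → β) :
    ∑ v ∈ s, #{c ∈ fiberChains s f | c 0 = v} = #(fiberChains s f) :=
  (card_eq_sum_card_fiberwise fun _ hc ↦ (mem_fiberChains.1 hc).1 0).symm

end ChainsFrom

theorem card_pow_succ_le_card_fiberChains_mul {f : Fin n → α → β} {t : Fin n → Finset β}
    (hf : ∀ i, ∀ v ∈ s, f i v ∈ t i) :
    #s ^ (n + 1) ≤ #(fiberChains s f) * ∏ i, #(t i) := by
  classical
  obtain rfl | hs := s.eq_empty_or_nonempty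
  · simp
  have amgm : #s ^ #s * ∏ v ∈ s, #{c ∈ fiberChains s f | c 0 = v} ≤ #(fiberChains s f) ^ #s := by
    rw [← sum_card_fiberChains_from]
    exact_mod_cast card_pow_card_mul_prod_le_sum_pow_card (s := s)
      (w := fun v ↦ (#{c ∈ fiberChains s f | c 0 = v} : ℝ)) fun _ _ ↦ Nat.cast_nonneg _
  refine le_of_pow_le_pow_left₀ hs.card_pos.ne' (Nat.zero_le _) ?_
  calc (#s ^ (n + 1)) ^ #s = #s ^ #s * (#s ^ n) ^ #s := by rw [pow_succ', mul_pow]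
    _ ≤ #s ^ #s * ((∏ i, #(t i)) ^ #s * ∏ v ∈ s, #{c ∈ fiberChains s f | c 0 = v}) := by
      gcongr
      exact card_pow_le_prod_card_fiberChains_from hf
    _ = (∏ i, #(t i)) ^ #s * (#s ^ #s * ∏ v ∈ s, #{c ∈ fiberChains s f | c 0 = v}) := by ring
    _ ≤ (∏ i, #(t i)) ^ #s * #(fiberChains s f) ^ #s := by gcongr
    _ = (#(fiberChains s f) * ∏ i, #(t i)) ^ #s := by rw [mul_pow, mul_comm]

end FiberChains

section SumDifference

variable {Z : Type*}

/-- The maps whose fibers link the successive vertical pairs of a Katz–Tao chain: both sums of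
coordinates; both second coordinates; the sum of the first point and the second coordinate of the
second point. -/
def katzTaoMaps [Add Z] : Fin 3 → (Fin 2 → Z × Z) → Z × Z :=
  ![fun v ↦ ((v 0).1 + (v 0).2, (v 1).1 + (v 1).2), fun v ↦ ((v 0).2, (v 1).2),
    fun v ↦ ((v 0).1 + (v 0).2, (v 1).2)]

variable [DecidableEq Z]

/-- The pairs of points of `G` with the same first coordinate, encoded as chains with a single link
so that the lower bound for chains applies to them. -/
def verticalPairs (G : Finset (Z × Z)) : Finset (Fin 2 → Z × Z) :=
  fiberChains G fun _ ↦ Prod.fst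

theorem mem_verticalPairs {G : Finset (Z × Z)} {v : Fin 2 → Z × Z} :
    v ∈ verticalPairs G ↔ v 0 ∈ G ∧ v 1 ∈ G ∧ (v 0).1 = (v 1).1 := by
  simp [verticalPairs, mem_fiberChains, Fin.forall_fin_two, and_assoc]

theorem verticalPairs_ext {G : Finset (Z × Z)} {v w : Fin 2 → Z × Z} (hv : v ∈ verticalPairs G)
    (hw : w ∈ verticalPairs G) (hfst : (v 0).1 = (w 0).1) (hsnd0 : (v 0).2 = (w 0).2)
    (hsnd1 : (v 1).2 = (w 1).2) : v = w := by
  have hv' := (mem_verticalPairs.1 hv).2.2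
  have hw' := (mem_verticalPairs.1 hw).2.2
  funext i
  match i with
  | 0 => exact Prod.ext hfst hsnd0
  | 1 => exact Prod.ext (by rw [← hv', ← hw', hfst]) hsnd1

theorem card_sq_le_card_verticalPairs_mul {A : Finset Z} {G : Finset (Z × Z)}
    (hA : ∀ p ∈ G, p.1 ∈ A) : #G ^ 2 ≤ #(verticalPairs G) * #A := by
  simpa [verticalPairs] using card_pow_succ_le_card_fiberChains_mul (s := G)
    (f := fun _ : Fin 1 ↦ Prod.fst) (t := fun _ ↦ A) fun _ ↦ hA

section Add

variable [Add Z]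

/-- The chains `v₀, v₁, v₂, v₃` of vertical pairs counted in two ways in the Katz–Tao argument. -/
def katzTaoChains (G : Finset (Z × Z)) : Finset (Fin 4 → Fin 2 → Z × Z) :=
  fiberChains (verticalPairs G) katzTaoMaps

theorem mem_katzTaoChains {G : Finset (Z × Z)} {c : Fin 4 → Fin 2 → Z × Z} :
    c ∈ katzTaoChains G ↔ (∀ i, c i ∈ verticalPairs G) ∧
      ((c 0 0).1 + (c 0 0).2 = (c 1 0).1 + (c 1 0).2 ∧
        (c 0 1).1 + (c 0 1).2 = (c 1 1).1 + (c 1 1).2) ∧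
      ((c 1 0).2 = (c 2 0).2 ∧ (c 1 1).2 = (c 2 1).2) ∧
      (c 2 0).1 + (c 2 0).2 = (c 3 0).1 + (c 3 0).2 ∧ (c 2 1).2 = (c 3 1).2 := by
  simp [katzTaoChains, katzTaoMaps, mem_fiberChains, Fin.forall_fin_succ (n := 2),
    Fin.forall_fin_two]

theorem card_verticalPairs_pow_four_le {B C : Finset Z} {G : Finset (Z × Z)}
    (hB : ∀ p ∈ G, p.2 ∈ B) (hC : ∀ p ∈ G, p.1 + p.2 ∈ C) :
    #(verticalPairs G) ^ 4 ≤ #(katzTaoChains G) * (#B ^ 3 * #C ^ 3) := by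
  have hmaps : ∀ i, ∀ v ∈ verticalPairs G,
      katzTaoMaps i v ∈ (![C ×ˢ C, B ×ˢ B, C ×ˢ B] : Fin 3 → Finset (Z × Z)) i := by
    intro i v hv
    obtain ⟨h0, h1, -⟩ := mem_verticalPairs.1 hv
    match i with
    | 0 => exact mem_product.2 ⟨hC (v 0) h0, hC (v 1) h1⟩
    | 1 => exact mem_product.2 ⟨hB (v 0) h0, hB (v 1) h1⟩
    | 2 => exact mem_product.2 ⟨hC (v 0) h0, hB (v 1) h1⟩
  refine (card_pow_succ_le_card_fiberChains_mul hmaps).trans_eq (congrArg _ ?_)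
  simp only [Fin.prod_univ_three, Matrix.cons_val, card_product]
  ring

end Add

variable [AddCommGroup Z]

theorem fst_sub_snd_of_mem_katzTaoChains {G : Finset (Z × Z)} {c : Fin 4 → Fin 2 → Z × Z}
    (hc : c ∈ katzTaoChains G) :
    (c 3 1).1 - (c 3 1).2 = (c 2 0).1 - (c 3 0).2 + ((c 0 0).2 - (c 0 1).2) := by
  obtain ⟨hV, ⟨hsum0, hsum1⟩, ⟨hsnd0, hsnd1⟩, hlast0, hlast1⟩ := mem_katzTaoChains.1 hc
  have h0 := (mem_verticalPairs.1 (hV 0)).2.2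
  have h1 := (mem_verticalPairs.1 (hV 1)).2.2
  have h3 := (mem_verticalPairs.1 (hV 3)).2.2
  have hdiff : (c 1 0).2 - (c 1 1).2 = (c 0 0).2 - (c 0 1).2 := by
    rw [eq_sub_of_add_eq' hsum0.symm, eq_sub_of_add_eq' hsum1.symm, h0, h1]
    abel
  calc (c 3 1).1 - (c 3 1).2 = (c 2 0).1 + (c 2 0).2 - (c 3 0).2 - (c 2 1).2 := by
        rw [← h3, hlast1, hlast0, add_sub_cancel_right]
    _ = (c 2 0).1 - (c 3 0).2 + ((c 1 0).2 - (c 1 1).2) := by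
        rw [hsnd0, hsnd1]
        abel
    _ = (c 2 0).1 - (c 3 0).2 + ((c 0 0).2 - (c 0 1).2) := by rw [hdiff]

theorem katzTaoChains_ext {G : Finset (Z × Z)} {c d : Fin 4 → Fin 2 → Z × Z}
    (hc : c ∈ katzTaoChains G) (hd : d ∈ katzTaoChains G) (h0 : c 0 = d 0)
    (h2 : (c 2 0).1 = (d 2 0).1) (h3 : (c 3 0).2 = (d 3 0).2) (hlast : c 3 1 = d 3 1) :
    c = d := by
  obtain ⟨hcV, ⟨hcsum, -⟩, ⟨hcsnd0, hcsnd1⟩, hclast0, hclast1⟩ := mem_katzTaoChains.1 hc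
  obtain ⟨hdV, ⟨hdsum, -⟩, ⟨hdsnd0, hdsnd1⟩, hdlast0, hdlast1⟩ := mem_katzTaoChains.1 hd
  have e3 : c 3 = d 3 := by
    refine verticalPairs_ext (hcV 3) (hdV 3) ?_ h3 (by rw [hlast])
    rw [(mem_verticalPairs.1 (hcV 3)).2.2, (mem_verticalPairs.1 (hdV 3)).2.2, hlast]
  have e2 : c 2 = d 2 :=
    verticalPairs_ext (hcV 2) (hdV 2) h2
      (add_left_cancel <| hclast0.trans <| by rw [e3, h2, hdlast0])
      (by rw [hclast1, hdlast1, e3])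
  have e1snd : (c 1 0).2 = (d 1 0).2 := by rw [hcsnd0, hdsnd0, e2]
  have e1 : c 1 = d 1 :=
    verticalPairs_ext (hcV 1) (hdV 1)
      (add_right_cancel <| hcsum.symm.trans <| by rw [h0, e1snd, hdsum]) e1snd
      (by rw [hcsnd1, hdsnd1, e2])
  funext i
  match i with
  | 0 => exact h0
  | 1 => exact e1
  | 2 => exact e2
  | 3 => exact e3

theorem card_katzTaoChains_le {A B : Finset Z} {G : Finset (Z × Z)} (hG : G ⊆ A ×ˢ B) {M : ℕ}
    (hfib : ∀ z : Z, #{p ∈ G | p.1 - p.2 = z} ≤ M) :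
    #(katzTaoChains G) ≤ M * (#(verticalPairs G) * (#A * #B)) := by
  rw [← card_product, ← card_product]
  refine card_le_mul_card_image_of_maps_to (f := fun c ↦ (c 0, (c 2 0).1, (c 3 0).2)) ?_ M ?_
  · intro c hc
    have hV := (mem_katzTaoChains.1 hc).1
    have h2 := mem_product.1 (hG (mem_verticalPairs.1 (hV 2)).1)
    have h3 := mem_product.1 (hG (mem_verticalPairs.1 (hV 3)).1)
    exact mem_product.2 ⟨hV 0, mem_product.2 ⟨h2.1, h3.2⟩⟩
  · rintro ⟨v, x, y⟩ -
    refine (card_le_card_of_injOn (fun c ↦ c 3 1) ?_ ?_).trans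
      (hfib (x - y + ((v 0).2 - (v 1).2)))
    · intro c hc
      obtain ⟨hcG, hcv⟩ := mem_filter.1 hc
      simp only [Prod.mk.injEq] at hcv
      obtain ⟨rfl, rfl, rfl⟩ := hcv
      exact mem_filter.2 ⟨(mem_verticalPairs.1 ((mem_katzTaoChains.1 hcG).1 3)).2.1,
        fst_sub_snd_of_mem_katzTaoChains hcG⟩
    · intro c hc d hd hlast
      obtain ⟨hcG, hcv⟩ := mem_filter.1 hc
      obtain ⟨hdG, hdv⟩ := mem_filter.1 hd
      obtain ⟨h0, h2, h3⟩ := by simpa only [Prod.mk.injEq] using hcv.trans hdv.symm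
      exact katzTaoChains_ext hcG hdG h0 h2 h3 hlast

theorem card_pow_six_le {A B C : Finset Z} {G : Finset (Z × Z)} (hG : G ⊆ A ×ˢ B)
    (hC : ∀ p ∈ G, p.1 + p.2 ∈ C) {M : ℕ} (hfib : ∀ z : Z, #{p ∈ G | p.1 - p.2 = z} ≤ M) :
    #G ^ 6 ≤ M * (#A ^ 4 * #B ^ 4 * #C ^ 3) := by
  have hcube : #(verticalPairs G) ^ 3 ≤ M * (#A * #B ^ 4 * #C ^ 3) := by
    obtain hV | hV := (#(verticalPairs G)).eq_zero_or_pos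
    · simp [hV]
    refine Nat.le_of_mul_le_mul_left ?_ hV
    calc #(verticalPairs G) * #(verticalPairs G) ^ 3 = #(verticalPairs G) ^ 4 := by ring
      _ ≤ #(katzTaoChains G) * (#B ^ 3 * #C ^ 3) :=
        card_verticalPairs_pow_four_le (fun p hp ↦ (mem_product.1 (hG hp)).2) hC
      _ ≤ M * (#(verticalPairs G) * (#A * #B)) * (#B ^ 3 * #C ^ 3) := by
        gcongr
        exact card_katzTaoChains_le hG hfib
      _ = #(verticalPairs G) * (M * (#A * #B ^ 4 * #C ^ 3)) := by ring
  calc #G ^ 6 = (#G ^ 2) ^ 3 := by ring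
    _ ≤ (#(verticalPairs G) * #A) ^ 3 := by
      gcongr
      exact card_sq_le_card_verticalPairs_mul fun p hp ↦ (mem_product.1 (hG hp)).1
    _ = #(verticalPairs G) ^ 3 * #A ^ 3 := mul_pow ..
    _ ≤ M * (#A * #B ^ 4 * #C ^ 3) * #A ^ 3 := by gcongr
    _ = M * (#A ^ 4 * #B ^ 4 * #C ^ 3) := by ring

end SumDifference

theorem le_rpow_mul_rpow_of_pow_six_le {x M N : ℝ} (hM : 0 ≤ M) (hN : 0 ≤ N)
    (h : x ^ 6 ≤ M * N ^ 11) : x ≤ M ^ ((1 : ℝ) / 6) * N ^ ((11 : ℝ) / 6) := by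
  refine le_of_pow_le_pow_left₀ (n := 6) (by norm_num) (by positivity) (h.trans_eq ?_)
  rw [mul_pow, ← Real.rpow_mul_natCast hM, ← Real.rpow_mul_natCast hN]
  norm_num

theorem statement10_general {Z : Type*} [AddCommGroup Z] {A B : Finset Z} {G : Finset (Z × Z)}
    (hG : G ⊆ A ×ˢ B) {N₀ M : ℝ} (hA : (#A : ℝ) ≤ N₀) (hB : (#B : ℝ) ≤ N₀)
    (hC : ({z : Z | ∃ p ∈ G, p.1 + p.2 = z}.ncard : ℝ) ≤ N₀)
    (hfib : ∀ z : Z, ({p : Z × Z | p ∈ G ∧ p.1 - p.2 = z}.ncard : ℝ) ≤ M) :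
    (#G : ℝ) ≤ M ^ ((1 : ℝ) / 6) * N₀ ^ ((11 : ℝ) / 6) := by
  classical
  have hN₀ : 0 ≤ N₀ := (Nat.cast_nonneg _).trans hA
  have hM : 0 ≤ M := (Nat.cast_nonneg _).trans (hfib 0)
  set C := G.image fun p ↦ p.1 + p.2
  have hC' : (#C : ℝ) ≤ N₀ := by
    rwa [← Set.ncard_coe_finset, coe_image]
  have hfib' : ∀ z : Z, #{p ∈ G | p.1 - p.2 = z} ≤ ⌊M⌋₊ := fun z ↦
    Nat.le_floor <| by simpa only [← Set.ncard_coe_finset, coe_filter] using hfib z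
  refine le_rpow_mul_rpow_of_pow_six_le hM hN₀ ?_
  calc (#G : ℝ) ^ 6 ≤ ⌊M⌋₊ * (#A ^ 4 * #B ^ 4 * #C ^ 3) := by
        exact_mod_cast card_pow_six_le hG (fun p hp ↦ mem_image_of_mem _ hp) hfib'
    _ ≤ M * (N₀ ^ 4 * N₀ ^ 4 * N₀ ^ 3) := by
      gcongr
      exact Nat.floor_le hM
    _ = M * N₀ ^ 11 := by ring

/-- a Katz–Tao type sum-difference estimate in a free abelian group. -/
theorem statement10 (Z : Type*) [AddCommGroup Z] [Module.Free ℤ Z]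
    (A B : Finset Z) (G : Finset (Z × Z)) (hG : G ⊆ A ×ˢ B)
    (N₀ M : ℝ) (hN₀ : 1 ≤ N₀) (hM : 1 ≤ M)
    (hA : (A.card : ℝ) ≤ N₀) (hB : (B.card : ℝ) ≤ N₀)
    (hC : (({z : Z | ∃ p ∈ G, p.1 + p.2 = z}).ncard : ℝ) ≤ N₀)
    (hfib : ∀ z : Z, (({p : Z × Z | p ∈ G ∧ p.1 - p.2 = z}).ncard : ℝ) ≤ M) :
    (G.card : ℝ) ≤ M ^ ((1 : ℝ) / 6) * N₀ ^ ((11 : ℝ) / 6) :=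
  statement10_general hG hA hB hC hfib
end

section
/- Let n ≥ 2 be an integer and let E ⊆ ℝⁿ be Lebesgue measurable with λ(E) < ∞. (i) For every invertible linear map L : ℝⁿ → ℝⁿ and every v ∈ ℝⁿ, J_n(L(E) + v) = (det L)² · J_n(E). (ii) If E′ ⊆ ℝⁿ is Lebesgue measurable with λ(E △ E′) = 0, then J_n(E′) = J_n(E). In particular, the convexity index c(E) := J_n(E) / (n(n+1)·λ(E)²) (for 0 < λ(E) < ∞) is invariant under invertible affine transformations and under modification of E on a set of measure zero. -/
open MeasureTheory
open scoped ENNReal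

noncomputable section

/-- `Jn n E` is the `(n+1)`-st power of the `L^{n+1}` norm of the X-ray transform of the
indicator of `E`: the integral over directions `ξ` in the unit sphere (with the standard
unnormalized surface measure `volume.toSphere`) and points `x ∈ E` of the `n`-th power of
the length of the chord of `E` through `x` in direction `ξ`. -/
def Jn (n : ℕ) (E : Set (EuclideanSpace ℝ (Fin n))) : ℝ≥0∞ :=
  ∫⁻ ξ : Metric.sphere (0 : EuclideanSpace ℝ (Fin n)) 1,
    (∫⁻ x in E, (volume {t : ℝ | x + t • (ξ : EuclideanSpace ℝ (Fin n)) ∈ E}) ^ n)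
    ∂((volume : Measure (EuclideanSpace ℝ (Fin n))).toSphere)

/-!
Measuring chords in multiples of `u` rather than of `u / ‖u‖` extends the inner integral of `Jn` to
a function `G E` of all nonzero vectors `u`. It is homogeneous of degree `-d`, where `d` is the
dimension, and a linear change of variables gives `G (L E + v) (L u) = |det L| * G E u`.

A second factor `|det L|` comes from the sphere. If `g` is homogeneous of degree `-d` and `N` is any
positively homogeneous gauge, then in polar coordinates `∫ g u * N u * exp (-N u) du = ∫ g dσ`,
because `∫₀^∞ c * exp (-c r) dr = 1` for every `c > 0`. Substituting `L u` for `u` in the case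
`N u = ‖u‖`, and applying the identity to `u ↦ g (L u)` with `N u = ‖L u‖`, gives
`∫ g dσ = |det L| * ∫ g (L ξ) dσ(ξ)`.
-/

section AffineImage

variable {V : Type*} [NormedAddCommGroup V] [NormedSpace ℝ V] [FiniteDimensional ℝ V]
  [MeasurableSpace V] [BorelSpace V] (μ : Measure V) [μ.IsAddHaarMeasure]

theorem setLIntegral_image_affine {L : V →ₗ[ℝ] V} (hL : Function.Injective L) (v : V) {s : Set V}
    (hs : MeasurableSet s) (f : V → ℝ≥0∞) :
    ∫⁻ y in (fun x => L x + v) '' s, f y ∂μ =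
      ENNReal.ofReal |LinearMap.det L| * ∫⁻ x in s, f (L x + v) ∂μ := by
  rw [← lintegral_const_mul' _ _ ENNReal.ofReal_ne_top]
  exact lintegral_image_eq_lintegral_abs_det_fderiv_mul μ hs
    (fun x _ => (L.toContinuousLinearMap.hasFDerivAt.add_const v).hasFDerivWithinAt)
    ((add_left_injective v).comp hL).injOn f

theorem addHaar_image_affine (L : V →ₗ[ℝ] V) (v : V) (s : Set V) :
    μ ((fun x => L x + v) '' s) = ENNReal.ofReal |LinearMap.det L| * μ s := by
  rw [← Set.image_image (· + v) L, Set.image_add_right, measure_preimage_add_right,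
    Measure.addHaar_image_linearMap]

theorem image_affine_ae_eq {L : V →ₗ[ℝ] V} (hL : Function.Injective L) (v : V) {E E' : Set V}
    (h : E =ᵐ[μ] E') : (fun x => L x + v) '' E =ᵐ[μ] (fun x => L x + v) '' E' := by
  have hinj : Function.Injective fun x => L x + v := (add_left_injective v).comp hL
  rw [← measure_symmDiff_eq_zero_iff] at h ⊢
  rw [← Set.image_symmDiff hinj, addHaar_image_affine, h, mul_zero]

end AffineImage

section NegDimHomogeneous

variable {V : Type*} [AddCommGroup V] [Module ℝ V]

/-- Positive homogeneity of degree `-dim V`, the degree for which integrals over the unit sphere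
transform under linear maps by the determinant alone. The power of `r` is kept on the left-hand side
to avoid division in `ℝ≥0∞`. -/
def IsNegDimHomogeneous (g : V → ℝ≥0∞) : Prop :=
  ∀ ⦃r : ℝ⦄, 0 < r → ∀ u, ENNReal.ofReal r ^ Module.finrank ℝ V * g (r • u) = g u

theorem IsNegDimHomogeneous.comp_linearMap {g : V → ℝ≥0∞} (hg : IsNegDimHomogeneous g)
    (M : V →ₗ[ℝ] V) : IsNegDimHomogeneous fun u => g (M u) :=
  fun r hr u => by simpa only [map_smul] using hg hr (M u)

end NegDimHomogeneous

section HomogeneousOnSphere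

theorem lintegral_Ioi_mul_exp_neg_mul {c : ℝ} (hc : 0 < c) :
    ∫⁻ r in Set.Ioi (0 : ℝ), ENNReal.ofReal (c * Real.exp (-(c * r))) = 1 := by
  have hpdf : ∀ r, ProbabilityTheory.exponentialPDF c r =
      (Set.Ici 0).indicator (fun r => ENNReal.ofReal (c * Real.exp (-(c * r)))) r := fun r => by
    by_cases hr : 0 ≤ r <;> simp [ProbabilityTheory.exponentialPDF_eq, hr]
  rw [setLIntegral_congr Ioi_ae_eq_Ici, ← lintegral_indicator measurableSet_Ici,
    ← ProbabilityTheory.lintegral_exponentialPDF_eq_one hc]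
  exact (lintegral_congr hpdf).symm

variable {V : Type*} [NormedAddCommGroup V] [NormedSpace ℝ V] [FiniteDimensional ℝ V]
  [MeasurableSpace V] [BorelSpace V] (μ : Measure V) [μ.IsAddHaarMeasure]

theorem lintegral_eq_lintegral_toSphere_lintegral_Ioi [Nontrivial V] {f : V → ℝ≥0∞}
    (hf : Measurable f) :
    ∫⁻ u, f u ∂μ = ∫⁻ ξ : Metric.sphere (0 : V) 1, (∫⁻ r in Set.Ioi (0 : ℝ),
      ENNReal.ofReal (r ^ (Module.finrank ℝ V - 1)) * f (r • (ξ : V))) ∂μ.toSphere := by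
  let F : Metric.sphere (0 : V) 1 × Set.Ioi (0 : ℝ) → ℝ≥0∞ := fun p => f ((p.2 : ℝ) • (p.1 : V))
  have hF : Measurable F := by fun_prop
  calc ∫⁻ u, f u ∂μ
      = ∫⁻ u : ({0}ᶜ : Set V), f u ∂μ.comap (↑) := by
        rw [lintegral_subtype_comap (measurableSet_singleton 0).compl, restrict_compl_singleton]
    _ = ∫⁻ u, F (homeomorphUnitSphereProd V u) ∂μ.comap (↑) :=
        lintegral_congr fun u => congrArg (fun w : ({0}ᶜ : Set V) => f w)
          ((homeomorphUnitSphereProd V).symm_apply_apply u).symm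
    _ = ∫⁻ p, F p ∂μ.toSphere.prod (.volumeIoiPow (Module.finrank ℝ V - 1)) :=
        μ.measurePreserving_homeomorphUnitSphereProd.lintegral_comp hF
    _ = ∫⁻ ξ, ∫⁻ r, F (ξ, r) ∂.volumeIoiPow (Module.finrank ℝ V - 1) ∂μ.toSphere :=
        lintegral_prod F hF.aemeasurable
    _ = _ := by
      refine lintegral_congr fun ξ => ?_
      rw [Measure.volumeIoiPow, lintegral_withDensity_eq_lintegral_mul _ (by fun_prop)
        (by fun_prop)]
      exact lintegral_subtype_comap measurableSet_Ioi
        fun r : ℝ => ENNReal.ofReal (r ^ (Module.finrank ℝ V - 1)) * f (r • (ξ : V))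

theorem IsNegDimHomogeneous.lintegral_mul_gauge_mul_exp_neg [Nontrivial V] {g : V → ℝ≥0∞}
    (hg : IsNegDimHomogeneous g) (hg_meas : Measurable g) {N : V → ℝ} (hN_meas : Measurable N)
    (hN_smul : ∀ r : ℝ, 0 < r → ∀ u, N (r • u) = r * N u) (hN_pos : ∀ u ≠ 0, 0 < N u) :
    ∫⁻ u, g u * ENNReal.ofReal (N u * Real.exp (-N u)) ∂μ =
      ∫⁻ ξ : Metric.sphere (0 : V) 1, g ξ ∂μ.toSphere := by
  rw [lintegral_eq_lintegral_toSphere_lintegral_Ioi μ (by fun_prop)]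
  refine lintegral_congr fun ξ => ?_
  have hNξ : 0 < N ξ := hN_pos ξ (ne_zero_of_mem_unit_sphere ξ)
  rw [← mul_one (g ξ), ← lintegral_Ioi_mul_exp_neg_mul hNξ, ← lintegral_const_mul _ (by fun_prop)]
  refine setLIntegral_congr_fun measurableSet_Ioi fun r (hr : 0 < r) => ?_
  have hpow : ENNReal.ofReal (r ^ (Module.finrank ℝ V - 1)) * ENNReal.ofReal r =
      ENNReal.ofReal r ^ Module.finrank ℝ V := by
    rw [ENNReal.ofReal_pow hr.le, pow_sub_one_mul Module.finrank_pos.ne']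
  calc ENNReal.ofReal (r ^ (Module.finrank ℝ V - 1)) *
        (g (r • (ξ : V)) * ENNReal.ofReal (N (r • (ξ : V)) * Real.exp (-N (r • (ξ : V)))))
      = ENNReal.ofReal (r ^ (Module.finrank ℝ V - 1)) * ENNReal.ofReal r * g (r • (ξ : V)) *
          ENNReal.ofReal (N ξ * Real.exp (-(N ξ * r))) := by
        rw [hN_smul r hr, mul_assoc r, ENNReal.ofReal_mul hr.le, mul_comm r]
        ring
    _ = g ξ * ENNReal.ofReal (N ξ * Real.exp (-(N ξ * r))) := by rw [hpow, hg hr]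

theorem IsNegDimHomogeneous.lintegral_toSphere_comp_linearMap {g : V → ℝ≥0∞}
    (hg : IsNegDimHomogeneous g) (hg_meas : Measurable g) {L : V →ₗ[ℝ] V}
    (hL : Function.Injective L) :
    ∫⁻ ξ : Metric.sphere (0 : V) 1, g ξ ∂μ.toSphere =
      ENNReal.ofReal |LinearMap.det L| *
        ∫⁻ ξ : Metric.sphere (0 : V) 1, g (L ξ) ∂μ.toSphere := by
  rcases subsingleton_or_nontrivial V with _ | _
  · simp [μ.toSphere_eq_zero_iff.2 ‹_›]
  have hL_meas : Measurable L := L.continuous_of_finiteDimensional.measurable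
  let w : V → ℝ≥0∞ := fun u => ENNReal.ofReal (‖u‖ * Real.exp (-‖u‖))
  calc ∫⁻ ξ : Metric.sphere (0 : V) 1, g ξ ∂μ.toSphere
      = ∫⁻ u, g u * w u ∂μ :=
        (hg.lintegral_mul_gauge_mul_exp_neg μ hg_meas measurable_norm
          (fun r hr u => by rw [norm_smul, Real.norm_of_nonneg hr.le])
          fun u => norm_pos_iff.2).symm
    _ = ENNReal.ofReal |LinearMap.det L| * ∫⁻ u, g (L u) * w (L u) ∂μ := by
        simpa [Set.image_univ, (LinearMap.injective_iff_surjective.1 hL).range_eq] using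
          setLIntegral_image_affine μ hL 0 MeasurableSet.univ fun u => g u * w u
    _ = _ := by
        rw [(hg.comp_linearMap L).lintegral_mul_gauge_mul_exp_neg μ (N := fun u => ‖L u‖)
          (by fun_prop) (by fun_prop)
          (fun r hr u => by rw [map_smul, norm_smul, Real.norm_of_nonneg hr.le])
          fun u hu => norm_pos_iff.2 ((map_ne_zero_iff L hL).2 hu)]

end HomogeneousOnSphere

section ChordLength

variable {V : Type*} [AddCommGroup V] [Module ℝ V]

/-- The X-ray transform of the indicator of `E` along the line through `x` in the direction `u`.
Length is measured in multiples of `u`, which need not be a unit vector. -/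
def chordLength (E : Set V) (u x : V) : ℝ≥0∞ :=
  volume {t : ℝ | x + t • u ∈ E}

theorem ofReal_abs_mul_chordLength_smul (E : Set V) {r : ℝ} (hr : r ≠ 0) (u x : V) :
    ENNReal.ofReal |r| * chordLength E (r • u) x = chordLength E u x := by
  have hpre : {t : ℝ | x + t • r • u ∈ E} = (· * r) ⁻¹' {t : ℝ | x + t • u ∈ E} := by
    simp only [smul_smul, Set.preimage_ofPred_eq]
  rw [chordLength, chordLength, hpre, Real.volume_preimage_mul_right hr, ← mul_assoc,
    ← ENNReal.ofReal_mul (abs_nonneg r), ← abs_mul, mul_inv_cancel₀ hr, abs_one,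
    ENNReal.ofReal_one, one_mul]

theorem chordLength_image_affine {L : V →ₗ[ℝ] V} (hL : Function.Injective L) (v : V) (E : Set V)
    (u x : V) :
    chordLength ((fun x => L x + v) '' E) (L u) (L x + v) = chordLength E u x := by
  have hline (t : ℝ) : L x + v + t • L u = L (x + t • u) + v := by
    rw [map_add, map_smul, add_right_comm]
  have hinj : Function.Injective fun x => L x + v := (add_left_injective v).comp hL
  simp only [chordLength, hline, hinj.mem_set_image (f := fun x => L x + v)]

variable [MeasurableSpace V] [MeasurableAdd₂ V]

theorem measurable_chordLength [MeasurableSMul₂ ℝ V] {E : Set V} (hE : MeasurableSet E) :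
    Measurable (Function.uncurry (chordLength E)) := by
  have hline : Measurable fun q : (V × V) × ℝ => q.1.2 + q.2 • q.1.1 := by fun_prop
  exact measurable_measure_prodMk_left (hline hE)

theorem chordLength_ae_eq_of_ae_eq [MeasurableSMul ℝ V] (μ : Measure V) [SFinite μ]
    [μ.IsAddRightInvariant] {E E' : Set V} (h : E =ᵐ[μ] E') (u : V) :
    chordLength E u =ᵐ[μ] chordLength E' u := by
  have hline : Measure.QuasiMeasurePreserving (fun p : V × ℝ => p.1 + p.2 • u)
      (μ.prod volume) μ :=
    QuasiMeasurePreserving.prod_of_left (by fun_prop)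
      (.of_forall fun t => (measurePreserving_add_right μ (t • u)).quasiMeasurePreserving)
  filter_upwards [Measure.ae_ae_of_ae_prod (hline.ae h.mem_iff)] with x hx
  exact measure_congr (Filter.eventuallyEq_set.2 hx)

end ChordLength

section ChordPowerIntegral

variable {V : Type*} [AddCommGroup V] [Module ℝ V] [MeasurableSpace V]

variable (μ : Measure V)

/-- The integral over `x ∈ E` of the `p`-th power of the length of the chord of `E` through `x` in
the direction `u`. For `p = dim V` and `u` in the unit sphere this is the inner integral in `Jn`. -/
def chordPowerIntegral (p : ℕ) (E : Set V) (u : V) : ℝ≥0∞ :=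
  ∫⁻ x in E, chordLength E u x ^ p ∂μ

theorem ofReal_abs_pow_mul_chordPowerIntegral_smul (p : ℕ) (E : Set V) {r : ℝ} (hr : r ≠ 0)
    (u : V) :
    ENNReal.ofReal |r| ^ p * chordPowerIntegral μ p E (r • u) = chordPowerIntegral μ p E u := by
  simp only [chordPowerIntegral]
  rw [← lintegral_const_mul' _ _ (ENNReal.pow_ne_top ENNReal.ofReal_ne_top)]
  simp only [← mul_pow, ofReal_abs_mul_chordLength_smul E hr]

theorem isNegDimHomogeneous_chordPowerIntegral (E : Set V) :
    IsNegDimHomogeneous (chordPowerIntegral μ (Module.finrank ℝ V) E) := fun r hr u => by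
  simpa only [abs_of_pos hr] using ofReal_abs_pow_mul_chordPowerIntegral_smul μ _ E hr.ne' u

theorem measurable_chordPowerIntegral [MeasurableAdd₂ V] [MeasurableSMul₂ ℝ V] [SFinite μ] (p : ℕ)
    {E : Set V} (hE : MeasurableSet E) : Measurable (chordPowerIntegral μ p E) :=
  ((measurable_chordLength hE).pow_const p).lintegral_prod_right'

theorem chordPowerIntegral_congr_ae [MeasurableAdd₂ V] [MeasurableSMul ℝ V] [SFinite μ]
    [μ.IsAddRightInvariant] (p : ℕ) {E E' : Set V} (h : E =ᵐ[μ] E') (u : V) :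
    chordPowerIntegral μ p E u = chordPowerIntegral μ p E' u := by
  rw [chordPowerIntegral, chordPowerIntegral, setLIntegral_congr h]
  refine lintegral_congr_ae (ae_restrict_of_ae ?_)
  filter_upwards [chordLength_ae_eq_of_ae_eq μ h u] with x hx
  rw [hx]

theorem chordPowerIntegral_image_affine {V : Type*} [NormedAddCommGroup V] [NormedSpace ℝ V]
    [FiniteDimensional ℝ V] [MeasurableSpace V] [BorelSpace V] (μ : Measure V)
    [μ.IsAddHaarMeasure] (p : ℕ) {L : V →ₗ[ℝ] V} (hL : Function.Injective L) (v : V) {E : Set V}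
    (hE : MeasurableSet E) (u : V) :
    chordPowerIntegral μ p ((fun x => L x + v) '' E) (L u) =
      ENNReal.ofReal |LinearMap.det L| * chordPowerIntegral μ p E u := by
  simp only [chordPowerIntegral, setLIntegral_image_affine μ hL v hE,
    chordLength_image_affine hL v E]

end ChordPowerIntegral

section XRayNormPow

variable {V : Type*} [NormedAddCommGroup V] [NormedSpace ℝ V] [MeasurableSpace V] (μ : Measure V)

/-- The functional `Jn` on an arbitrary finite-dimensional normed space: the `(dim V + 1)`-st power
of the `L^(dim V + 1)` norm of the X-ray transform of the indicator of `E`. -/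
def xRayNormPow (E : Set V) : ℝ≥0∞ :=
  ∫⁻ ξ : Metric.sphere (0 : V) 1, chordPowerIntegral μ (Module.finrank ℝ V) E ξ ∂μ.toSphere

theorem Jn_eq_xRayNormPow (n : ℕ) (E : Set (EuclideanSpace ℝ (Fin n))) :
    Jn n E = xRayNormPow volume E := by
  simp only [Jn, xRayNormPow, chordPowerIntegral, chordLength, finrank_euclideanSpace_fin]

theorem xRayNormPow_eq_zero_of_null {E : Set V} (hE : μ E = 0) : xRayNormPow μ E = 0 := by
  simp only [xRayNormPow, chordPowerIntegral, setLIntegral_measure_zero _ _ hE, lintegral_zero]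

variable [FiniteDimensional ℝ V] [BorelSpace V] [μ.IsAddHaarMeasure]

theorem xRayNormPow_congr_ae {E E' : Set V} (h : E =ᵐ[μ] E') :
    xRayNormPow μ E = xRayNormPow μ E' :=
  lintegral_congr fun ξ => chordPowerIntegral_congr_ae μ _ h ξ

theorem xRayNormPow_image_affine_of_injective {L : V →ₗ[ℝ] V} (hL : Function.Injective L) (v : V)
    {E : Set V} (hE : MeasurableSet E) :
    xRayNormPow μ ((fun x => L x + v) '' E) =
      ENNReal.ofReal (LinearMap.det L ^ 2) * xRayNormPow μ E := by
  set d := Module.finrank ℝ V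
  set E₁ := (fun x => L x + v) '' E
  have hE₁ : MeasurableSet E₁ := measurable_image_of_fderivWithin hE
    (fun x _ => (L.toContinuousLinearMap.hasFDerivAt.add_const v).hasFDerivWithinAt)
    ((add_left_injective v).comp hL).injOn
  calc xRayNormPow μ E₁
      = ENNReal.ofReal |LinearMap.det L| *
          ∫⁻ ξ : Metric.sphere (0 : V) 1, chordPowerIntegral μ d E₁ (L ξ) ∂μ.toSphere :=
        (isNegDimHomogeneous_chordPowerIntegral μ E₁).lintegral_toSphere_comp_linearMap μ
          (measurable_chordPowerIntegral μ d hE₁) hL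
    _ = ENNReal.ofReal |LinearMap.det L| *
          (ENNReal.ofReal |LinearMap.det L| * xRayNormPow μ E) := by
        simp only [E₁, chordPowerIntegral_image_affine μ d hL v hE]
        rw [lintegral_const_mul' _ _ ENNReal.ofReal_ne_top, xRayNormPow]
    _ = ENNReal.ofReal (LinearMap.det L ^ 2) * xRayNormPow μ E := by
        rw [← mul_assoc, ← ENNReal.ofReal_mul (abs_nonneg _), abs_mul_abs_self, ← pow_two]

theorem xRayNormPow_image_affine (L : V →ₗ[ℝ] V) (v : V) {E : Set V}
    (hE : NullMeasurableSet E μ) :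
    xRayNormPow μ ((fun x => L x + v) '' E) =
      ENNReal.ofReal (LinearMap.det L ^ 2) * xRayNormPow μ E := by
  by_cases hL : Function.Injective L
  · obtain ⟨E₀, hE₀, hEE₀⟩ := hE
    rw [xRayNormPow_congr_ae μ hEE₀, xRayNormPow_congr_ae μ (image_affine_ae_eq μ hL v hEE₀),
      xRayNormPow_image_affine_of_injective μ hL v hE₀]
  · have hdet : LinearMap.det L = 0 :=
      LinearMap.det_eq_zero_iff_ker_ne_bot.2 (mt LinearMap.ker_eq_bot.1 hL)
    have hnull : μ ((fun x => L x + v) '' E) = 0 := by simp [addHaar_image_affine, hdet]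
    simp [xRayNormPow_eq_zero_of_null μ hnull, hdet]

theorem statement11_general {E : Set V} (hE : NullMeasurableSet E μ) :
    (∀ (L : V →ₗ[ℝ] V) (v : V), xRayNormPow μ ((fun x => L x + v) '' E) =
      ENNReal.ofReal (LinearMap.det L ^ 2) * xRayNormPow μ E) ∧
    ∀ E' : Set V, μ (symmDiff E E') = 0 → xRayNormPow μ E' = xRayNormPow μ E :=
  ⟨fun L v => xRayNormPow_image_affine μ L v hE,
    fun _ h => (xRayNormPow_congr_ae μ (measure_symmDiff_eq_zero_iff.1 h)).symm⟩

end XRayNormPow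

/-- invariance of `Jn` (hence of the convexity index) under invertible affine
transformations and under modification on a null set. -/
theorem statement11 (n : ℕ) (hn : 2 ≤ n) (E : Set (EuclideanSpace ℝ (Fin n)))
    (hE : MeasurableSet E) (hfin : volume E < ⊤) :
    (∀ L : EuclideanSpace ℝ (Fin n) →ₗ[ℝ] EuclideanSpace ℝ (Fin n),
      Function.Bijective L →
      ∀ v : EuclideanSpace ℝ (Fin n),
        Jn n ((fun x => L x + v) '' E) =
          ENNReal.ofReal ((LinearMap.det L) ^ 2) * Jn n E) ∧
    (∀ E' : Set (EuclideanSpace ℝ (Fin n)), MeasurableSet E' →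
      volume (symmDiff E E') = 0 → Jn n E' = Jn n E) := by
  simp only [Jn_eq_xRayNormPow]
  obtain ⟨haffine, hnull⟩ := statement11_general volume hE.nullMeasurableSet
  exact ⟨fun L _ => haffine L, fun E' _ => hnull E'⟩
end
end

section
/- Let n ≥ 2 be an integer and let E ⊆ ℝⁿ be Lebesgue measurable with λ(E) < ∞. Then J_n(E) ≤ n(n+1) · λ(E)². -/
open MeasureTheory
open scoped ENNReal

noncomputable section

/-!
For a direction `ξ`, cut `E` by the lines parallel to `ξ`. If a line meets `E` in `F`, the integral
of the chord length to the power `n` over the part of `E` on that line is `|F| ^ (n + 1)`.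
Among all subsets of `ℝ` of measure `m` the interval minimises `∬ |s - t| ^ (n - 1)`, because the
distribution function of `F` carries Lebesgue measure on `F` to Lebesgue measure on `[0, m]` without
increasing distances. Hence `2 |F| ^ (n + 1) ≤ n (n + 1) ∬_{F × F} |s - t| ^ (n - 1)`.
Integrating over all lines parallel to `ξ` and then over `ξ`, the factor `|t| ^ (n - 1)` is the
Jacobian of polar coordinates around a point of `E`, so the right-hand side becomes
`n (n + 1) * 2 λ(E) ^ 2`.
-/

open Module (finrank finrank_pos)
open ProbabilityTheory Set Filter Topology
open scoped NNReal

theorem exists_preimage_Iic_eq_Iic {α β : Type*} [ConditionallyCompleteLinearOrder α]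
    [TopologicalSpace α] [OrderTopology α] [DenselyOrdered α] [LinearOrder β] [TopologicalSpace β]
    [OrderClosedTopology β] {f : α → β} (hmono : Monotone f) (hcont : Continuous f) {a : β}
    {b d : α} (hb : f b ≤ a) (hd : a < f d) : ∃ c, f c = a ∧ f ⁻¹' Iic a = Iic c := by
  have hne : (f ⁻¹' {a}).Nonempty :=
    let ⟨x, _, hx⟩ := intermediate_value_Icc (hmono.reflect_lt (hb.trans_lt hd)).le
      hcont.continuousOn ⟨hb, hd.le⟩
    ⟨x, hx⟩
  have hbdd : BddAbove (f ⁻¹' {a}) :=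
    ⟨d, fun s hs ↦ (hmono.reflect_lt ((mem_singleton_iff.1 hs).trans_lt hd)).le⟩
  set c := sSup (f ⁻¹' {a})
  have hc : f c = a := (isClosed_singleton.preimage hcont).csSup_mem hne hbdd
  refine ⟨c, hc, Subset.antisymm (fun s hs ↦ ?_) fun s hs ↦ (hmono hs).trans hc.le⟩
  refine le_of_not_gt fun hcs : c < s ↦ ?_
  exact hcs.not_ge (le_csSup hbdd (le_antisymm hs (hc.ge.trans (hmono hcs.le))))

theorem map_cdf_eq_restrict_Icc {ν : Measure ℝ} [IsProbabilityMeasure ν]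
    (hcont : Continuous (cdf ν)) : ν.map (cdf ν) = volume.restrict (Icc 0 1) := by
  refine Measure.ext_of_Iic _ _ fun a ↦ ?_
  rw [Measure.map_apply hcont.measurable measurableSet_Iic,
    Measure.restrict_apply measurableSet_Iic]
  rcases le_or_gt 1 a with ha | ha
  · have hpre : cdf ν ⁻¹' Iic a = univ := eq_univ_of_forall fun s ↦ (cdf_le_one ν s).trans ha
    have hIcc : Iic a ∩ Icc 0 1 = Icc 0 1 := inter_eq_right.2 fun x hx ↦ hx.2.trans ha
    simp [hpre, hIcc]
  rcases (cdf ν ⁻¹' Iic a).eq_empty_or_nonempty with hempty | ⟨b, hb⟩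
  · have ha₀ : a ≤ 0 := ge_of_tendsto' (tendsto_cdf_atBot ν) fun s ↦
      (not_le.1 fun h ↦ hempty.subset h).le
    have hIcc : Iic a ∩ Icc 0 1 ⊆ {0} := fun x hx ↦ le_antisymm (hx.1.trans ha₀) hx.2.1
    rw [hempty, measure_empty, measure_mono_null hIcc (measure_singleton _)]
  · obtain ⟨d, hd⟩ := ((tendsto_cdf_atTop ν).eventually (lt_mem_nhds ha)).exists
    obtain ⟨c, rfl, hpre⟩ := exists_preimage_Iic_eq_Iic (monotone_cdf ν) hcont hb hd
    have hIcc : Iic (cdf ν c) ∩ Icc 0 1 = Icc 0 (cdf ν c) :=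
      ext fun x ↦ ⟨fun hx ↦ ⟨hx.2.1, hx.1⟩, fun hx ↦ ⟨hx.2, hx.1, hx.2.trans ha.le⟩⟩
    rw [hpre, hIcc, Real.volume_Icc, sub_zero, ofReal_cdf]

theorem lipschitzWith_cdf {ν : Measure ℝ} [IsProbabilityMeasure ν] {K : ℝ≥0}
    (hν : ν ≤ K • volume) : LipschitzWith K (cdf ν) := by
  refine LipschitzWith.of_le_add_mul K fun s t ↦ ?_
  rcases le_total s t with hst | hts
  · exact (monotone_cdf ν hst).trans (le_add_of_nonneg_right (by positivity))
  · have hIoc : ENNReal.ofReal (cdf ν s - cdf ν t) ≤ ENNReal.ofReal (K * (s - t)) :=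
      calc ENNReal.ofReal (cdf ν s - cdf ν t)
        _ = ν (Ioc t s) := by rw [← (cdf ν).measure_Ioc, measure_cdf]
        _ ≤ K • volume (Ioc t s) := hν _
        _ = ENNReal.ofReal (K * (s - t)) := by
          rw [Real.volume_Ioc, ENNReal.ofReal_mul K.coe_nonneg, ENNReal.ofReal_coe_nnreal]; rfl
    rw [ENNReal.ofReal_le_ofReal_iff (mul_nonneg K.coe_nonneg (sub_nonneg.2 hts))] at hIoc
    rw [Real.dist_eq, abs_of_nonneg (sub_nonneg.2 hts)]
    linarith

theorem setLIntegral_Icc_comp_edist_le {ν : Measure ℝ} [IsProbabilityMeasure ν] {K : ℝ≥0}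
    (hν : ν ≤ K • volume) {g : ℝ≥0∞ → ℝ≥0∞} (hg : Monotone g) :
    ∫⁻ u in Icc (0 : ℝ) 1, ∫⁻ v in Icc (0 : ℝ) 1, g (edist u v) ≤
      ∫⁻ s, ∫⁻ t, g (K * edist s t) ∂ν ∂ν := by
  have hlip := lipschitzWith_cdf hν
  have hcdf : Measurable (cdf ν) := hlip.continuous.measurable
  have hgm : Measurable g := hg.measurable
  rw [← map_cdf_eq_restrict_Icc hlip.continuous,
    lintegral_map (Measurable.lintegral_prod_right' (f := fun p : ℝ × ℝ ↦ g (edist p.1 p.2))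
      (by fun_prop)) hcdf]
  refine lintegral_mono fun s ↦ ?_
  rw [lintegral_map (by fun_prop) hcdf]
  exact lintegral_mono fun t ↦ hg (hlip s t)

theorem setLIntegral_uIoc_edist_pow (k : ℕ) (a b : ℝ) :
    ∫⁻ t in uIoc a b, edist t a ^ k = edist b a ^ (k + 1) / (k + 1) := by
  simp_rw [edist_dist, ← ENNReal.ofReal_pow dist_nonneg, Real.dist_eq]
  rw [← ofReal_integral_eq_lintegral_ofReal, integral_pow_abs_sub_uIoc,
    ENNReal.ofReal_div_of_pos (by positivity), ENNReal.ofReal_add (by positivity) zero_le_one]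
  · simp
  · exact (Continuous.intervalIntegrable (by fun_prop) a b).def'
  · exact .of_forall fun t ↦ by positivity

theorem setLIntegral_Icc_edist_pow (k : ℕ) {a b c : ℝ} (hc : c ∈ Icc a b) :
    ∫⁻ t in Icc a b, edist t c ^ k = (edist a c ^ (k + 1) + edist b c ^ (k + 1)) / (k + 1) := by
  rw [ENNReal.add_div, ← setLIntegral_uIoc_edist_pow, ← setLIntegral_uIoc_edist_pow,
    uIoc_of_ge hc.1, uIoc_of_le hc.2, ← lintegral_union measurableSet_Ioc
      (Ioc_disjoint_Ioc_of_le le_rfl), Ioc_union_Ioc_eq_Ioc hc.1 hc.2,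
    setLIntegral_congr Ioc_ae_eq_Icc]

theorem setLIntegral_Icc_setLIntegral_Icc_edist_pow (k : ℕ) :
    ∫⁻ u in Icc (0 : ℝ) 1, ∫⁻ v in Icc (0 : ℝ) 1, edist u v ^ k =
      2 / (((k : ℝ≥0∞) + 1) * (k + 2)) := by
  have hinner {u : ℝ} (hu : u ∈ Icc (0 : ℝ) 1) : ∫⁻ v in Icc (0 : ℝ) 1, edist u v ^ k =
      (edist u 0 ^ (k + 1) + edist u 1 ^ (k + 1)) / (k + 1) := by
    simpa only [edist_comm] using setLIntegral_Icc_edist_pow k hu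
  have houter {c : ℝ} (hc : c = 0 ∨ c = 1) :
      ∫⁻ u in Icc (0 : ℝ) 1, edist u c ^ (k + 1) = ((k : ℝ≥0∞) + 2)⁻¹ := by
    rw [setLIntegral_Icc_edist_pow (k + 1) (by rcases hc with rfl | rfl <;> simp)]
    rcases hc with rfl | rfl <;> simp [edist_dist, add_assoc, one_add_one_eq_two]
  rw [setLIntegral_congr_fun measurableSet_Icc fun u hu ↦ hinner hu]
  simp_rw [div_eq_mul_inv]
  rw [lintegral_mul_const _ (by fun_prop), lintegral_add_left (by fun_prop), houter (.inl rfl),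
    houter (.inr rfl), ← two_mul, ENNReal.mul_inv (by simp) (by simp)]
  ring

theorem two_mul_volume_pow_le_setLIntegral_edist_pow_of_ne_top (k : ℕ) {F : Set ℝ}
    (hF : volume F ≠ ∞) :
    2 * volume F ^ (k + 2) ≤
      ((k : ℝ≥0∞) + 1) * (k + 2) * ∫⁻ s in F, ∫⁻ t in F, edist s t ^ k := by
  rcases eq_or_ne (volume F) 0 with hF₀ | hF₀
  · simp [hF₀]
  have := cond_isProbabilityMeasure_of_finite hF₀ hF
  obtain ⟨K, hK⟩ : ∃ K : ℝ≥0, K = (volume F)⁻¹ :=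
    ENNReal.canLift.prf _ (ENNReal.inv_ne_top.2 hF₀)
  have hcond : volume[|F] = (K : ℝ≥0∞) • volume.restrict F := by rw [hK, ProbabilityTheory.cond]
  have hle : volume[|F] ≤ K • volume := fun A ↦ by
    rw [hcond]
    exact mul_le_mul_right (Measure.restrict_apply_le F A) _
  calc 2 * volume F ^ (k + 2)
    _ = ((k : ℝ≥0∞) + 1) * (k + 2) * volume F ^ (k + 2) * (2 / ((k + 1) * (k + 2))) := by
      rw [mul_right_comm, ENNReal.mul_div_cancel (by simp) (by finiteness)]
    _ ≤ (k + 1) * (k + 2) * volume F ^ (k + 2) *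
        ∫⁻ s, ∫⁻ t, (K * edist s t) ^ k ∂volume[|F] ∂volume[|F] := by
      rw [← setLIntegral_Icc_setLIntegral_Icc_edist_pow]
      refine mul_le_mul_right ?_ _
      exact setLIntegral_Icc_comp_edist_le hle (g := (· ^ k)) fun _ _ h ↦ pow_le_pow_left' h k
    _ = (k + 1) * (k + 2) * (volume F * K) ^ (k + 2) * ∫⁻ s in F, ∫⁻ t in F, edist s t ^ k := by
      simp_rw [hcond, lintegral_smul_measure, mul_pow, smul_eq_mul]
      rw [lintegral_const_mul' _ _ (by finiteness)]
      simp_rw [lintegral_const_mul' _ _ (show (K : ℝ≥0∞) ^ k ≠ ∞ by finiteness)]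
      ring
    _ = (k + 1) * (k + 2) * ∫⁻ s in F, ∫⁻ t in F, edist s t ^ k := by
      rw [hK, ENNReal.mul_inv_cancel hF₀ hF, one_pow, mul_one]

theorem two_mul_volume_pow_le_setLIntegral_edist_pow (k : ℕ) (F : Set ℝ) :
    2 * volume F ^ (k + 2) ≤
      ((k : ℝ≥0∞) + 1) * (k + 2) * ∫⁻ s in F, ∫⁻ t in F, edist s t ^ k := by
  rw [← Measure.iSup_restrict_spanningSets (μ := volume) F, ENNReal.iSup_pow, ENNReal.mul_iSup]
  refine iSup_le fun N ↦ ?_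
  rw [Measure.restrict_apply' (measurableSet_spanningSets volume N)]
  calc
    _ ≤ _ := two_mul_volume_pow_le_setLIntegral_edist_pow_of_ne_top k
      (measure_ne_top_of_subset inter_subset_right (measure_spanningSets_lt_top volume N).ne)
    _ ≤ _ := by gcongr <;> exact inter_subset_left

section Chord

variable {V : Type*} [AddCommGroup V] [Module ℝ V]

/-- The chord of `E` through `x` in direction `ξ`, as the set of the parameters `t` of its points
`x + t • ξ`; for `ξ = 0` it is `ℝ` or empty. -/
def chord (E : Set V) (x ξ : V) : Set ℝ := {t | x + t • ξ ∈ E}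

theorem chord_mono {E E' : Set V} (h : E ⊆ E') (x ξ : V) : chord E x ξ ⊆ chord E' x ξ :=
  fun _ ht ↦ h ht

theorem chord_add_smul (E : Set V) (x ξ : V) (s : ℝ) :
    chord E (x + s • ξ) ξ = (s + ·) ⁻¹' chord E x ξ := by
  ext t
  simp only [chord, mem_ofPred_eq, mem_preimage, add_smul, add_assoc]

theorem volume_chord_add_smul (E : Set V) (x ξ : V) (s : ℝ) :
    volume (chord E (x + s • ξ) ξ) = volume (chord E x ξ) := by
  rw [chord_add_smul, measure_preimage_add]

theorem setLIntegral_chord_add_smul_enorm_pow (E : Set V) (x ξ : V) (s : ℝ) (k : ℕ) :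
    ∫⁻ t in chord E (x + s • ξ) ξ, ‖t‖ₑ ^ k = ∫⁻ t in chord E x ξ, edist s t ^ k := by
  have := (measurePreserving_add_left volume s).setLIntegral_comp_preimage_emb
    (measurableEmbedding_addLeft s) (fun t ↦ edist s t ^ k) (chord E x ξ)
  simpa [chord_add_smul, edist_eq_enorm_sub] using this

end Chord

section Slicing

variable {V : Type*} [NormedAddCommGroup V] [NormedSpace ℝ V] [MeasurableSpace V] [BorelSpace V]

theorem measurableSet_chord {E : Set V} (hE : MeasurableSet E) (x ξ : V) :
    MeasurableSet (chord E x ξ) :=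
  (show Measurable fun t : ℝ ↦ x + t • ξ by fun_prop) hE

theorem measurable_setLIntegral_chord [SecondCountableTopology V] {E : Set V}
    (hE : MeasurableSet E) (g : ℝ → ℝ≥0∞) :
    Measurable fun p : V × V ↦ ∫⁻ t in chord E p.1 p.2, g t := by
  have hchord : MeasurableSet {q : (V × V) × ℝ | q.2 ∈ chord E q.1.1 q.1.2} :=
    (show Measurable fun q : (V × V) × ℝ ↦ q.1.1 + q.2 • q.1.2 by fun_prop) hE
  simp_rw [← withDensity_apply g (measurableSet_chord hE _ _)]
  exact measurable_measure_prodMk_left hchord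

-- The slab meets each line parallel to `ξ` in a segment of parameter length one, so integrating
-- the line integrals over the slab counts every line exactly once.
theorem setLIntegral_slab_lintegral_add_smul [SecondCountableTopology V] (μ : Measure V)
    [SFinite μ] [μ.IsAddRightInvariant] {ξ : V} (ℓ : V →L[ℝ] ℝ) (hℓ : ℓ ξ = 1) {g : V → ℝ≥0∞}
    (hg : Measurable g) :
    ∫⁻ x in ℓ ⁻¹' Icc 0 1, (∫⁻ s : ℝ, g (x + s • ξ)) ∂μ = ∫⁻ x, g x ∂μ := by
  set W : Set V := ℓ ⁻¹' Icc 0 1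
  have hW : MeasurableSet W := ℓ.measurable measurableSet_Icc
  have : Measurable (W.indicator (1 : V → ℝ≥0∞)) := measurable_one.indicator hW
  have hsection (x : V) : ∫⁻ s : ℝ, W.indicator 1 (x - s • ξ) = 1 := by
    have hpre : (fun s : ℝ ↦ x - s • ξ) ⁻¹' W = Icc (ℓ x - 1) (ℓ x) := by
      ext s
      simp only [W, mem_preimage, map_sub, map_smul, hℓ, mem_Icc, smul_eq_mul, mul_one]
      constructor <;> rintro ⟨h, h'⟩ <;> constructor <;> linarith
    calc
      _ = ∫⁻ s, ((fun s : ℝ ↦ x - s • ξ) ⁻¹' W).indicator 1 s := rfl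
      _ = 1 := by rw [hpre, lintegral_indicator_one measurableSet_Icc]; simp
  calc
    _ = ∫⁻ x, (∫⁻ s : ℝ, W.indicator 1 x * g (x + s • ξ)) ∂μ := by
      rw [← lintegral_indicator hW]
      refine lintegral_congr fun x ↦ ?_
      rw [lintegral_const_mul _ (by fun_prop)]
      by_cases hx : x ∈ W <;> simp [hx]
    _ = ∫⁻ s : ℝ, (∫⁻ x, W.indicator 1 x * g (x + s • ξ) ∂μ) :=
      lintegral_lintegral_swap (by unfold Function.uncurry; fun_prop)
    _ = ∫⁻ s : ℝ, (∫⁻ x, W.indicator 1 (x - s • ξ) * g x ∂μ) := by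
      refine lintegral_congr fun s ↦ ?_
      simpa using lintegral_add_right_eq_self (μ := μ)
        (fun x ↦ W.indicator 1 (x - s • ξ) * g x) (s • ξ)
    _ = ∫⁻ x, (∫⁻ s : ℝ, W.indicator 1 (x - s • ξ) * g x) ∂μ :=
      lintegral_lintegral_swap (by unfold Function.uncurry; fun_prop)
    _ = ∫⁻ x, g x ∂μ := by
      refine lintegral_congr fun x ↦ ?_
      rw [lintegral_mul_const _ (by fun_prop), hsection, one_mul]

theorem lintegral_le_of_forall_lintegral_add_smul_le [SecondCountableTopology V] {μ : Measure V}
    [SFinite μ] [μ.IsAddRightInvariant] {ξ : V} (hξ : ξ ≠ 0) {g h : V → ℝ≥0∞}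
    (hg : Measurable g) (hh : Measurable h)
    (hgh : ∀ x, ∫⁻ s : ℝ, g (x + s • ξ) ≤ ∫⁻ s : ℝ, h (x + s • ξ)) :
    ∫⁻ x, g x ∂μ ≤ ∫⁻ x, h x ∂μ := by
  obtain ⟨ℓ, hℓ⟩ := SeparatingDual.exists_eq_one (R := ℝ) hξ
  rw [← setLIntegral_slab_lintegral_add_smul μ ℓ hℓ hg,
    ← setLIntegral_slab_lintegral_add_smul μ ℓ hℓ hh]
  exact lintegral_mono hgh

theorem lintegral_indicator_add_smul {E : Set V} (hE : MeasurableSet E) (h : V → ℝ≥0∞)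
    (x ξ : V) :
    ∫⁻ s : ℝ, E.indicator h (x + s • ξ) = ∫⁻ s in chord E x ξ, h (x + s • ξ) := by
  rw [← lintegral_indicator (measurableSet_chord hE x ξ)]
  rfl

theorem two_mul_setLIntegral_volume_chord_pow_le [SecondCountableTopology V] (μ : Measure V)
    [SFinite μ] [μ.IsAddRightInvariant] (k : ℕ) {E : Set V} (hE : MeasurableSet E) {ξ : V}
    (hξ : ξ ≠ 0) :
    2 * ∫⁻ x in E, volume (chord E x ξ) ^ (k + 1) ∂μ ≤
      ((k : ℝ≥0∞) + 1) * (k + 2) * ∫⁻ x in E, (∫⁻ t in chord E x ξ, ‖t‖ₑ ^ k) ∂μ := by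
  have hvol : Measurable fun x ↦ volume (chord E x ξ) := by
    simpa only [setLIntegral_one, Function.comp_def] using
      (measurable_setLIntegral_chord hE fun _ ↦ 1).comp (measurable_prodMk_right (y := ξ))
  have hpow : Measurable fun x ↦ ∫⁻ t in chord E x ξ, ‖t‖ₑ ^ k :=
    (measurable_setLIntegral_chord hE (‖·‖ₑ ^ k)).comp (measurable_prodMk_right (y := ξ))
  rw [← lintegral_const_mul _ (by fun_prop), ← lintegral_const_mul _ hpow,
    ← lintegral_indicator hE, ← lintegral_indicator hE]
  refine lintegral_le_of_forall_lintegral_add_smul_le hξ (by fun_prop) (by fun_prop) fun x ↦ ?_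
  simp_rw [lintegral_indicator_add_smul hE, volume_chord_add_smul,
    setLIntegral_chord_add_smul_enorm_pow]
  rw [setLIntegral_const, lintegral_const_mul' _ _ (by finiteness), mul_assoc, ← pow_succ]
  exact two_mul_volume_pow_le_setLIntegral_edist_pow k (chord E x ξ)

end Slicing

theorem lintegral_eq_setLIntegral_Ioi_add_setLIntegral_Ioi_neg (f : ℝ → ℝ≥0∞) :
    ∫⁻ t, f t = (∫⁻ t in Ioi 0, f t) + ∫⁻ t in Ioi 0, f (-t) := by
  have hneg : ∫⁻ t in Ioi 0, f (-t) = ∫⁻ t in Iio 0, f t := by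
    simpa using (Measure.measurePreserving_neg volume).setLIntegral_comp_preimage_emb
      (MeasurableEquiv.neg ℝ).measurableEmbedding f (Iio 0)
  rw [hneg, setLIntegral_congr Iio_ae_eq_Iic, ← compl_Ioi, lintegral_add_compl f measurableSet_Ioi]

section Polar

variable {V : Type*} [NormedAddCommGroup V] [NormedSpace ℝ V] [FiniteDimensional ℝ V]
  [Nontrivial V] [MeasurableSpace V] [BorelSpace V] (μ : Measure V) [μ.IsAddHaarMeasure]

theorem lintegral_toSphere_setLIntegral_Ioi_smul {f : V → ℝ≥0∞} (hf : Measurable f) :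
    ∫⁻ ξ : Metric.sphere (0 : V) 1,
      (∫⁻ r in Ioi (0 : ℝ), ‖r‖ₑ ^ (finrank ℝ V - 1) * f (r • (ξ : V))) ∂μ.toSphere =
    ∫⁻ x, f x ∂μ := by
  set k := finrank ℝ V - 1 with hk
  have hpolar : Measurable fun p : Metric.sphere (0 : V) 1 × Ioi (0 : ℝ) ↦
      f ((p.2 : ℝ) • (p.1 : V)) := by fun_prop
  calc
    _ = ∫⁻ ξ : Metric.sphere (0 : V) 1,
        (∫⁻ r : Ioi (0 : ℝ), f ((r : ℝ) • (ξ : V)) ∂Measure.volumeIoiPow k) ∂μ.toSphere := by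
      refine lintegral_congr fun ξ ↦ ?_
      rw [Measure.volumeIoiPow, lintegral_withDensity_eq_lintegral_mul _ (by fun_prop)
        (by fun_prop), ← lintegral_subtype_comap measurableSet_Ioi]
      refine lintegral_congr fun r ↦ ?_
      rw [Pi.mul_apply, Real.enorm_of_nonneg (le_of_lt r.2), ENNReal.ofReal_pow (le_of_lt r.2)]
    _ = ∫⁻ p : Metric.sphere (0 : V) 1 × Ioi (0 : ℝ), f ((p.2 : ℝ) • (p.1 : V))
        ∂(μ.toSphere.prod (Measure.volumeIoiPow k)) := (lintegral_prod _ hpolar.aemeasurable).symm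
    _ = ∫⁻ x : ({0}ᶜ : Set V), f x ∂(μ.comap (↑)) := by
      rw [hk, ← μ.measurePreserving_homeomorphUnitSphereProd.lintegral_comp hpolar]
      refine lintegral_congr fun x ↦ congrArg f ?_
      exact congrArg Subtype.val ((homeomorphUnitSphereProd V).symm_apply_apply x)
    _ = ∫⁻ x, f x ∂μ := by
      rw [lintegral_subtype_comap (measurableSet_singleton _).compl, restrict_compl_singleton]

theorem lintegral_toSphere_lintegral_smul {f : V → ℝ≥0∞} (hf : Measurable f) :
    ∫⁻ ξ : Metric.sphere (0 : V) 1,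
      (∫⁻ t : ℝ, ‖t‖ₑ ^ (finrank ℝ V - 1) * f (t • (ξ : V))) ∂μ.toSphere =
    2 * ∫⁻ x, f x ∂μ := by
  simp_rw [lintegral_eq_setLIntegral_Ioi_add_setLIntegral_Ioi_neg fun t ↦ _ * f (t • _)]
  rw [lintegral_add_left
    (Measurable.lintegral_prod_right' (f := fun p : Metric.sphere (0 : V) 1 × ℝ ↦
      ‖p.2‖ₑ ^ (finrank ℝ V - 1) * f (p.2 • (p.1 : V))) (by fun_prop)),
    lintegral_toSphere_setLIntegral_Ioi_smul μ hf]
  simp_rw [enorm_neg, neg_smul]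
  rw [lintegral_toSphere_setLIntegral_Ioi_smul μ (f := fun x ↦ f (-x)) (by fun_prop),
    lintegral_neg_eq_self, two_mul]

theorem lintegral_toSphere_setLIntegral_chord {E : Set V} (hE : MeasurableSet E) (x : V) :
    ∫⁻ ξ : Metric.sphere (0 : V) 1,
      (∫⁻ t in chord E x ξ, ‖t‖ₑ ^ (finrank ℝ V - 1)) ∂μ.toSphere = 2 * μ E := by
  have hline (ξ : V) : ∫⁻ t in chord E x ξ, ‖t‖ₑ ^ (finrank ℝ V - 1) =
      ∫⁻ t : ℝ, ‖t‖ₑ ^ (finrank ℝ V - 1) * E.indicator 1 (x + t • ξ) := by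
    rw [← lintegral_indicator (measurableSet_chord hE x ξ)]
    refine lintegral_congr fun t ↦ ?_
    by_cases ht : x + t • ξ ∈ E <;> simp [chord, ht]
  have : Measurable (E.indicator (1 : V → ℝ≥0∞)) := measurable_one.indicator hE
  simp_rw [hline]
  rw [lintegral_toSphere_lintegral_smul μ (f := fun y ↦ E.indicator 1 (x + y)) (by fun_prop),
    lintegral_add_left_eq_self (E.indicator 1) x, lintegral_indicator_one hE]

theorem lintegral_toSphere_setLIntegral_setLIntegral_chord {E : Set V} (hE : MeasurableSet E) :
    ∫⁻ ξ : Metric.sphere (0 : V) 1, (∫⁻ x in E, (∫⁻ t in chord E x ξ,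
      ‖t‖ₑ ^ (finrank ℝ V - 1)) ∂μ) ∂μ.toSphere = 2 * μ E ^ 2 := by
  have hflip : Measurable fun p : Metric.sphere (0 : V) 1 × V ↦ (p.2, (p.1 : V)) := by fun_prop
  have hpow : Measurable fun p : Metric.sphere (0 : V) 1 × V ↦
      ∫⁻ t in chord E p.2 p.1, ‖t‖ₑ ^ (finrank ℝ V - 1) :=
    (measurable_setLIntegral_chord hE (‖·‖ₑ ^ (finrank ℝ V - 1))).comp hflip
  rw [lintegral_lintegral_swap hpow.aemeasurable]
  simp_rw [lintegral_toSphere_setLIntegral_chord μ hE]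
  rw [setLIntegral_const]
  ring

theorem statement12_general (E : Set V) :
    ∫⁻ ξ : Metric.sphere (0 : V) 1, (∫⁻ x in E, volume (chord E x ξ) ^ finrank ℝ V ∂μ)
      ∂μ.toSphere ≤ (finrank ℝ V : ℝ≥0∞) * ((finrank ℝ V : ℝ≥0∞) + 1) * μ E ^ 2 := by
  wlog hE : MeasurableSet E generalizing E
  · rw [← measure_toMeasurable E]
    grw [← this _ (measurableSet_toMeasurable μ E)]
    have hsub : E ⊆ toMeasurable μ E := subset_toMeasurable μ E
    exact lintegral_mono fun ξ ↦ lintegral_mono' (Measure.restrict_mono hsub le_rfl)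
      fun x ↦ pow_le_pow_left' (measure_mono (chord_mono hsub x ξ)) _
  have hpolar := lintegral_toSphere_setLIntegral_setLIntegral_chord μ hE
  obtain ⟨k, hk⟩ : ∃ k, finrank ℝ V = k + 1 := Nat.exists_eq_add_one.2 finrank_pos
  rw [hk, Nat.add_sub_cancel] at hpolar
  rw [hk, ← ENNReal.mul_le_mul_iff_right two_ne_zero ENNReal.ofNat_ne_top]
  calc
    _ = ∫⁻ ξ : Metric.sphere (0 : V) 1,
        2 * (∫⁻ x in E, volume (chord E x ξ) ^ (k + 1) ∂μ) ∂μ.toSphere :=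
      (lintegral_const_mul' _ _ ENNReal.ofNat_ne_top).symm
    _ ≤ ∫⁻ ξ : Metric.sphere (0 : V) 1, ((k : ℝ≥0∞) + 1) * (k + 2) *
        (∫⁻ x in E, (∫⁻ t in chord E x ξ, ‖t‖ₑ ^ k) ∂μ) ∂μ.toSphere :=
      lintegral_mono fun ξ ↦ two_mul_setLIntegral_volume_chord_pow_le μ k hE
        (ne_zero_of_mem_unit_sphere ξ)
    _ = ((k : ℝ≥0∞) + 1) * (k + 2) * (2 * μ E ^ 2) := by
      rw [lintegral_const_mul' _ _ (by finiteness), hpolar]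
    _ = 2 * (((k + 1 : ℕ) : ℝ≥0∞) * (((k + 1 : ℕ) : ℝ≥0∞) + 1) * μ E ^ 2) := by
      push_cast
      ring

end Polar

/-- the convexity index is at most 1, i.e. `Jn E ≤ n(n+1)·λ(E)²`. -/
theorem statement12 (n : ℕ) (hn : 2 ≤ n) (E : Set (EuclideanSpace ℝ (Fin n)))
    (hE : MeasurableSet E) (hfin : volume E < ⊤) :
    Jn n E ≤ (n : ℝ≥0∞) * ((n : ℝ≥0∞) + 1) * (volume E) ^ 2 := by
  have : NeZero n := ⟨by lia⟩
  simpa only [Jn, chord, finrank_euclideanSpace_fin] using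
    statement12_general (volume : Measure (EuclideanSpace ℝ (Fin n))) E
end
end

section
/- Let n ≥ 2 be an integer and let E ⊆ ℝⁿ be Lebesgue measurable with 0 < λ(E) < ∞. Then J_n(E) = n(n+1) · λ(E)² if and only if there exists a convex set K ⊆ ℝⁿ such that λ(E △ K) = 0, i.e. E coincides with a convex set up to a set of Lebesgue measure zero. -/
open MeasureTheory
open scoped ENNReal

noncomputable section

/-!
By Fubini, integrals over `V` may be computed line by line, and on a line `A ⊆ ℝ` of finite measure
satisfies `(n + 1) ∫_{t ∈ A} |A ∩ (t, ∞)|ⁿ dt = |A|ⁿ⁺¹`: this is the expectation of the `n`-th power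
of the rank of a uniform random point. So passing from full chords to the half-chords starting at
the base point costs a factor `n + 1`. Applying the same identity on each half-chord and returning
from polar to Cartesian coordinates gives, in dimension `n`,
`J_n(E) = n (n + 1) ∫_E ∫_E θ(x, y)ⁿ⁻¹ dx dy`,
where `θ(x, y) ≤ 1` is the fraction of the segment `[x, y]` that lies in `E`. Equality therefore
means that almost every segment with endpoints in `E` lies almost entirely in `E`, and this property
passes to genuine convexity of the set of Lebesgue density points of `E`.
-/

open Set Filter Topology Module

section OrderStatistics

variable {α : Type*} [MeasurableSpace α]

theorem lintegral_setLIntegral_setOf_rel {β : Type*} [MeasurableSpace β] {μ : Measure α}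
    {ν : Measure β} [SFinite μ] [SFinite ν] {r : α → β → Prop}
    (hr : MeasurableSet {p : α × β | r p.1 p.2}) {f : β → ℝ≥0∞} (hf : Measurable f) :
    ∫⁻ a, ∫⁻ b in {b | r a b}, f b ∂ν ∂μ = ∫⁻ b, f b * μ {a | r a b} ∂ν := by
  have hmeas : Measurable ({p : α × β | r p.1 p.2}.indicator fun p ↦ f p.2) :=
    (hf.comp measurable_snd).indicator hr
  calc ∫⁻ a, ∫⁻ b in {b | r a b}, f b ∂ν ∂μ
      = ∫⁻ a, ∫⁻ b, {p : α × β | r p.1 p.2}.indicator (fun p ↦ f p.2) (a, b) ∂ν ∂μ :=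
        lintegral_congr fun a ↦ (lintegral_indicator (measurable_prodMk_left hr) f).symm
    _ = ∫⁻ b, ∫⁻ a, {p : α × β | r p.1 p.2}.indicator (fun p ↦ f p.2) (a, b) ∂μ ∂ν :=
        lintegral_lintegral_swap hmeas.aemeasurable
    _ = ∫⁻ b, f b * μ {a | r a b} ∂ν :=
        lintegral_congr fun b ↦ lintegral_indicator_const (measurable_prodMk_right hr) (f b)

theorem measure_setOf_rel_left_add_right {μ : Measure α} [NullSingletonClass μ] (r : α → α → Prop)
    [IsStrictTotalOrder α r] {a : α} (ha : MeasurableSet {b | r b a}) :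
    μ {b | r a b} + μ {b | r b a} = μ univ := by
  have hdisj : Disjoint {b | r a b} {b | r b a} :=
    Set.disjoint_left.2 fun _ hab hba ↦ asymm_of r hab hba
  rw [← measure_union hdisj ha]
  refine measure_congr (eventuallyEq_univ.2 ?_)
  have hne : ∀ᵐ b ∂μ, b ≠ a := by simp [ae_iff]
  filter_upwards [hne] with b hba
  rcases trichotomous_of r a b with h | h | h
  exacts [.inl h, absurd h.symm hba, .inr h]

theorem lintegral_measure_setOf_rel_pow (r : α → α → Prop) [IsStrictTotalOrder α r]
    (hr : MeasurableSet {p : α × α | r p.1 p.2}) (n : ℕ) (μ : Measure α)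
    [SFinite μ] [NullSingletonClass μ] :
    ((n : ℝ≥0∞) + 1) * ∫⁻ s, μ {t | r t s} ^ n ∂μ = μ univ ^ (n + 1) := by
  have hdown (s : α) : MeasurableSet {t | r t s} := measurable_prodMk_right hr
  induction n generalizing μ with
  | zero => simp
  | succ n ih =>
    set F : α → ℝ≥0∞ := fun s ↦ μ {t | r t s}
    set G : α → ℝ≥0∞ := fun t ↦ μ {s | r t s}
    have hF : Measurable F := measurable_measure_prodMk_right hr
    have hG : Measurable G := measurable_measure_prodMk_left hr
    have ih_segment (s : α) : ((n : ℝ≥0∞) + 1) * ∫⁻ t in {t | r t s}, F t ^ n ∂μ =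
        F s ^ (n + 1) := by
      have h := ih (μ.restrict {t | r t s})
      rw [Measure.restrict_apply_univ] at h
      rw [← h]
      congr 1
      refine setLIntegral_congr_fun (hdown s) fun t (hts : r t s) ↦ ?_
      have hsub : {u | r u t} ⊆ {u | r u s} := fun u hut ↦ _root_.trans hut hts
      simp only [F, Measure.restrict_apply (hdown t), inter_eq_left.2 hsub]
    have hswap : ∫⁻ s, F s ^ (n + 1) ∂μ = (n + 1) * ∫⁻ t, F t ^ n * G t ∂μ := by
      rw [← lintegral_setLIntegral_setOf_rel (r := fun s t ↦ r t s) (measurable_swap hr)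
        (hF.pow_const n), ← lintegral_const_mul' _ _ (by finiteness)]
      simp_rw [ih_segment]
    calc ((n + 1 : ℕ) + 1 : ℝ≥0∞) * ∫⁻ s, F s ^ (n + 1) ∂μ
        = ∫⁻ s, F s ^ (n + 1) ∂μ + (n + 1) * ∫⁻ s, F s ^ n * F s ∂μ := by
          simp_rw [← pow_succ]
          push_cast
          ring
      _ = (n + 1) * ∫⁻ t, F t ^ n * (G t + F t) ∂μ := by
          simp_rw [mul_add]
          rw [hswap, lintegral_add_left (by fun_prop), mul_add]
      _ = ((n + 1) * ∫⁻ t, F t ^ n ∂μ) * μ univ := by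
          simp_rw [F, G, measure_setOf_rel_left_add_right r (hdown _)]
          rw [lintegral_mul_const _ (hF.pow_const n), mul_assoc]
      _ = μ univ ^ (n + 1 + 1) := by rw [ih μ, ← pow_succ]

variable [LinearOrder α] [TopologicalSpace α] [OrderClosedTopology α] [SecondCountableTopology α]
  [OpensMeasurableSpace α] (μ : Measure α) [SFinite μ] [NullSingletonClass μ] {A : Set α}

theorem setLIntegral_measure_inter_Iio_pow (hA : MeasurableSet A) (n : ℕ) :
    ((n : ℝ≥0∞) + 1) * ∫⁻ t in A, μ (A ∩ Iio t) ^ n ∂μ = μ A ^ (n + 1) := by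
  have h := lintegral_measure_setOf_rel_pow (α := α) (· < ·)
    (measurableSet_lt measurable_fst measurable_snd) n (μ.restrict A)
  simp_rw [Measure.restrict_apply_univ, Measure.restrict_apply' hA, inter_comm _ A] at h
  exact h

theorem setLIntegral_measure_inter_Ioi_pow (hA : MeasurableSet A) (n : ℕ) :
    ((n : ℝ≥0∞) + 1) * ∫⁻ t in A, μ (A ∩ Ioi t) ^ n ∂μ = μ A ^ (n + 1) := by
  have h := lintegral_measure_setOf_rel_pow (α := α) (· > ·)
    (measurableSet_lt measurable_snd measurable_fst) n (μ.restrict A)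
  simp_rw [Measure.restrict_apply_univ, Measure.restrict_apply' hA, inter_comm _ A] at h
  exact h

end OrderStatistics

section Convexity

/-- `E` is convex up to null sets: for almost every displacement `v` and almost every
`s ∈ (0, 1)`, almost every segment `[x, x + v]` with endpoints in `E` has its point `x + s • v` in
`E`. The base point is quantified last, so that one can fix `v` and `s` and then translate. -/
def AEConvex {V : Type*} [AddCommGroup V] [Module ℝ V] [MeasurableSpace V] (μ : Measure V)
    (E : Set V) : Prop :=
  ∀ᵐ v ∂μ, ∀ᵐ s ∂volume.restrict (Ioo (0 : ℝ) 1), ∀ᵐ x ∂μ, x ∈ E → x + v ∈ E → x + s • v ∈ E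

theorem aeConvex_of_ae_eq_convex {V : Type*} [AddCommGroup V] [Module ℝ V] [MeasurableSpace V]
    [MeasurableAdd V] {μ : Measure V} [μ.IsAddRightInvariant] {E K : Set V} (hK : Convex ℝ K)
    (hEK : E =ᵐ[μ] K) : AEConvex μ E := by
  have hmem : ∀ᵐ x ∂μ, x ∈ E ↔ x ∈ K := hEK.mem_iff
  refine ae_of_all _ fun v ↦ ?_
  filter_upwards [ae_restrict_mem measurableSet_Ioo] with s hs
  filter_upwards [hmem, (eventually_add_right_iff μ v).2 hmem,
    (eventually_add_right_iff μ (s • v)).2 hmem] with x hx hxv hxsv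
  rw [hx, hxv, hxsv]
  exact fun hxK hxvK ↦ hK.add_smul_mem hxK hxvK ⟨hs.1.le, hs.2.le⟩

theorem measure_sdiff_le_of_ae_add_mem {G : Type*} [AddCommGroup G] [MeasurableSpace G]
    [MeasurableAdd G] {μ : Measure G} [μ.IsAddRightInvariant] {E : Set G} {v w : G}
    (h : ∀ᵐ x ∂μ, x ∈ E → x + v ∈ E → x + w ∈ E) (B : Set G) :
    μ (B \ E) ≤ μ ((· + w) ⁻¹' B \ E) + μ ((· + (w - v)) ⁻¹' B \ E) := by
  have hshift : ∀ᵐ x ∂μ, x + w ∈ B \ E →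
      x ∈ (· + w) ⁻¹' B \ E ∪ (· + v) ⁻¹' ((· + (w - v)) ⁻¹' B \ E) := by
    filter_upwards [h] with x hx hxB
    have hadd : x + v + (w - v) = x + w := by abel
    simp only [mem_union, Set.mem_sdiff, mem_preimage, hadd] at hxB ⊢
    tauto
  calc μ (B \ E) = μ ((· + w) ⁻¹' (B \ E)) := (measure_preimage_add_right μ w _).symm
    _ ≤ μ ((· + w) ⁻¹' B \ E ∪ (· + v) ⁻¹' ((· + (w - v)) ⁻¹' B \ E)) := measure_mono_ae hshift
    _ ≤ μ ((· + w) ⁻¹' B \ E) + μ ((· + v) ⁻¹' ((· + (w - v)) ⁻¹' B \ E)) := measure_union_le _ _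
    _ = μ ((· + w) ⁻¹' B \ E) + μ ((· + (w - v)) ⁻¹' B \ E) := by
      rw [measure_preimage_add_right]

/-- The points at which `E` has density one with respect to `μ`, expressed as the vanishing of the
density of the complement so that no measurability of `E` is involved. -/
def densityPoints {X : Type*} [PseudoMetricSpace X] [MeasurableSpace X] (μ : Measure X)
    (E : Set X) : Set X :=
  {x | Tendsto (fun r ↦ μ (Metric.closedBall x r \ E) / μ (Metric.closedBall x r))
    (𝓝[>] (0 : ℝ)) (𝓝 0)}

theorem densityPoints_ae_eq {X : Type*} [MetricSpace X] [MeasurableSpace X] [BorelSpace X]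
    [SecondCountableTopology X] [HasBesicovitchCovering X] {μ : Measure X}
    [IsLocallyFiniteMeasure μ] {E : Set X} (hE : MeasurableSet E) :
    densityPoints μ E =ᵐ[μ] E := by
  rw [eventuallyEq_set]
  filter_upwards [Besicovitch.ae_tendsto_measure_inter_div_of_measurableSet μ hE.compl] with x hx
  simp only [inter_comm Eᶜ, ← sdiff_eq] at hx
  refine ⟨fun hxD ↦ ?_, fun hxE ↦ ?_⟩
  · by_contra hxE
    simpa [hxE] using tendsto_nhds_unique hx hxD
  · simpa [densityPoints, hxE] using hx

variable {V : Type*} [NormedAddCommGroup V] [NormedSpace ℝ V] [MeasurableSpace V] {μ : Measure V}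
  {E : Set V}

theorem AEConvex.exists_near [μ.IsOpenPosMeasure] (h : AEConvex μ E) (v₀ : V) {t r : ℝ}
    (ht : t ∈ Ioo (0 : ℝ) 1) (hr : 0 < r) :
    ∃ (v : V) (s : ℝ), ‖v - v₀‖ < r ∧ ‖s • v - t • v₀‖ < r ∧
      ∀ᵐ x ∂μ, x ∈ E → x + v ∈ E → x + s • v ∈ E := by
  have hopen_v : IsOpen {v : V | ‖v - v₀‖ < r ∧ ‖t • v - t • v₀‖ < r} :=
    (isOpen_lt (f := fun v ↦ ‖v - v₀‖) (by fun_prop) continuous_const).inter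
      (isOpen_lt (f := fun v ↦ ‖t • v - t • v₀‖) (by fun_prop) continuous_const)
  obtain ⟨v, ⟨hv, htv⟩, hv_ae⟩ :=
    (Measure.dense_of_ae h).inter_open_nonempty _ hopen_v ⟨v₀, by simpa using hr⟩
  have hopen_s : IsOpen {s : ℝ | s ∈ Ioo (0 : ℝ) 1 ∧ ‖s • v - t • v₀‖ < r} :=
    isOpen_Ioo.inter
      (isOpen_lt (f := fun s : ℝ ↦ ‖s • v - t • v₀‖) (by fun_prop) continuous_const)
  obtain ⟨s, ⟨hs, hsv⟩, hs_ae⟩ :=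
    (Measure.dense_of_ae ((ae_restrict_iff' measurableSet_Ioo).1 hv_ae)).inter_open_nonempty _
      hopen_s ⟨t, ht, htv⟩
  exact ⟨v, s, hv, hsv, hs_ae hs⟩

variable [BorelSpace V]

theorem AEConvex.measure_closedBall_sdiff_le [μ.IsOpenPosMeasure] [μ.IsAddRightInvariant]
    (h : AEConvex μ E) {x y : V} {t r : ℝ} (ht : t ∈ Ioo (0 : ℝ) 1) (hr : 0 < r) :
    μ (Metric.closedBall (x + t • (y - x)) r \ E) ≤
      μ (Metric.closedBall x (3 * r) \ E) + μ (Metric.closedBall y (3 * r) \ E) := by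
  obtain ⟨v, s, hv, hsv, hE⟩ := h.exists_near (y - x) ht hr
  refine (measure_sdiff_le_of_ae_add_mem hE _).trans ?_
  gcongr
  all_goals
    intro z hz
    rw [mem_preimage, mem_closedBall_iff_norm] at hz
    rw [mem_closedBall_iff_norm]
  · calc ‖z - x‖ = ‖(z + s • v - (x + t • (y - x))) - (s • v - t • (y - x))‖ := by congr 1; abel
      _ ≤ ‖z + s • v - (x + t • (y - x))‖ + ‖s • v - t • (y - x)‖ := norm_sub_le _ _
      _ ≤ 3 * r := by linarith
  · calc ‖z - y‖ = ‖(z + (s • v - v) - (x + t • (y - x))) - (s • v - t • (y - x)) +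
          (v - (y - x))‖ := by congr 1; abel
      _ ≤ ‖z + (s • v - v) - (x + t • (y - x))‖ + ‖s • v - t • (y - x)‖ + ‖v - (y - x)‖ :=
        (norm_add_le _ _).trans (by gcongr; exact norm_sub_le _ _)
      _ ≤ 3 * r := by linarith

variable [FiniteDimensional ℝ V] [μ.IsAddHaarMeasure]

theorem AEConvex.measure_closedBall_sdiff_div_le (h : AEConvex μ E) {x y : V} {t r : ℝ}
    (ht : t ∈ Ioo (0 : ℝ) 1) (hr : 0 < r) :
    μ (Metric.closedBall (x + t • (y - x)) r \ E) / μ (Metric.closedBall (x + t • (y - x)) r) ≤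
      ENNReal.ofReal (3 ^ finrank ℝ V) *
        (μ (Metric.closedBall x (3 * r) \ E) / μ (Metric.closedBall x (3 * r)) +
          μ (Metric.closedBall y (3 * r) \ E) / μ (Metric.closedBall y (3 * r))) := by
  have hscale (w : V) : μ (Metric.closedBall w (3 * r)) =
      ENNReal.ofReal (3 ^ finrank ℝ V) * μ (Metric.closedBall (x + t • (y - x)) r) := by
    rw [Measure.addHaar_closedBall_mul_of_pos μ w three_pos,
      Measure.addHaar_closedBall_center μ (x + t • (y - x))]
  rw [hscale, hscale, ← ENNReal.add_div, ← mul_div_assoc,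
    ENNReal.mul_div_mul_left _ _ (by simp) ENNReal.ofReal_ne_top]
  gcongr
  exact h.measure_closedBall_sdiff_le ht hr

theorem AEConvex.convex_densityPoints (h : AEConvex μ E) : Convex ℝ (densityPoints μ E) := by
  rw [convex_iff_forall_pos]
  intro x hx y hy a b ha hb hab
  have hcomb : a • x + b • y = x + b • (y - x) := by
    rw [eq_sub_of_add_eq hab]
    module
  rw [hcomb]
  have htriple : Tendsto (fun r : ℝ ↦ 3 * r) (𝓝[>] 0) (𝓝[>] 0) := by
    refine tendsto_nhdsWithin_iff.2
      ⟨((continuous_const_mul (3 : ℝ)).tendsto' 0 0 (mul_zero 3)).mono_left nhdsWithin_le_nhds, ?_⟩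
    filter_upwards [self_mem_nhdsWithin] with r hr using mul_pos three_pos (mem_Ioi.1 hr)
  have hlim := ENNReal.Tendsto.const_mul (a := ENNReal.ofReal (3 ^ finrank ℝ V))
    ((Tendsto.comp hx htriple).add (Tendsto.comp hy htriple)) (.inr ENNReal.ofReal_ne_top)
  rw [add_zero, mul_zero] at hlim
  refine tendsto_of_tendsto_of_tendsto_of_le_of_le' tendsto_const_nhds hlim
    (Eventually.of_forall fun _ ↦ zero_le) ?_
  filter_upwards [self_mem_nhdsWithin] with r hr
  exact h.measure_closedBall_sdiff_div_le ⟨hb, by linarith⟩ hr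

theorem aeConvex_iff_exists_convex_ae_eq (hE : MeasurableSet E) :
    AEConvex μ E ↔ ∃ K : Set V, Convex ℝ K ∧ E =ᵐ[μ] K :=
  ⟨fun h ↦ ⟨densityPoints μ E, h.convex_densityPoints, (densityPoints_ae_eq hE).symm⟩,
    fun ⟨_, hK, hEK⟩ ↦ aeConvex_of_ae_eq_convex hK hEK⟩

end Convexity

section LineIntegrals

variable {V : Type*} [NormedAddCommGroup V] [NormedSpace ℝ V] [MeasurableSpace V] [BorelSpace V]

theorem exists_measurable_lintegral_line_eq_one {ξ : V} (hξ : ξ ≠ 0) :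
    ∃ φ : V → ℝ≥0∞, Measurable φ ∧ ∀ x, ∫⁻ t : ℝ, φ (x + t • ξ) = 1 := by
  obtain ⟨g, hg⟩ : ∃ g : StrongDual ℝ V, g ξ = 1 := SeparatingDual.exists_eq_one hξ
  refine ⟨(g ⁻¹' Icc 0 1).indicator 1,
    measurable_one.indicator (g.continuous.measurable measurableSet_Icc), fun x ↦ ?_⟩
  have hslice : (fun t : ℝ ↦ x + t • ξ) ⁻¹' (g ⁻¹' Icc 0 1) = Icc (-g x) (1 - g x) := by
    ext t
    simp only [mem_preimage, map_add, map_smul, hg, smul_eq_mul, mul_one, mem_Icc]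
    constructor <;> rintro ⟨h₀, h₁⟩ <;> constructor <;> linarith
  calc ∫⁻ t : ℝ, (g ⁻¹' Icc 0 1).indicator 1 (x + t • ξ)
      = ∫⁻ t : ℝ, (Icc (-g x) (1 - g x)).indicator 1 t := by rw [← hslice]; rfl
    _ = 1 := by rw [lintegral_indicator_one measurableSet_Icc]; simp

variable [SecondCountableTopology V] {μ : Measure V} [SFinite μ] [μ.IsAddRightInvariant]

theorem lintegral_mul_lintegral_line_comm {f g : V → ℝ≥0∞} (hf : Measurable f) (hg : Measurable g)
    (ξ : V) :
    ∫⁻ x, f x * (∫⁻ t : ℝ, g (x + t • ξ)) ∂μ = ∫⁻ x, g x * (∫⁻ t : ℝ, f (x + t • ξ)) ∂μ := by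
  calc ∫⁻ x, f x * (∫⁻ t : ℝ, g (x + t • ξ)) ∂μ
      = ∫⁻ x, (∫⁻ t : ℝ, f x * g (x + t • ξ)) ∂μ :=
        lintegral_congr fun x ↦ (lintegral_const_mul _ (by fun_prop)).symm
    _ = ∫⁻ t : ℝ, ∫⁻ x, f x * g (x + t • ξ) ∂μ := lintegral_lintegral_swap (by fun_prop)
    _ = ∫⁻ t : ℝ, ∫⁻ x, f (x + (-t) • ξ) * g x ∂μ := by
        refine lintegral_congr fun t ↦ ?_
        rw [← lintegral_add_right_eq_self (fun x ↦ f (x + (-t) • ξ) * g x) (t • ξ)]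
        simp
    _ = ∫⁻ t : ℝ, ∫⁻ x, f (x + t • ξ) * g x ∂μ :=
        lintegral_neg_eq_self (fun t : ℝ ↦ ∫⁻ x, f (x + t • ξ) * g x ∂μ)
    _ = ∫⁻ x, (∫⁻ t : ℝ, f (x + t • ξ) * g x) ∂μ := lintegral_lintegral_swap (by fun_prop)
    _ = ∫⁻ x, g x * (∫⁻ t : ℝ, f (x + t • ξ)) ∂μ :=
        lintegral_congr fun x ↦ by rw [lintegral_mul_const _ (by fun_prop), mul_comm]

theorem lintegral_eq_of_forall_lintegral_line_eq {f g : V → ℝ≥0∞} (hf : Measurable f)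
    (hg : Measurable g) {ξ : V} (hξ : ξ ≠ 0)
    (hfg : ∀ x, ∫⁻ t : ℝ, f (x + t • ξ) = ∫⁻ t : ℝ, g (x + t • ξ)) :
    ∫⁻ x, f x ∂μ = ∫⁻ x, g x ∂μ := by
  obtain ⟨φ, hφ, hφ_line⟩ := exists_measurable_lintegral_line_eq_one hξ
  have hweight {u : V → ℝ≥0∞} (hu : Measurable u) :
      ∫⁻ x, u x ∂μ = ∫⁻ x, φ x * (∫⁻ t : ℝ, u (x + t • ξ)) ∂μ := by
    simp_rw [lintegral_mul_lintegral_line_comm hφ hu, hφ_line, mul_one]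
  simp_rw [hweight hf, hweight hg, hfg]

end LineIntegrals

section PolarCoordinates

theorem lintegral_eq_lintegral_toSphere {V : Type*} [NormedAddCommGroup V] [NormedSpace ℝ V]
    [FiniteDimensional ℝ V] [Nontrivial V] [MeasurableSpace V] [BorelSpace V] {μ : Measure V}
    [μ.IsAddHaarMeasure] {f : V → ℝ≥0∞} (hf : Measurable f) :
    ∫⁻ x, f x ∂μ = ∫⁻ ξ : Metric.sphere (0 : V) 1, (∫⁻ r in Ioi (0 : ℝ),
      ENNReal.ofReal (r ^ (finrank ℝ V - 1)) * f (r • (ξ : V))) ∂μ.toSphere := by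
  calc ∫⁻ x, f x ∂μ = ∫⁻ x : ({0}ᶜ : Set V), f x ∂(μ.comap (↑)) := by
        rw [lintegral_subtype_comap (measurableSet_singleton _).compl, restrict_compl_singleton]
    _ = ∫⁻ p : Metric.sphere (0 : V) 1 × Ioi (0 : ℝ), f (p.2.1 • p.1.1)
          ∂(μ.toSphere.prod (.volumeIoiPow (finrank ℝ V - 1))) := by
        rw [← μ.measurePreserving_homeomorphUnitSphereProd.lintegral_comp (by fun_prop)]
        refine lintegral_congr fun x ↦ congrArg f ?_
        exact congrArg Subtype.val ((homeomorphUnitSphereProd V).symm_apply_apply x).symm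
    _ = _ := by
        rw [lintegral_prod _ (by fun_prop)]
        refine lintegral_congr fun ξ ↦ ?_
        rw [Measure.volumeIoiPow, lintegral_withDensity_eq_lintegral_mul _ (by fun_prop)
          (by fun_prop), ← lintegral_subtype_comap measurableSet_Ioi]
        rfl

end PolarCoordinates

section LineSlices

variable {V : Type*} [AddCommGroup V] [Module ℝ V] {E : Set V}

/-- The slice of `E` by the line through `x` with direction `v`, in the coordinate `t ↦ x + t • v`.
Its measure is the length of the chord of `E` along that line when `v` is a unit vector. -/
def lineSlice (E : Set V) (x v : V) : Set ℝ :=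
  {t | x + t • v ∈ E}

/-- The fraction of the segment from `x` to `y` that lies in `E`. -/
def segmentFraction (E : Set V) (x y : V) : ℝ≥0∞ :=
  volume (lineSlice E x (y - x) ∩ Ioo 0 1)

theorem lineSlice_add_smul (E : Set V) (x v : V) (t : ℝ) :
    lineSlice E (x + t • v) v = (t + ·) ⁻¹' lineSlice E x v := by
  ext u
  simp only [lineSlice, mem_ofPred_eq, mem_preimage, add_smul, add_assoc]

theorem volume_lineSlice_add_smul (E : Set V) (x v : V) (t : ℝ) :
    volume (lineSlice E (x + t • v) v) = volume (lineSlice E x v) := by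
  rw [lineSlice_add_smul, measure_preimage_add]

theorem volume_lineSlice_add_smul_inter_Ioi (E : Set V) (x v : V) (t : ℝ) :
    volume (lineSlice E (x + t • v) v ∩ Ioi 0) = volume (lineSlice E x v ∩ Ioi t) := by
  rw [← measure_preimage_add volume t (lineSlice E x v ∩ Ioi t), preimage_inter,
    lineSlice_add_smul, preimage_const_add_Ioi, sub_self]

theorem ofReal_mul_segmentFraction_add_smul (E : Set V) (x v : V) {r : ℝ} (hr : 0 < r) :
    ENNReal.ofReal r * segmentFraction E x (x + r • v) = volume (lineSlice E x v ∩ Ioo 0 r) := by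
  have hpre : lineSlice E x (r • v) ∩ Ioo 0 1 = (r * ·) ⁻¹' (lineSlice E x v ∩ Ioo 0 r) := by
    ext s
    simp only [lineSlice, mem_inter_iff, mem_ofPred_eq, mem_Ioo, mem_preimage, smul_smul,
      mul_comm s r, mul_pos_iff_of_pos_left hr, mul_lt_iff_lt_one_right hr]
  rw [segmentFraction, add_sub_cancel_left, hpre, Real.volume_preimage_mul_left hr.ne',
    abs_of_pos (inv_pos.2 hr), ← mul_assoc, ← ENNReal.ofReal_mul hr.le, mul_inv_cancel₀ hr.ne',
    ENNReal.ofReal_one, one_mul]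

theorem segmentFraction_le_one (E : Set V) (x y : V) : segmentFraction E x y ≤ 1 :=
  (measure_mono inter_subset_right).trans (by simp)

theorem segmentFraction_eq_one_iff {x y : V} (h : MeasurableSet (lineSlice E x (y - x))) :
    segmentFraction E x y = 1 ↔
      ∀ᵐ s ∂volume.restrict (Ioo (0 : ℝ) 1), x + s • (y - x) ∈ E := by
  have : IsProbabilityMeasure (volume.restrict (Ioo (0 : ℝ) 1)) := ⟨by simp⟩
  rw [segmentFraction, ← Measure.restrict_apply h, ← mem_ae_iff_prob_eq_one h]
  rfl

theorem lintegral_ray_segmentFraction_pow {x v : V} (h : MeasurableSet (lineSlice E x v)) (k : ℕ) :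
    ((k : ℝ≥0∞) + 1) * ∫⁻ r in Ioi (0 : ℝ), ENNReal.ofReal (r ^ k) *
        E.indicator (fun y ↦ segmentFraction E x y ^ k) (x + r • v) =
      volume (lineSlice E x v ∩ Ioi 0) ^ (k + 1) := by
  rw [← setLIntegral_measure_inter_Iio_pow volume (h.inter measurableSet_Ioi),
    ← Measure.restrict_restrict h, ← lintegral_indicator h]
  congr 1
  refine setLIntegral_congr_fun measurableSet_Ioi fun r (hr : 0 < r) ↦ ?_
  by_cases hrE : x + r • v ∈ E
  · rw [indicator_of_mem hrE, indicator_of_mem (show r ∈ lineSlice E x v from hrE),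
      ENNReal.ofReal_pow hr.le, ← mul_pow, ofReal_mul_segmentFraction_add_smul E x v hr,
      inter_assoc, Ioi_inter_Iio]
  · rw [indicator_of_notMem hrE, indicator_of_notMem (show r ∉ lineSlice E x v from hrE), mul_zero]

end LineSlices

theorem lintegral_pow_eq_measure_univ_iff {α : Type*} [MeasurableSpace α] {ν : Measure α}
    [IsFiniteMeasure ν] {f : α → ℝ≥0∞} (hf : f ≤ 1) {k : ℕ} (hk : k ≠ 0) :
    ∫⁻ a, f a ^ k ∂ν = ν univ ↔ ∀ᵐ a ∂ν, f a = 1 := by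
  have hle (a : α) : f a ^ k ≤ 1 := pow_le_one₀ zero_le (hf a)
  refine ⟨fun h ↦ ?_, fun h ↦ ?_⟩
  · have hpow : (fun a ↦ f a ^ k) =ᵐ[ν] 1 :=
      ae_eq_of_ae_le_of_lintegral_le (ae_of_all _ hle) (h ▸ measure_ne_top ν univ)
        measurable_one.aemeasurable (by simp [h])
    filter_upwards [hpow] with a ha
    exact (ENNReal.pow_right_strictMono hk).injective (ha.trans (one_pow k).symm)
  · rw [← lintegral_one]
    refine lintegral_congr_ae ?_
    filter_upwards [h] with a ha
    rw [ha, one_pow]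

section Chords

variable {V : Type*} [NormedAddCommGroup V] [NormedSpace ℝ V] [MeasurableSpace V] [BorelSpace V]
  {μ : Measure V} {E : Set V}

theorem measurableSet_lineSlice (hE : MeasurableSet E) (x v : V) :
    MeasurableSet (lineSlice E x v) :=
  hE.preimage (f := fun t : ℝ ↦ x + t • v) (by fun_prop)

section SecondCountable

variable [SecondCountableTopology V]

theorem measurable_volume_lineSlice_inter (hE : MeasurableSet E) {T : Set ℝ}
    (hT : MeasurableSet T) : Measurable fun p : V × V ↦ volume (lineSlice E p.1 p.2 ∩ T) := by
  have hE' : MeasurableSet {q : (V × V) × ℝ | q.1.1 + q.2 • q.1.2 ∈ E} :=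
    hE.preimage (f := fun q : (V × V) × ℝ ↦ q.1.1 + q.2 • q.1.2) (by fun_prop)
  exact measurable_measure_prodMk_left (hE'.inter (measurable_snd hT))

theorem measurable_volume_lineSlice (hE : MeasurableSet E) :
    Measurable fun p : V × V ↦ volume (lineSlice E p.1 p.2) := by
  simpa only [inter_univ] using measurable_volume_lineSlice_inter hE MeasurableSet.univ

theorem measurable_segmentFraction (hE : MeasurableSet E) :
    Measurable fun p : V × V ↦ segmentFraction E p.1 p.2 :=
  (measurable_volume_lineSlice_inter hE measurableSet_Ioo).comp
    (by fun_prop : Measurable fun p : V × V ↦ (p.1, p.2 - p.1))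

theorem setLIntegral_volume_lineSlice_pow [SFinite μ] [μ.IsAddRightInvariant]
    (hE : MeasurableSet E) {ξ : V} (hξ : ξ ≠ 0) (n : ℕ) :
    ∫⁻ x in E, volume (lineSlice E x ξ) ^ n ∂μ =
      ((n : ℝ≥0∞) + 1) * ∫⁻ x in E, volume (lineSlice E x ξ ∩ Ioi 0) ^ n ∂μ := by
  have hchord : Measurable fun x ↦ volume (lineSlice E x ξ) ^ n :=
    ((measurable_volume_lineSlice hE).comp measurable_prodMk_right).pow_const n
  have hhalf : Measurable fun x ↦ ((n : ℝ≥0∞) + 1) * volume (lineSlice E x ξ ∩ Ioi 0) ^ n :=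
    (((measurable_volume_lineSlice_inter hE measurableSet_Ioi).comp
      measurable_prodMk_right).pow_const n).const_mul _
  rw [← lintegral_const_mul' _ _ (by finiteness), ← lintegral_indicator hE,
    ← lintegral_indicator hE]
  refine lintegral_eq_of_forall_lintegral_line_eq (hchord.indicator hE) (hhalf.indicator hE) hξ
    fun x ↦ ?_
  have hline (F : V → ℝ≥0∞) :
      ∫⁻ t : ℝ, E.indicator F (x + t • ξ) = ∫⁻ t in lineSlice E x ξ, F (x + t • ξ) :=
    lintegral_indicator (measurableSet_lineSlice hE x ξ) fun t ↦ F (x + t • ξ)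
  simp only [hline, volume_lineSlice_add_smul, volume_lineSlice_add_smul_inter_Ioi]
  rw [lintegral_const_mul' _ _ (by finiteness),
    setLIntegral_measure_inter_Ioi_pow volume (measurableSet_lineSlice hE x ξ),
    setLIntegral_const, pow_succ]

theorem ae_segmentFraction_eq_one_iff_aeConvex [SFinite μ] [μ.IsAddLeftInvariant]
    (hE : MeasurableSet E) :
    (∀ᵐ p ∂(μ.restrict E).prod (μ.restrict E), segmentFraction E p.1 p.2 = 1) ↔
      AEConvex μ E := by
  have hmem : Measurable (· ∈ E) := measurableSet_setOfPred.1 hE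
  have hfull : MeasurableSet {p : V × V | segmentFraction E p.1 p.2 = 1} :=
    measurable_segmentFraction hE (measurableSet_singleton 1)
  have hfull_add : Measurable fun p : V × V ↦ segmentFraction E p.1 (p.1 + p.2) = 1 :=
    (measurableSet_setOfPred.1 hfull).comp
      (by fun_prop : Measurable fun p : V × V ↦ (p.1, p.1 + p.2))
  calc (∀ᵐ p ∂(μ.restrict E).prod (μ.restrict E), segmentFraction E p.1 p.2 = 1)
      ↔ ∀ᵐ x ∂μ, x ∈ E → ∀ᵐ y ∂μ, y ∈ E → segmentFraction E x y = 1 := by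
        simp_rw [Measure.ae_prod_iff_ae_ae hfull, ae_restrict_iff' hE]
    _ ↔ ∀ᵐ x ∂μ, ∀ᵐ v ∂μ, x ∈ E → x + v ∈ E → segmentFraction E x (x + v) = 1 := by
        simp_rw [eventually_imp_distrib_left]
        exact eventually_congr (ae_of_all _ fun x ↦ imp_congr_right fun _ ↦
          (eventually_add_left_iff μ x).symm)
    _ ↔ ∀ᵐ v ∂μ, ∀ᵐ x ∂μ, x ∈ E → x + v ∈ E → segmentFraction E x (x + v) = 1 :=
        Measure.ae_ae_comm (measurableSet_setOfPred.2 ((hmem.comp measurable_fst).imp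
          ((hmem.comp measurable_add).imp hfull_add)))
    _ ↔ ∀ᵐ v ∂μ, ∀ᵐ x ∂μ, ∀ᵐ s ∂volume.restrict (Ioo (0 : ℝ) 1),
          x ∈ E → x + v ∈ E → x + s • v ∈ E := by
        simp_rw [segmentFraction_eq_one_iff (measurableSet_lineSlice hE _ _), add_sub_cancel_left,
          eventually_imp_distrib_left]
    _ ↔ AEConvex μ E := by
        refine eventually_congr (ae_of_all _ fun v ↦
          Measure.ae_ae_comm (measurableSet_setOfPred.2 ?_))
        exact (hmem.comp measurable_fst).imp ((hmem.comp (by fun_prop)).imp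
          (hmem.comp (by fun_prop)))

end SecondCountable

variable [FiniteDimensional ℝ V]

/-- The integral over all directions `ξ` and all `x ∈ E` of the `n`-th power of the length of the
chord of `E` through `x` in direction `ξ`; this extends `Jn` from Lebesgue measure on Euclidean
space to an arbitrary norm and Haar measure. -/
def chordMoment (μ : Measure V) (E : Set V) (n : ℕ) : ℝ≥0∞ :=
  ∫⁻ ξ : Metric.sphere (0 : V) 1, (∫⁻ x in E, volume (lineSlice E x ξ) ^ n ∂μ) ∂μ.toSphere

variable [μ.IsAddHaarMeasure]

theorem setLIntegral_segmentFraction_pow (hE : MeasurableSet E) {k : ℕ}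
    (hk : finrank ℝ V = k + 1) (x : V) :
    ((k : ℝ≥0∞) + 1) * ∫⁻ y in E, segmentFraction E x y ^ k ∂μ =
      ∫⁻ ξ : Metric.sphere (0 : V) 1, volume (lineSlice E x ξ ∩ Ioi 0) ^ (k + 1) ∂μ.toSphere := by
  have : Nontrivial V := Module.nontrivial_of_finrank_pos (R := ℝ) (by lia)
  have hmeas : Measurable (E.indicator fun y ↦ segmentFraction E x y ^ k) :=
    (((measurable_segmentFraction hE).comp measurable_prodMk_left).pow_const k).indicator hE
  rw [← lintegral_indicator hE, ← lintegral_add_left_eq_self _ x,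
    lintegral_eq_lintegral_toSphere (by fun_prop), ← lintegral_const_mul' _ _ (by finiteness), hk,
    Nat.add_sub_cancel]
  exact lintegral_congr fun ξ ↦
    lintegral_ray_segmentFraction_pow (measurableSet_lineSlice hE x ξ) k

theorem chordMoment_eq_lintegral_segmentFraction_pow (hE : MeasurableSet E) {k : ℕ}
    (hk : finrank ℝ V = k + 1) :
    chordMoment μ E (k + 1) = ((k + 1 : ℕ) : ℝ≥0∞) * ((k + 1 : ℕ) + 1) *
      ∫⁻ p, segmentFraction E p.1 p.2 ^ k ∂(μ.restrict E).prod (μ.restrict E) := by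
  have hhalf : Measurable fun p : Metric.sphere (0 : V) 1 × V ↦
      volume (lineSlice E p.2 p.1 ∩ Ioi 0) ^ (k + 1) :=
    ((measurable_volume_lineSlice_inter hE measurableSet_Ioi).comp
      (by fun_prop : Measurable fun p : Metric.sphere (0 : V) 1 × V ↦ (p.2, (p.1 : V)))).pow_const _
  calc chordMoment μ E (k + 1)
      = ∫⁻ ξ : Metric.sphere (0 : V) 1, ((k + 1 : ℕ) + 1) *
          (∫⁻ x in E, volume (lineSlice E x ξ ∩ Ioi 0) ^ (k + 1) ∂μ) ∂μ.toSphere :=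
        lintegral_congr fun ξ ↦
          setLIntegral_volume_lineSlice_pow hE (ne_zero_of_mem_unit_sphere ξ) (k + 1)
    _ = ((k + 1 : ℕ) + 1) * ∫⁻ x in E, (∫⁻ ξ : Metric.sphere (0 : V) 1,
          volume (lineSlice E x ξ ∩ Ioi 0) ^ (k + 1) ∂μ.toSphere) ∂μ := by
        rw [lintegral_const_mul' _ _ (by finiteness), lintegral_lintegral_swap hhalf.aemeasurable]
    _ = ((k + 1 : ℕ) + 1) * ((k + 1 : ℕ) *
          ∫⁻ x in E, (∫⁻ y in E, segmentFraction E x y ^ k ∂μ) ∂μ) := by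
        simp_rw [← setLIntegral_segmentFraction_pow hE hk]
        rw [lintegral_const_mul' _ _ (by finiteness), Nat.cast_succ]
    _ = _ := by
        rw [lintegral_prod _ ((measurable_segmentFraction hE).pow_const k).aemeasurable]
        ring

theorem chordMoment_congr_ae {E' : Set V} (h : E =ᵐ[μ] E') (n : ℕ) :
    chordMoment μ E n = chordMoment μ E' n := by
  obtain ⟨S, hS_ae, hS, hSE⟩ := h.mem_iff.exists_measurable_mem
  refine lintegral_congr fun ξ ↦ ?_
  rw [setLIntegral_congr h]
  refine lintegral_congr_ae (ae_restrict_of_ae ?_)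
  filter_upwards [(ae_ae_add_linearMap_mem_iff (LinearMap.toSpanSingleton ℝ V (ξ : V)) volume μ
    hS).2 hS_ae] with x hx
  have hslice : lineSlice E x ξ =ᵐ[volume] lineSlice E' x ξ :=
    eventuallyEq_set.2 (hx.mono fun t ht ↦ hSE _ ht)
  rw [measure_congr hslice]

theorem chordMoment_eq_iff_aeConvex (hE : MeasurableSet E) (hfin : μ E ≠ ∞) {n : ℕ}
    (hdim : finrank ℝ V = n) (hn : 2 ≤ n) :
    chordMoment μ E n = n * (n + 1) * μ E ^ 2 ↔ AEConvex μ E := by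
  obtain ⟨k, rfl⟩ : ∃ k, n = k + 1 := ⟨n - 1, by lia⟩
  have : IsFiniteMeasure (μ.restrict E) := isFiniteMeasure_restrict.2 hfin
  have hprod : (μ.restrict E).prod (μ.restrict E) univ = μ E ^ 2 := by
    rw [← univ_prod_univ, Measure.prod_prod, Measure.restrict_apply_univ, sq]
  rw [chordMoment_eq_lintegral_segmentFraction_pow hE hdim,
    ENNReal.mul_right_inj (by simp) (by finiteness), ← hprod,
    lintegral_pow_eq_measure_univ_iff (f := fun p : V × V ↦ segmentFraction E p.1 p.2)
      (fun p ↦ segmentFraction_le_one E p.1 p.2) (by lia),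
    ae_segmentFraction_eq_one_iff_aeConvex hE]

theorem statement13_general {n : ℕ} (hdim : finrank ℝ V = n) (hn : 2 ≤ n)
    (hE : NullMeasurableSet E μ) (hfin : μ E ≠ ∞) :
    chordMoment μ E n = n * (n + 1) * μ E ^ 2 ↔
      ∃ K : Set V, Convex ℝ K ∧ μ (symmDiff E K) = 0 := by
  obtain ⟨E', hE', hEE'⟩ := hE
  simp_rw [measure_symmDiff_eq_zero_iff]
  rw [chordMoment_congr_ae hEE', measure_congr hEE',
    chordMoment_eq_iff_aeConvex hE' (measure_congr hEE' ▸ hfin) hdim hn,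
    aeConvex_iff_exists_convex_ae_eq hE']
  exact exists_congr fun K ↦ and_congr_right fun _ ↦
    ⟨fun h ↦ hEE'.trans h, fun h ↦ hEE'.symm.trans h⟩

end Chords

/-- equality `Jn E = n(n+1)·λ(E)²` holds iff `E` is convex up to a null set. -/
theorem statement13 (n : ℕ) (hn : 2 ≤ n) (E : Set (EuclideanSpace ℝ (Fin n)))
    (hE : MeasurableSet E) (hpos : 0 < volume E) (hfin : volume E < ⊤) :
    Jn n E = (n : ℝ≥0∞) * ((n : ℝ≥0∞) + 1) * (volume E) ^ 2 ↔
      ∃ K : Set (EuclideanSpace ℝ (Fin n)), Convex ℝ K ∧ volume (symmDiff E K) = 0 :=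
  statement13_general finrank_euclideanSpace_fin hn hE.nullMeasurableSet hfin.ne
end
end

section
/- Let n ≥ 2 be an integer and let c ∈ (0,1). There exists c′ ∈ (0,1), depending only on n and c, with the following property: for every Lebesgue-measurable set E ⊆ ℝⁿ with 0 < λ(E) < ∞ satisfying J_n(E) ≥ c·n(n+1)·λ(E)², there exists a convex set F ⊆ ℝⁿ with c′·λ(E) ≤ λ(F) ≤ c′^{−1}·λ(E) and λ(E ∩ F) ≥ c′·λ(E). -/
open MeasureTheory
open scoped ENNReal

noncomputable section

/-!
Join `x` and `y` in `E` by an edge when the line through them meets `E` in length at least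
`δ |x - y|`. In polar coordinates around `x`, a large X-ray energy forces this graph to have
density bounded below, and then, by the Cauchy–Schwarz inequality, there are many walks of length
`d = dim V` from a suitable `x₀`.

An edge from `z` to `y` leaves room for a point `x` of `E` on the line `zy`, with `y` at a bounded
affine parameter `t` on the line `zx`; exchanging `y` for `x` is a homothety in `V` together with
the inversion `t ↦ t⁻¹`. Trading each edge of a walk in this way yields independent random points
`x₁, …, x_d` of `E` such that a random point `x₀ + ∑ bᵢ (xᵢ - x₀)` with bounded `b` lies in `E` with
probability bounded below. Random points of `E` seldom span a parallelotope that is small compared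
with `E`, so some nondegenerate choice of the `xᵢ` gives a parallelotope `F` which captures a fixed
proportion of its own volume in `E`, and is thus comparable to `E`.
-/

section KernelOperator

variable {α : Type*} [MeasurableSpace α]

/-- The integral operator `g ↦ ∫ a(·, y) g(y) dμ(y)` with kernel `a`, acting on nonnegative
functions; for the indicator kernel of a graph, the iterates of `1` count walks. -/
def kernelOp (μ : Measure α) (a : α → α → ℝ≥0∞) (g : α → ℝ≥0∞) (x : α) : ℝ≥0∞ :=
  ∫⁻ y, a x y * g y ∂μ

variable {μ : Measure α} {a : α → α → ℝ≥0∞}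

theorem monotone_kernelOp : Monotone (kernelOp μ a) :=
  fun _ _ h _ => lintegral_mono fun y => by gcongr; exact h y

theorem kernelOp_restrict {s : Set α} (hs : MeasurableSet s) (g : α → ℝ≥0∞) (x : α) :
    kernelOp (μ.restrict s) a g x = ∫⁻ y, a x y * s.indicator g y ∂μ := by
  rw [kernelOp, ← lintegral_indicator hs]
  simp only [Set.indicator_mul_right]

theorem sq_lintegral_le_lintegral_sq [IsProbabilityMeasure μ] {f : α → ℝ≥0∞}
    (hf : AEMeasurable f μ) : (∫⁻ x, f x ∂μ) ^ 2 ≤ ∫⁻ x, f x ^ 2 ∂μ := by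
  have h := ENNReal.lintegral_mul_le_Lp_mul_Lq μ Real.HolderConjugate.two_two hf
    (aemeasurable_const (b := (1 : ℝ≥0∞)))
  simp only [Pi.mul_apply, mul_one, ENNReal.one_rpow, lintegral_one, measure_univ] at h
  calc (∫⁻ x, f x ∂μ) ^ 2 ≤ ((∫⁻ x, f x ^ (2 : ℝ) ∂μ) ^ (1 / 2 : ℝ)) ^ 2 := by gcongr
    _ = ∫⁻ x, f x ^ 2 ∂μ := by
      rw [← ENNReal.rpow_natCast, ← ENNReal.rpow_mul]
      norm_num

theorem iterate_kernelOp_one_le_one [IsProbabilityMeasure μ] (hle : ∀ x y, a x y ≤ 1) (k : ℕ) :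
    (kernelOp μ a)^[k] 1 ≤ 1 := by
  induction k with
  | zero => exact le_rfl
  | succ k ih =>
    rw [Function.iterate_succ_apply']
    refine (monotone_kernelOp ih).trans fun x => ?_
    calc kernelOp μ a 1 x ≤ ∫⁻ _, 1 ∂μ := lintegral_mono fun y => by simpa using hle x y
      _ = 1 := by simp

theorem antitone_iterate_kernelOp_one [IsProbabilityMeasure μ] (hle : ∀ x y, a x y ≤ 1) :
    Antitone fun k => (kernelOp μ a)^[k] 1 :=
  antitone_nat_of_succ_le fun k => by
    rw [Function.iterate_succ_apply]
    exact monotone_kernelOp.iterate k (iterate_kernelOp_one_le_one hle 1)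

variable [SFinite μ]

theorem measurable_kernelOp (ha : Measurable (Function.uncurry a)) {g : α → ℝ≥0∞}
    (hg : Measurable g) : Measurable (kernelOp μ a g) :=
  (ha.mul (hg.comp measurable_snd)).lintegral_prod_right

theorem measurable_iterate_kernelOp (ha : Measurable (Function.uncurry a)) {g : α → ℝ≥0∞}
    (hg : Measurable g) (k : ℕ) : Measurable ((kernelOp μ a)^[k] g) := by
  induction k with
  | zero => exact hg
  | succ k ih =>
    rw [Function.iterate_succ_apply']
    exact measurable_kernelOp ha ih

theorem lintegral_kernelOp_mul (ha : Measurable (Function.uncurry a))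
    (hsymm : ∀ x y, a x y = a y x) {f g : α → ℝ≥0∞} (hf : Measurable f) (hg : Measurable g) :
    ∫⁻ x, kernelOp μ a f x * g x ∂μ = ∫⁻ x, f x * kernelOp μ a g x ∂μ := by
  have hax : ∀ x, Measurable (a x) := fun x => ha.comp measurable_prodMk_left
  calc ∫⁻ x, kernelOp μ a f x * g x ∂μ = ∫⁻ x, ∫⁻ y, a x y * f y * g x ∂μ ∂μ :=
        lintegral_congr fun x =>
          (lintegral_mul_const (g x) (f := fun y => a x y * f y) ((hax x).mul hf)).symm
    _ = ∫⁻ y, ∫⁻ x, a x y * f y * g x ∂μ ∂μ :=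
        lintegral_lintegral_swap
          ((ha.mul (hf.comp measurable_snd)).mul (hg.comp measurable_fst)).aemeasurable
    _ = ∫⁻ y, ∫⁻ x, f y * (a y x * g x) ∂μ ∂μ := by
        refine lintegral_congr fun y => lintegral_congr fun x => ?_
        rw [hsymm x y]
        ring
    _ = ∫⁻ y, f y * kernelOp μ a g y ∂μ :=
        lintegral_congr fun y =>
          lintegral_const_mul (f y) (f := fun x => a y x * g x) ((hax y).mul hg)

theorem lintegral_iterate_kernelOp_mul (ha : Measurable (Function.uncurry a))
    (hsymm : ∀ x y, a x y = a y x) {f g : α → ℝ≥0∞} (hf : Measurable f) (hg : Measurable g)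
    (k : ℕ) :
    ∫⁻ x, (kernelOp μ a)^[k] f x * g x ∂μ = ∫⁻ x, f x * (kernelOp μ a)^[k] g x ∂μ := by
  induction k generalizing f with
  | zero => rfl
  | succ k ih =>
    rw [Function.iterate_succ_apply, ih (measurable_kernelOp ha hf),
      lintegral_kernelOp_mul ha hsymm hf (measurable_iterate_kernelOp ha hg k),
      ← Function.iterate_succ_apply' (kernelOp μ a)]

end KernelOperator

section WalkCounting

variable {α : Type*} [MeasurableSpace α] {μ : Measure α} [IsProbabilityMeasure μ]
  {a : α → α → ℝ≥0∞}

theorem pow_two_pow_lintegral_le_lintegral_iterate_kernelOp (ha : Measurable (Function.uncurry a))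
    (hsymm : ∀ x y, a x y = a y x) (k : ℕ) :
    (∫⁻ x, ∫⁻ y, a x y ∂μ ∂μ) ^ 2 ^ k ≤ ∫⁻ x, (kernelOp μ a)^[2 ^ k] 1 x ∂μ := by
  induction k with
  | zero => simp [kernelOp]
  | succ k ih =>
    have hm := measurable_iterate_kernelOp (μ := μ) ha measurable_one (2 ^ k)
    calc (∫⁻ x, ∫⁻ y, a x y ∂μ ∂μ) ^ 2 ^ (k + 1)
        = ((∫⁻ x, ∫⁻ y, a x y ∂μ ∂μ) ^ 2 ^ k) ^ 2 := by rw [← pow_mul, pow_succ]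
      _ ≤ (∫⁻ x, (kernelOp μ a)^[2 ^ k] 1 x ∂μ) ^ 2 := by gcongr
      _ ≤ ∫⁻ x, (kernelOp μ a)^[2 ^ k] 1 x ^ 2 ∂μ := sq_lintegral_le_lintegral_sq hm.aemeasurable
      _ = ∫⁻ x, (1 : α → ℝ≥0∞) x * (kernelOp μ a)^[2 ^ k] ((kernelOp μ a)^[2 ^ k] 1) x ∂μ := by
        simp_rw [sq]
        exact lintegral_iterate_kernelOp_mul ha hsymm measurable_one hm _
      _ = ∫⁻ x, (kernelOp μ a)^[2 ^ (k + 1)] 1 x ∂μ := by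
        simp only [Pi.one_apply, one_mul, ← Function.iterate_add_apply, pow_succ, mul_two]

theorem pow_lintegral_le_lintegral_iterate_kernelOp (ha : Measurable (Function.uncurry a))
    (hsymm : ∀ x y, a x y = a y x) (hle : ∀ x y, a x y ≤ 1) (k : ℕ) :
    (∫⁻ x, ∫⁻ y, a x y ∂μ ∂μ) ^ 2 ^ k ≤ ∫⁻ x, (kernelOp μ a)^[k] 1 x ∂μ :=
  (pow_two_pow_lintegral_le_lintegral_iterate_kernelOp ha hsymm k).trans <|
    lintegral_mono (antitone_iterate_kernelOp_one hle k.lt_two_pow_self.le)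

end WalkCounting

section Inversion

/-- A lower bound for the weighted mass of the reciprocals of a subset of `ℝ` of measure at least
`δ`; see `inversionConst_le_setLIntegral`. -/
def inversionConst (d : ℕ) (δ : ℝ) : ℝ≥0∞ :=
  ENNReal.ofReal ((δ / 16) ^ (2 * d)) * ENNReal.ofReal (δ / 2)

theorem inversionConst_pos (d : ℕ) {δ : ℝ} (hδ : 0 < δ) : 0 < inversionConst d δ :=
  ENNReal.mul_pos (by positivity) (by positivity)

theorem inversionConst_ne_top (d : ℕ) (δ : ℝ) : inversionConst d δ ≠ ⊤ :=
  ENNReal.mul_ne_top ENNReal.ofReal_ne_top ENNReal.ofReal_ne_top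

theorem ofReal_half_le_volume_diff_balls {A : Set ℝ} {δ : ℝ} (hδ : 0 < δ)
    (hA : ENNReal.ofReal δ ≤ volume A) (a b : ℝ) :
    ENNReal.ofReal (δ / 2) ≤ volume (A \ (Metric.ball a (δ / 8) ∪ Metric.ball b (δ / 8))) := by
  set B := Metric.ball a (δ / 8) ∪ Metric.ball b (δ / 8)
  have hB : volume B ≤ ENNReal.ofReal (δ / 2) := by
    refine (measure_union_le _ _).trans ?_
    rw [Real.volume_ball, Real.volume_ball, ← ENNReal.ofReal_add (by positivity) (by positivity)]
    exact ENNReal.ofReal_le_ofReal (by linarith)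
  calc ENNReal.ofReal (δ / 2) = ENNReal.ofReal δ - ENNReal.ofReal (δ / 2) := by
        rw [← ENNReal.ofReal_sub _ (by positivity), sub_half]
    _ ≤ volume A - volume B := tsub_le_tsub hA hB
    _ ≤ volume (A \ B) := le_measure_sdiff

theorem le_abs_one_sub_inv {δ u : ℝ} (hδ : 0 < δ) (hδ1 : δ ≤ 1) (h0 : 0 < |u|)
    (h1 : δ / 8 ≤ |u - 1|) : δ / 16 ≤ |1 - u⁻¹| := by
  have hu0 : u ≠ 0 := abs_pos.1 h0
  have hw : |1 - u⁻¹| = |u - 1| / |u| := by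
    rw [← abs_div, sub_div, div_self hu0, one_div]
  rw [hw, le_div_iff₀ h0]
  rcases le_total |u| 2 with h2 | h2
  · nlinarith
  · have : |u| - 1 ≤ |u - 1| := by simpa using abs_sub_abs_le_abs_sub u 1
    nlinarith

theorem pow_le_inversion_weight {δ u : ℝ} (hδ : 0 < δ) (hδ1 : δ ≤ 1) (h0 : δ / 8 ≤ |u|)
    (h1 : δ / 8 ≤ |u - 1|) {d k : ℕ} (hd : 2 ≤ d) (hk : k ≤ d) :
    (δ / 16) ^ (2 * d) ≤ |-(u ^ 2)⁻¹| * (|1 - u⁻¹| ^ k * |u| ^ d) := by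
  have hu : 0 < |u| := by linarith
  have hq := le_abs_one_sub_inv hδ hδ1 hu h1
  calc (δ / 16) ^ (2 * d) ≤ (δ / 16) ^ (k + (d - 2)) :=
        pow_le_pow_of_le_one (by positivity) (by linarith) (by lia)
    _ = (δ / 16) ^ k * (δ / 16) ^ (d - 2) := pow_add _ _ _
    _ ≤ |1 - u⁻¹| ^ k * |u| ^ (d - 2) := by
        gcongr
        linarith
    _ = |-(u ^ 2)⁻¹| * (|1 - u⁻¹| ^ k * |u| ^ d) := by
        rw [abs_neg, abs_inv, abs_pow, ← Nat.sub_add_cancel hd, pow_add, Nat.add_sub_cancel]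
        field_simp

/-- The weights are the Jacobians of the two homotheties applied in `kernelOp_chordKernel_le`. -/
theorem inversionConst_le_setLIntegral {A : Set ℝ} (hAm : MeasurableSet A) {δ : ℝ} (hδ : 0 < δ)
    (hδ1 : δ ≤ 1) (hA : ENNReal.ofReal δ ≤ volume A) {d k : ℕ} (hd : 2 ≤ d) (hk : k ≤ d) :
    inversionConst d δ
      ≤ ∫⁻ t in Metric.closedBall 0 (8 / δ),
          ‖1 - t‖ₑ ^ k * (‖t⁻¹‖ₑ ^ d * A.indicator 1 t⁻¹) := by
  set S := A \ (Metric.ball 0 (δ / 8) ∪ Metric.ball 1 (δ / 8))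
  have hSm : MeasurableSet S := hAm.diff (measurableSet_ball.union measurableSet_ball)
  have hS : ∀ u ∈ S, u ∈ A ∧ δ / 8 ≤ |u| ∧ δ / 8 ≤ |u - 1| := by
    rintro u ⟨huA, hu⟩
    simpa [huA, Real.dist_eq] using hu
  have hderiv : ∀ u ∈ S, HasDerivWithinAt Inv.inv (-(u ^ 2)⁻¹) S u := fun u hu =>
    (hasDerivAt_inv (abs_pos.1 (by linarith [(hS u hu).2.1]))).hasDerivWithinAt
  have himage : Inv.inv '' S ⊆ Metric.closedBall 0 (8 / δ) := by
    rintro _ ⟨u, hu, rfl⟩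
    have hu' := (hS u hu).2.1
    rw [mem_closedBall_zero_iff, Real.norm_eq_abs, abs_inv,
      inv_le_comm₀ (by linarith) (by positivity), inv_div]
    exact hu'
  calc inversionConst d δ ≤ ENNReal.ofReal ((δ / 16) ^ (2 * d)) * volume S := by
        unfold inversionConst
        gcongr
        exact ofReal_half_le_volume_diff_balls hδ hA 0 1
    _ = ∫⁻ _ in S, ENNReal.ofReal ((δ / 16) ^ (2 * d)) := by rw [setLIntegral_const]
    _ ≤ ∫⁻ u in S, ENNReal.ofReal |-(u ^ 2)⁻¹| *
          (‖1 - u⁻¹‖ₑ ^ k * (‖u⁻¹⁻¹‖ₑ ^ d * A.indicator 1 u⁻¹⁻¹)) := by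
        refine setLIntegral_mono' hSm fun u hu => ?_
        obtain ⟨huA, hu0, hu1⟩ := hS u hu
        simp only [inv_inv, Set.indicator_of_mem huA, Pi.one_apply, mul_one,
          Real.enorm_eq_ofReal_abs]
        rw [← ENNReal.ofReal_pow (abs_nonneg _), ← ENNReal.ofReal_pow (abs_nonneg _),
          ← ENNReal.ofReal_mul (by positivity), ← ENNReal.ofReal_mul (abs_nonneg _)]
        exact ENNReal.ofReal_le_ofReal (pow_le_inversion_weight hδ hδ1 hu0 hu1 hd hk)
    _ = ∫⁻ t in Inv.inv '' S, ‖1 - t‖ₑ ^ k * (‖t⁻¹‖ₑ ^ d * A.indicator 1 t⁻¹) :=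
        (lintegral_image_eq_lintegral_abs_deriv_mul hSm hderiv inv_injective.injOn
          fun t => ‖1 - t‖ₑ ^ k * (‖t⁻¹‖ₑ ^ d * A.indicator 1 t⁻¹)).symm
    _ ≤ _ := lintegral_mono_set himage

end Inversion

section Chord

variable {V : Type*} [NormedAddCommGroup V] [NormedSpace ℝ V]

/-- The length of the intersection of `E` with the line through `x` and `y`, relative to the
distance between `x` and `y`. -/
def chordRatio (E : Set V) (x y : V) : ℝ≥0∞ :=
  volume (AffineMap.lineMap x y ⁻¹' E : Set ℝ)

/-- The indicator kernel of the graph in which `x` and `y` are adjacent when the line through them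
meets `E` in length at least `δ` times their distance. -/
def chordKernel (E : Set V) (δ : ℝ) (x : V) : V → ℝ≥0∞ :=
  {y | ENNReal.ofReal δ ≤ chordRatio E x y}.indicator 1

theorem chordKernel_le_one (E : Set V) (δ : ℝ) (x y : V) : chordKernel E δ x y ≤ 1 :=
  Set.indicator_le_self _ _ y

variable [MeasurableSpace V] [BorelSpace V] {E : Set V}

theorem measurableSet_lineMap_preimage (hE : MeasurableSet E) (x y : V) :
    MeasurableSet (AffineMap.lineMap x y ⁻¹' E : Set ℝ) :=
  AffineMap.lineMap_continuous.measurable hE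

theorem chordRatio_comm (hE : MeasurableSet E) (x y : V) :
    chordRatio E x y = chordRatio E y x := by
  rw [chordRatio, ← (Measure.measurePreserving_sub_left volume (1 : ℝ)).measure_preimage
    (measurableSet_lineMap_preimage hE x y).nullMeasurableSet, ← Set.preimage_comp, chordRatio]
  congr 2 with u
  exact AffineMap.lineMap_apply_one_sub x y u

theorem chordKernel_comm (hE : MeasurableSet E) (δ : ℝ) (x y : V) :
    chordKernel E δ x y = chordKernel E δ y x := by
  simp only [chordKernel, Set.indicator_apply, Set.mem_ofPred_eq, Pi.one_apply,
    chordRatio_comm hE x y]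

theorem inversionConst_mul_chordKernel_le (hE : MeasurableSet E) {δ : ℝ} (hδ : 0 < δ)
    (hδ1 : δ ≤ 1) {d k : ℕ} (hd : 2 ≤ d) (hk : k ≤ d) (x y : V) :
    inversionConst d δ * chordKernel E δ x y
      ≤ ∫⁻ t in Metric.closedBall (0 : ℝ) (8 / δ),
          ‖1 - t‖ₑ ^ k * (‖t⁻¹‖ₑ ^ d * E.indicator 1 (AffineMap.lineMap x y t⁻¹)) := by
  by_cases h : ENNReal.ofReal δ ≤ chordRatio E x y
  · have hadj : chordKernel E δ x y = 1 := by simp [chordKernel, h]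
    rw [hadj, mul_one]
    exact inversionConst_le_setLIntegral (measurableSet_lineMap_preimage hE x y) hδ hδ1 h hd hk
  · simp [chordKernel, h]

variable [SecondCountableTopology V]

@[fun_prop]
theorem measurable_lineMap {β : Type*} [MeasurableSpace β] {f g : β → V} {c : β → ℝ}
    (hf : Measurable f) (hg : Measurable g) (hc : Measurable c) :
    Measurable fun b => AffineMap.lineMap (f b) (g b) (c b) := by
  simp only [AffineMap.lineMap_apply_module']
  fun_prop

theorem measurable_chordRatio (hE : MeasurableSet E) :
    Measurable (Function.uncurry (chordRatio E)) := by
  have h : Measurable fun q : (V × V) × ℝ => AffineMap.lineMap q.1.1 q.1.2 q.2 := by fun_prop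
  exact measurable_measure_prodMk_left (h hE)

theorem measurable_chordKernel (hE : MeasurableSet E) (δ : ℝ) :
    Measurable (Function.uncurry (chordKernel E δ)) :=
  measurable_one.indicator (measurableSet_le measurable_const (measurable_chordRatio hE))

end Chord

section Homothety

variable {V : Type*} [NormedAddCommGroup V] [NormedSpace ℝ V] [FiniteDimensional ℝ V]
  [MeasurableSpace V] [BorelSpace V] (μ : Measure V) [μ.IsAddHaarMeasure]

theorem enorm_pow_finrank_mul_lintegral_comp_smul {f : V → ℝ≥0∞} (hf : Measurable f) {r : ℝ}
    (hr : r ≠ 0) :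
    ‖r‖ₑ ^ Module.finrank ℝ V * ∫⁻ x, f (r • x) ∂μ = ∫⁻ x, f x ∂μ := by
  rw [← lintegral_map hf (measurable_const_smul r), Measure.map_addHaar_smul μ hr,
    lintegral_smul_measure, smul_eq_mul, ← mul_assoc, ← Real.enorm_eq_ofReal_abs, ← enorm_pow,
    ← enorm_mul, mul_inv_cancel₀ (pow_ne_zero _ hr), enorm_one, one_mul]

theorem enorm_pow_finrank_mul_setLIntegral_closedBall_le {f : V → ℝ≥0∞} (hf : Measurable f)
    {R R' c : ℝ} (hRR' : |c| * R ≤ R') :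
    ‖c‖ₑ ^ Module.finrank ℝ V * ∫⁻ x in Metric.closedBall 0 R, f (c • x) ∂μ
      ≤ ∫⁻ x in Metric.closedBall 0 R', f x ∂μ := by
  rcases eq_or_ne c 0 with rfl | hc
  · rcases subsingleton_or_nontrivial V with hV | hV
    · have hball : Metric.closedBall (0 : V) R ⊆ Metric.closedBall 0 R' := fun x _ => by
        simpa [Subsingleton.elim x 0] using hRR'
      simpa [Module.finrank_zero_of_subsingleton, Subsingleton.elim _ (0 : V)] using
        lintegral_mono_set (f := f) hball
    · simp [Module.finrank_pos.ne']
  rw [← lintegral_indicator measurableSet_closedBall,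
    ← lintegral_indicator measurableSet_closedBall,
    ← enorm_pow_finrank_mul_lintegral_comp_smul μ (hf.indicator measurableSet_closedBall) hc]
  gcongr with x
  by_cases hx : x ∈ Metric.closedBall 0 R
  · have hcx : c • x ∈ Metric.closedBall 0 R' := by
      rw [mem_closedBall_zero_iff] at hx ⊢
      rw [norm_smul, Real.norm_eq_abs]
      exact (mul_le_mul_of_nonneg_left hx (abs_nonneg c)).trans hRR'
    rw [Set.indicator_of_mem hx, Set.indicator_of_mem hcx]
  · simp [Set.indicator_of_notMem hx]

theorem enorm_inv_pow_finrank_mul_lintegral_lineMap_le [Nontrivial V] {f g : V → ℝ≥0∞}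
    (hf : Measurable f) (hg : Measurable g) (z : V) (t : ℝ) :
    ‖t⁻¹‖ₑ ^ Module.finrank ℝ V * ∫⁻ y, f (AffineMap.lineMap z y t⁻¹) * g y ∂μ
      ≤ ∫⁻ x, f x * g (AffineMap.lineMap z x t) ∂μ := by
  rcases eq_or_ne t 0 with rfl | ht
  · simp [Module.finrank_pos.ne']
  apply le_of_eq
  simp only [AffineMap.lineMap_apply_module']
  rw [← lintegral_add_right_eq_self _ z,
    ← lintegral_add_right_eq_self (fun x => f x * g (t • (x - z) + z)) z]
  simp only [add_sub_cancel_right]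
  rw [← enorm_pow_finrank_mul_lintegral_comp_smul μ (f := fun x => f (x + z) * g (t • x + z))
    (by fun_prop) (inv_ne_zero ht)]
  simp only [smul_inv_smul₀ ht]

theorem kernelOp_chordKernel_le {E : Set V}
    (hE : MeasurableSet E) {δ : ℝ} (hδ : 0 < δ) (hδ1 : δ ≤ 1)
    (hd : 2 ≤ Module.finrank ℝ V) {k : ℕ} (hk : k ≤ Module.finrank ℝ V)
    {g : V → ℝ≥0∞} (hg : Measurable g) (z : V) :
    inversionConst (Module.finrank ℝ V) δ * kernelOp (μ.restrict E) (chordKernel E δ) g z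
      ≤ ∫⁻ x in E, (∫⁻ t in Metric.closedBall (0 : ℝ) (8 / δ),
          ‖1 - t‖ₑ ^ k * E.indicator g (AffineMap.lineMap z x t)) ∂μ := by
  have : Nontrivial V := Module.nontrivial_of_finrank_pos (R := ℝ) (by lia)
  set d := Module.finrank ℝ V
  set I := Metric.closedBall (0 : ℝ) (8 / δ)
  have hgE : Measurable (E.indicator g) := hg.indicator hE
  have h1E : Measurable (E.indicator (1 : V → ℝ≥0∞)) := measurable_one.indicator hE
  calc inversionConst d δ * kernelOp (μ.restrict E) (chordKernel E δ) g z
      = ∫⁻ y, inversionConst d δ * chordKernel E δ z y * E.indicator g y ∂μ := by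
        simp_rw [kernelOp_restrict hE, mul_assoc]
        exact (lintegral_const_mul' _ _ (inversionConst_ne_top d δ)).symm
    _ ≤ ∫⁻ y, (∫⁻ t in I, ‖1 - t‖ₑ ^ k *
          (‖t⁻¹‖ₑ ^ d * E.indicator 1 (AffineMap.lineMap z y t⁻¹))) * E.indicator g y ∂μ := by
        gcongr with y
        exact inversionConst_mul_chordKernel_le hE hδ hδ1 hd hk z y
    _ = ∫⁻ y, (∫⁻ t in I, ‖1 - t‖ₑ ^ k * (‖t⁻¹‖ₑ ^ d *
          (E.indicator 1 (AffineMap.lineMap z y t⁻¹) * E.indicator g y))) ∂μ := by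
        refine lintegral_congr fun y => ?_
        rw [← lintegral_mul_const _ (by fun_prop)]
        simp_rw [mul_assoc]
    _ = ∫⁻ t in I, (∫⁻ y, ‖1 - t‖ₑ ^ k * (‖t⁻¹‖ₑ ^ d *
          (E.indicator 1 (AffineMap.lineMap z y t⁻¹) * E.indicator g y)) ∂μ) :=
        lintegral_lintegral_swap (Measurable.aemeasurable (by fun_prop))
    _ ≤ ∫⁻ t in I, (∫⁻ x in E, ‖1 - t‖ₑ ^ k * E.indicator g (AffineMap.lineMap z x t) ∂μ) := by
        refine lintegral_mono fun t => ?_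
        rw [lintegral_const_mul _ (by fun_prop), lintegral_const_mul _ (by fun_prop),
          lintegral_const_mul _ (by fun_prop), ← lintegral_indicator hE]
        gcongr
        refine (enorm_inv_pow_finrank_mul_lintegral_lineMap_le μ h1E hgE z t).trans_eq ?_
        refine lintegral_congr fun x => ?_
        by_cases hx : x ∈ E <;> simp [hx]
    _ = _ := lintegral_lintegral_swap (Measurable.aemeasurable (by fun_prop))

end Homothety

section SimplexIntegral

/-- The point with affine coordinates `b` in the (possibly degenerate) frame with origin `x₀` and
other vertices `x i`. -/
def framePoint {ι V : Type*} [Fintype ι] [AddCommGroup V] [Module ℝ V] (x₀ : V)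
    (x : ι → V) (b : ι → ℝ) : V :=
  x₀ + ∑ i, b i • (x i - x₀)

theorem lineMap_framePoint {V : Type*} [AddCommGroup V] [Module ℝ V] {k : ℕ} (x₀ : V)
    (x : Fin k → V) (b : Fin k → ℝ) (y : V) (t : ℝ) :
    AffineMap.lineMap (framePoint x₀ x b) y t
      = framePoint x₀ (Fin.cons y x : Fin (k + 1) → V)
          (Fin.cons t ((1 - t) • b) : Fin (k + 1) → ℝ) := by
  simp only [framePoint, AffineMap.lineMap_apply_module, Fin.sum_univ_succ, Fin.cons_zero,
    Fin.cons_succ, Pi.smul_apply, smul_eq_mul, mul_smul, ← Finset.smul_sum]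
  module

theorem lintegral_pi_cons {α : Type*} [MeasurableSpace α] (m : Measure α) [SigmaFinite m] {k : ℕ}
    {f : (Fin (k + 1) → α) → ℝ≥0∞} (hf : Measurable f) :
    ∫⁻ x, f x ∂(Measure.pi fun _ => m)
      = ∫⁻ a, (∫⁻ x, f (Fin.cons a x) ∂(Measure.pi fun _ : Fin k => m)) ∂m := by
  have h := (measurePreserving_piFinSuccAbove (fun _ : Fin (k + 1) => m) 0).symm
  rw [← h.lintegral_comp hf, lintegral_prod _ (by fun_prop)]
  exact lintegral_congr fun a => lintegral_congr fun x => congrArg f (Fin.insertNth_zero' a x)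

theorem setLIntegral_closedBall_cons {k : ℕ} {R : ℝ} (hR : 0 ≤ R)
    {f : (Fin (k + 1) → ℝ) → ℝ≥0∞} (hf : Measurable f) :
    ∫⁻ b in Metric.closedBall 0 R, f b
      = ∫⁻ t in Metric.closedBall 0 R, ∫⁻ b in Metric.closedBall 0 R, f (Fin.cons t b) := by
  have hrestrict : ∀ j : ℕ, (volume : Measure (Fin j → ℝ)).restrict (Metric.closedBall 0 R)
      = Measure.pi fun _ => volume.restrict (Metric.closedBall 0 R) := fun j => by
    rw [closedBall_pi _ hR, volume_pi, Measure.restrict_pi_pi]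
    rfl
  simp only [hrestrict]
  exact lintegral_pi_cons _ hf

variable {V : Type*} [NormedAddCommGroup V] [NormedSpace ℝ V] [MeasurableSpace V]

/-- The integral of `g` over the parallelotopes `framePoint x₀ x '' closedBall 0 R` (in
coordinates; the ball is a cube, for the sup norm), the vertices `x i` being independently
distributed according to `μ`. -/
def simplexIntegral (μ : Measure V) (x₀ : V) (k : ℕ) (R : ℝ) (g : V → ℝ≥0∞) : ℝ≥0∞ :=
  ∫⁻ x, (∫⁻ b in Metric.closedBall 0 R, g (framePoint x₀ x b))
    ∂(Measure.pi fun _ : Fin k => μ)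

theorem simplexIntegral_mono (μ : Measure V) (x₀ : V) (k : ℕ) (R : ℝ) {f g : V → ℝ≥0∞}
    (h : f ≤ g) : simplexIntegral μ x₀ k R f ≤ simplexIntegral μ x₀ k R g :=
  lintegral_mono fun _ => lintegral_mono fun _ => h _

variable [BorelSpace V] [SecondCountableTopology V]

@[fun_prop]
theorem measurable_framePoint {ι β : Type*} [Fintype ι] [MeasurableSpace β] (x₀ : V)
    {x : β → ι → V} {b : β → ι → ℝ} (hx : Measurable x) (hb : Measurable b) :
    Measurable fun q => framePoint x₀ (x q) (b q) := by
  unfold framePoint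
  fun_prop

theorem simplexIntegral_succ (μ : Measure V) [SigmaFinite μ] (x₀ : V) (k : ℕ) {R : ℝ}
    (hR : 0 ≤ R) {g : V → ℝ≥0∞} (hg : Measurable g) :
    simplexIntegral μ x₀ (k + 1) R g
      = ∫⁻ x, (∫⁻ y, (∫⁻ t in Metric.closedBall 0 R, ∫⁻ b in Metric.closedBall 0 R,
          g (framePoint x₀ (Fin.cons y x : Fin (k + 1) → V) (Fin.cons t b))) ∂μ)
          ∂(Measure.pi fun _ : Fin k => μ) := by
  rw [simplexIntegral, lintegral_pi_cons μ (by fun_prop), lintegral_lintegral_swap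
    (Measurable.aemeasurable (by fun_prop))]
  exact lintegral_congr fun x => lintegral_congr fun y =>
    setLIntegral_closedBall_cons hR (by fun_prop)

end SimplexIntegral

section Walks

variable {V : Type*} [NormedAddCommGroup V] [NormedSpace ℝ V] [FiniteDimensional ℝ V]
  [MeasurableSpace V] [BorelSpace V] (μ : Measure V) [μ.IsAddHaarMeasure] {E : Set V}

theorem inversionConst_mul_setLIntegral_kernelOp_le (hE : MeasurableSet E) {δ : ℝ}
    (hδ : 0 < δ) (hδ1 : δ ≤ 1) (hd : 2 ≤ Module.finrank ℝ V) {k : ℕ} (hk : k ≤ Module.finrank ℝ V)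
    {g : V → ℝ≥0∞} (hg : Measurable g) {R : ℝ} (hR : 0 ≤ R) (x₀ : V) (x : Fin k → V) :
    inversionConst (Module.finrank ℝ V) δ *
        ∫⁻ b in Metric.closedBall 0 R,
          kernelOp (μ.restrict E) (chordKernel E δ) g (framePoint x₀ x b)
      ≤ ∫⁻ y in E, (∫⁻ t in Metric.closedBall 0 (8 / δ),
          ∫⁻ b in Metric.closedBall 0 ((1 + 8 / δ) * R),
            E.indicator g (framePoint x₀ (Fin.cons y x : Fin (k + 1) → V) (Fin.cons t b))) ∂μ := by
  have : Measurable (E.indicator g) := hg.indicator hE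
  calc inversionConst (Module.finrank ℝ V) δ *
        ∫⁻ b in Metric.closedBall 0 R,
          kernelOp (μ.restrict E) (chordKernel E δ) g (framePoint x₀ x b)
      = ∫⁻ b in Metric.closedBall 0 R, inversionConst (Module.finrank ℝ V) δ *
          kernelOp (μ.restrict E) (chordKernel E δ) g (framePoint x₀ x b) :=
        (lintegral_const_mul' _ _ (inversionConst_ne_top _ _)).symm
    _ ≤ ∫⁻ b in Metric.closedBall 0 R, (∫⁻ y in E, (∫⁻ t in Metric.closedBall 0 (8 / δ),
          ‖1 - t‖ₑ ^ k * E.indicator g (AffineMap.lineMap (framePoint x₀ x b) y t)) ∂μ) :=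
        lintegral_mono fun b => kernelOp_chordKernel_le μ hE hδ hδ1 hd hk hg _
    _ = ∫⁻ y in E, (∫⁻ b in Metric.closedBall 0 R, ∫⁻ t in Metric.closedBall 0 (8 / δ),
          ‖1 - t‖ₑ ^ k * E.indicator g (AffineMap.lineMap (framePoint x₀ x b) y t)) ∂μ :=
        lintegral_lintegral_swap (Measurable.aemeasurable (by fun_prop))
    _ = ∫⁻ y in E, (∫⁻ t in Metric.closedBall 0 (8 / δ), ∫⁻ b in Metric.closedBall 0 R,
          ‖1 - t‖ₑ ^ k * E.indicator g (AffineMap.lineMap (framePoint x₀ x b) y t)) ∂μ :=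
        lintegral_congr fun y => lintegral_lintegral_swap (Measurable.aemeasurable (by fun_prop))
    _ ≤ _ := by
        refine lintegral_mono fun y => setLIntegral_mono' measurableSet_closedBall fun t ht => ?_
        have ht1 : |1 - t| * R ≤ (1 + 8 / δ) * R := by
          rw [mem_closedBall_zero_iff, Real.norm_eq_abs] at ht
          gcongr
          exact (abs_sub _ _).trans (by simpa using ht)
        simp_rw [lineMap_framePoint]
        rw [lintegral_const_mul _ (by fun_prop)]
        simpa only [Module.finrank_fin_fun] using
          enorm_pow_finrank_mul_setLIntegral_closedBall_le volume (f := fun b => E.indicator g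
            (framePoint x₀ (Fin.cons y x : Fin (k + 1) → V) (Fin.cons t b))) (by fun_prop) ht1

theorem inversionConst_mul_simplexIntegral_kernelOp_le (hE : MeasurableSet E) {δ : ℝ}
    (hδ : 0 < δ) (hδ1 : δ ≤ 1) (hd : 2 ≤ Module.finrank ℝ V) {k : ℕ} (hk : k ≤ Module.finrank ℝ V)
    {g : V → ℝ≥0∞} (hg : Measurable g) {R : ℝ} (hR : 1 ≤ R) (x₀ : V) :
    inversionConst (Module.finrank ℝ V) δ *
        simplexIntegral (μ.restrict E) x₀ k R (kernelOp (μ.restrict E) (chordKernel E δ) g)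
      ≤ simplexIntegral (μ.restrict E) x₀ (k + 1) ((1 + 8 / δ) * R) (E.indicator g) := by
  have hδ8 : 0 < 8 / δ := by positivity
  rw [simplexIntegral_succ _ _ _ (by positivity) (hg.indicator hE), simplexIntegral,
    ← lintegral_const_mul' _ _ (inversionConst_ne_top _ _)]
  gcongr with x
  refine (inversionConst_mul_setLIntegral_kernelOp_le μ hE hδ hδ1 hd hk hg
    (zero_le_one.trans hR) x₀ x).trans ?_
  gcongr
  nlinarith

theorem inversionConst_pow_mul_iterate_kernelOp_le
    (hE : MeasurableSet E) {δ : ℝ} (hδ : 0 < δ) (hδ1 : δ ≤ 1)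
    (hd : 2 ≤ Module.finrank ℝ V) {k : ℕ} (hk : k ≤ Module.finrank ℝ V) {g : V → ℝ≥0∞}
    (hg : Measurable g) {x₀ : V} (hx₀ : x₀ ∈ E) :
    inversionConst (Module.finrank ℝ V) δ ^ k *
        (kernelOp (μ.restrict E) (chordKernel E δ))^[k] g x₀
      ≤ simplexIntegral (μ.restrict E) x₀ k ((1 + 8 / δ) ^ k) (E.indicator g) := by
  induction k generalizing g with
  | zero => simp [simplexIntegral, framePoint, hx₀]
  | succ k ih =>
    have hTg := measurable_kernelOp (μ := μ.restrict E) (measurable_chordKernel hE δ) hg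
    have hR : 1 ≤ (1 + 8 / δ) ^ k := one_le_pow₀ (le_add_of_nonneg_right (by positivity))
    calc _ ≤ inversionConst (Module.finrank ℝ V) δ *
          simplexIntegral (μ.restrict E) x₀ k ((1 + 8 / δ) ^ k)
            (E.indicator (kernelOp (μ.restrict E) (chordKernel E δ) g)) := by
          rw [Function.iterate_succ_apply, pow_succ', mul_assoc]
          gcongr
          exact ih (Nat.le_of_succ_le hk) hTg
      _ ≤ inversionConst (Module.finrank ℝ V) δ *
          simplexIntegral (μ.restrict E) x₀ k ((1 + 8 / δ) ^ k)
            (kernelOp (μ.restrict E) (chordKernel E δ) g) := by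
          gcongr
          exact simplexIntegral_mono _ _ _ _ (Set.indicator_le_self _ _)
      _ ≤ _ := by
          rw [pow_succ']
          exact inversionConst_mul_simplexIntegral_kernelOp_le μ hE hδ hδ1 hd
            (Nat.le_of_succ_le hk) hg hR x₀

theorem exists_mem_pow_mul_pow_le_simplexIntegral [IsProbabilityMeasure (μ.restrict E)]
    (hE : MeasurableSet E) {δ : ℝ} (hδ : 0 < δ) (hδ1 : δ ≤ 1)
    (hd : 2 ≤ Module.finrank ℝ V) {k : ℕ} (hk : k ≤ Module.finrank ℝ V) :
    ∃ x₀ ∈ E, inversionConst (Module.finrank ℝ V) δ ^ k *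
        (∫⁻ x in E, (∫⁻ y in E, chordKernel E δ x y ∂μ) ∂μ) ^ 2 ^ k
      ≤ simplexIntegral (μ.restrict E) x₀ k ((1 + 8 / δ) ^ k) (E.indicator 1) := by
  set T := kernelOp (μ.restrict E) (chordKernel E δ)
  have hEnull : μ.restrict E Eᶜ = 0 := by simp [Measure.restrict_apply hE.compl]
  have hfinite : ∫⁻ x in E, T^[k] 1 x ∂μ ≠ ⊤ := by
    refine ne_top_of_le_ne_top ENNReal.one_ne_top ?_
    calc ∫⁻ x in E, T^[k] 1 x ∂μ ≤ ∫⁻ _ in E, 1 ∂μ :=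
          lintegral_mono (iterate_kernelOp_one_le_one (chordKernel_le_one E δ) k)
      _ = 1 := by simp only [lintegral_one, measure_univ]
  obtain ⟨x₀, hx₀, hle⟩ := exists_notMem_null_lintegral_le hfinite hEnull
  refine ⟨x₀, Set.notMem_compl_iff.1 hx₀, le_trans ?_
    (inversionConst_pow_mul_iterate_kernelOp_le μ hE hδ hδ1 hd hk measurable_one
      (Set.notMem_compl_iff.1 hx₀))⟩
  gcongr
  exact (pow_lintegral_le_lintegral_iterate_kernelOp (measurable_chordKernel hE δ)
    (chordKernel_comm hE δ) (chordKernel_le_one E δ) k).trans hle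

end Walks

section Parallelepiped

variable {ι V : Type*} [Fintype ι] [NormedAddCommGroup V] [NormedSpace ℝ V]

theorem isCompact_parallelepiped (v : ι → V) : IsCompact (parallelepiped v) :=
  isCompact_Icc.image (by fun_prop)

variable [FiniteDimensional ℝ V] [MeasurableSpace V] [BorelSpace V]
  (μ : Measure V) [μ.IsAddHaarMeasure]

theorem addHaar_image_linearCombination (hcard : Fintype.card ι = Module.finrank ℝ V)
    (v : ι → V) (s : Set (ι → ℝ)) :
    μ (Fintype.linearCombination ℝ v '' s) = μ (parallelepiped v) * volume s := by
  by_cases hv : LinearIndependent ℝ v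
  · let b := basisOfLinearIndependentOfCardEqFinrank' v hv hcard
    set L := b.equivFun.symm.toContinuousLinearEquiv
    have hL : ∀ t, Fintype.linearCombination ℝ v '' t = L '' t := fun t =>
      Set.image_congr fun c _ => by
        simp [L, b, Module.Basis.equivFun_symm_apply, Fintype.linearCombination_apply]
    have hmap : ∀ t, μ (L '' t) = μ.map L.symm t := fun t => by
      rw [show ⇑L.symm = L.symm.toHomeomorph.toMeasurableEquiv from rfl, MeasurableEquiv.map_apply]
      exact congrArg μ (L.symm.symm.image_eq_preimage_symm t)
    have hpar : parallelepiped v = L '' Set.Icc 0 1 := hL _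
    rw [hL, hpar, hmap, hmap, Measure.addHaarMeasure_unique (μ.map L.symm)
      (TopologicalSpace.PositiveCompacts.piIcc01 ι), addHaarMeasure_eq_volume_pi]
    simp [Real.volume_Icc_pi]
  · have hspan : Submodule.span ℝ (Set.range v) ≠ ⊤ := fun h =>
      hv (linearIndependent_of_top_le_span_of_card_eq_finrank h.ge hcard)
    have hnull : ∀ t, μ (Fintype.linearCombination ℝ v '' t) = 0 := fun t =>
      measure_mono_null (by
        rintro _ ⟨c, -, rfl⟩
        rw [← Fintype.range_linearCombination]
        exact LinearMap.mem_range_self _ c) (Measure.addHaar_submodule μ _ hspan)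
    rw [hnull, show parallelepiped v = Fintype.linearCombination ℝ v '' Set.Icc 0 1 from rfl,
      hnull, zero_mul]

theorem addHaar_parallelepiped_update [DecidableEq ι]
    (hcard : Fintype.card ι = Module.finrank ℝ V) (u : ι → V) (i : ι) (c : ι → ℝ) :
    μ (parallelepiped (Function.update u i (∑ j, c j • u j)))
      = ‖c i‖ₑ * μ (parallelepiped u) := by
  set M := Matrix.toLin' ((1 : Matrix ι ι ℝ).updateCol i c)
  have hdet : LinearMap.det M = c i := by
    rw [LinearMap.det_toLin', ← Matrix.cramer_apply, Matrix.cramer_one, Module.End.one_apply]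
  have hcomp : Fintype.linearCombination ℝ (Function.update u i (∑ j, c j • u j))
      = Fintype.linearCombination ℝ u ∘ₗ M := by
    ext j
    by_cases hj : j = i
    · subst hj
      simp [M, Fintype.linearCombination_apply]
    · simp [M, Fintype.linearCombination_apply, hj, Matrix.one_apply]
  have himage : parallelepiped (Function.update u i (∑ j, c j • u j))
      = Fintype.linearCombination ℝ u '' (M '' Set.Icc 0 1) := by
    rw [← Set.image_comp, ← LinearMap.coe_comp, ← hcomp]
    rfl
  rw [himage, addHaar_image_linearCombination μ hcard, Measure.addHaar_image_linearMap, hdet,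
    Real.volume_Icc_pi, mul_comm, ← Real.enorm_eq_ofReal_abs]
  simp

theorem continuous_addHaar_parallelepiped (hcard : Fintype.card ι = Module.finrank ℝ V) :
    Continuous fun v : ι → V => μ (parallelepiped v) := by
  classical
  set e := (Module.finBasis ℝ V).reindex (finCongr hcard.symm |>.trans (Fintype.equivFin ι).symm)
  have hdet : Continuous fun v : ι → V => e.det v := by
    simp only [Module.Basis.det_apply]
    refine Continuous.matrix_det (continuous_pi fun i => continuous_pi fun j => ?_)
    exact (e.coord i).continuous_of_finiteDimensional.comp (continuous_apply j)
  have hscale : ∀ v : ι → V,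
      μ (parallelepiped v) = μ (parallelepiped e) * ENNReal.ofReal |e.det v| := fun v => by
    conv_lhs => rw [Measure.addHaarMeasure_unique μ e.parallelepiped, ← Module.Basis.addHaar_def]
    rw [Measure.smul_apply, Measure.addHaar_parallelepiped, smul_eq_mul, e.coe_parallelepiped]
  rw [funext hscale]
  exact (ENNReal.continuous_const_mul (isCompact_parallelepiped e).measure_ne_top).comp
    (ENNReal.continuous_ofReal.comp hdet.abs)

end Parallelepiped

section SmallParallelepiped

theorem exists_sum_smul_eq_smul {ι K V : Type*} [Fintype ι] [Field K] [AddCommGroup V]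
    [Module K V] [Module.Finite K V] (hcard : Fintype.card ι = Module.finrank K V) {w : V}
    (hw : w ≠ 0) (v : ι → V) : ∃ (a : ι → K) (s : K), a ≠ 0 ∧ ∑ i, a i • v i = s • w := by
  by_cases hv : LinearIndependent K v
  · have hspan : ⊤ ≤ Submodule.span K (Set.range v) :=
      (hv.span_eq_top_of_card_eq_finrank' hcard).ge
    obtain ⟨a, ha⟩ := (Submodule.mem_span_range_iff_exists_fun K).1 (hspan (x := w) trivial)
    refine ⟨a, 1, ?_, by rw [ha, one_smul]⟩
    rintro rfl
    simp_all
  · obtain ⟨a, ha, i, hi⟩ := Fintype.not_linearIndependent_iff.1 hv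
    exact ⟨a, 0, Function.ne_iff.2 ⟨i, hi⟩, by rw [ha, zero_smul]⟩

theorem exists_eq_sum_smul_update {ι K V : Type*} [Fintype ι] [DecidableEq ι] [Field K]
    [LinearOrder K] [IsStrictOrderedRing K] [AddCommGroup V] [Module K V] [Module.Finite K V]
    (hcard : Fintype.card ι = Module.finrank K V) {w : V} (hw : w ≠ 0) (v : ι → V) :
    ∃ (i : ι) (c : ι → K), (∀ j ≠ i, |c j| ≤ 1) ∧ v i = ∑ j, c j • Function.update v i w j := by
  obtain ⟨a, s, ha, hsum⟩ := exists_sum_smul_eq_smul hcard hw v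
  obtain ⟨j₀, hj₀⟩ := Function.ne_iff.1 ha
  have : Nonempty ι := ⟨j₀⟩
  obtain ⟨i, hmax⟩ := Finite.exists_max fun j => |a j|
  have hai : 0 < |a i| := (abs_pos.2 hj₀).trans_le (hmax j₀)
  have hne : a i ≠ 0 := abs_pos.1 hai
  refine ⟨i, Function.update (fun j => -(a j / a i)) i (s / a i), fun j hj => ?_, ?_⟩
  · rw [Function.update_of_ne hj, abs_neg, abs_div]
    exact div_le_one_of_le₀ (hmax j) hai.le
  · have hother : ∀ j ∈ ({i}ᶜ : Finset ι),
        Function.update (fun j => -(a j / a i)) i (s / a i) j • Function.update v i w j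
          = (-(a i)⁻¹) • a j • v j := fun j hj => by
      have hji : j ≠ i := by simpa using hj
      rw [Function.update_of_ne hji, Function.update_of_ne hji, smul_smul]
      ring_nf
    rw [Fintype.sum_eq_add_sum_compl i] at hsum ⊢
    rw [Finset.sum_congr rfl hother, ← Finset.smul_sum, eq_sub_of_add_eq' hsum]
    simp only [Function.update_self]
    match_scalars <;> field_simp
    ring

theorem volume_setOf_abs_le_one_and_enorm_le {ι : Type*} [Fintype ι] (i : ι) (r : ℝ≥0∞) :
    volume {c : ι → ℝ | (∀ j ≠ i, |c j| ≤ 1) ∧ ‖c i‖ₑ ≤ r} = 2 ^ Fintype.card ι * r := by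
  classical
  have hbox : {c : ι → ℝ | (∀ j ≠ i, |c j| ≤ 1) ∧ ‖c i‖ₑ ≤ r}
      = Set.univ.pi fun j => Metric.closedEBall 0 (if j = i then r else 1) := by
    ext c
    simp only [Set.mem_ofPred_eq, Set.mem_univ_pi, Metric.mem_closedEBall, edist_zero_right]
    constructor
    · rintro ⟨h, hi⟩ j
      split_ifs with hj
      · rwa [hj]
      · simpa [Real.enorm_eq_ofReal_abs] using h j hj
    · exact fun h => ⟨fun j hj => by simpa [hj, Real.enorm_eq_ofReal_abs] using h j,
        by simpa using h i⟩
  rw [hbox, volume_pi_pi]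
  simp only [Real.volume_closedEBall, Finset.prod_mul_distrib]
  simp

theorem pi_le_of_forall_update_le {ι α : Type*} [Fintype ι] [DecidableEq ι] [MeasurableSpace α]
    (ρ : Measure α) [IsProbabilityMeasure ρ] {S : Set (ι → α)} (hS : MeasurableSet S) (i : ι)
    {C : ℝ≥0∞} (h : ∀ x, ρ {y | Function.update x i y ∈ S} ≤ C) :
    (Measure.pi fun _ => ρ) S ≤ C := by
  rw [← lintegral_indicator_one hS]
  refine (lintegral_le_of_lmarginal_le (μ := fun _ => ρ) {i} (g := fun _ => C)
    (measurable_one.indicator hS) measurable_const fun x => ?_).trans (by simp)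
  rw [lmarginal_singleton, lmarginal_singleton, lintegral_const, measure_univ, mul_one]
  exact (lintegral_indicator_one (measurable_update x hS)).trans_le (h x)

variable {ι V : Type*} [Fintype ι] [NormedAddCommGroup V] [NormedSpace ℝ V]

theorem measurableSet_setOf_eq_sum_smul_update [DecidableEq ι] [FiniteDimensional ℝ V]
    [MeasurableSpace V] [BorelSpace V] (i : ι) (w : V) :
    MeasurableSet {v : ι → V |
      ∃ c : ι → ℝ, (∀ j ≠ i, |c j| ≤ 1) ∧ v i = ∑ j, c j • Function.update v i w j} := by
  have : Continuous fun p : (ι → V) × (ι → ℝ) => Function.update p.1 i w :=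
    continuous_fst.update i continuous_const
  have hclosed : IsClosed {p : (ι → V) × (ι → ℝ) |
      (∀ j ≠ i, |p.2 j| ≤ 1) ∧ p.1 i = ∑ j, p.2 j • Function.update p.1 i w j} := by
    simp only [Set.ofPred_and, Set.ofPred_forall]
    refine IsClosed.inter ?_ (isClosed_eq (by fun_prop) (by fun_prop))
    exact isClosed_iInter fun j => isClosed_iInter fun _ => isClosed_le (by fun_prop) (by fun_prop)
  obtain ⟨K, hK, hUnion⟩ :=
    (isSigmaCompact_univ.of_isClosed_subset hclosed (Set.subset_univ _)).image continuous_fst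
  convert MeasurableSet.iUnion fun n => (hK n).measurableSet
  rw [hUnion]
  ext v
  simp

variable [MeasurableSpace V] [BorelSpace V] [FiniteDimensional ℝ V] (μ : Measure V)
  [μ.IsAddHaarMeasure]

theorem addHaar_setOf_update_le [DecidableEq ι] (hcard : Fintype.card ι = Module.finrank ℝ V)
    (u : ι → V) (i : ι) (η : ℝ≥0∞) :
    μ {y | μ (parallelepiped (Function.update u i y)) ≤ η ∧
        ∃ c : ι → ℝ, (∀ j ≠ i, |c j| ≤ 1) ∧ y = ∑ j, c j • u j}
      ≤ 2 ^ Fintype.card ι * η := by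
  set m := μ (parallelepiped u)
  have hm : m ≠ ⊤ := (isCompact_parallelepiped u).measure_ne_top
  set B : Set (ι → ℝ) := {c | (∀ j ≠ i, |c j| ≤ 1) ∧ ‖c i‖ₑ * m ≤ η}
  calc _ ≤ μ (Fintype.linearCombination ℝ u '' B) := by
        refine measure_mono ?_
        rintro _ ⟨hη, c, hc, rfl⟩
        rw [addHaar_parallelepiped_update μ hcard] at hη
        exact ⟨c, ⟨hc, hη⟩, rfl⟩
    _ = m * volume B := addHaar_image_linearCombination μ hcard u B
    _ ≤ 2 ^ Fintype.card ι * η := by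
        rcases eq_or_ne m 0 with h0 | h0
        · simp [h0]
        · simp only [B, ← ENNReal.le_div_iff_mul_le (Or.inl h0) (Or.inl hm)]
          rw [volume_setOf_abs_le_one_and_enorm_le, mul_left_comm, ENNReal.mul_div_cancel h0 hm]

theorem pi_setOf_addHaar_parallelepiped_le [Nontrivial V]
    (hcard : Fintype.card ι = Module.finrank ℝ V) {ρ : Measure V} [IsProbabilityMeasure ρ]
    (hρ : ρ ≤ μ) (η : ℝ≥0∞) :
    (Measure.pi fun _ : ι => ρ) {v | μ (parallelepiped v) ≤ η}
      ≤ Fintype.card ι * (2 ^ Fintype.card ι * η) := by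
  classical
  obtain ⟨w, hw⟩ := exists_ne (0 : V)
  set D : ι → Set (ι → V) := fun i =>
    {v | ∃ c : ι → ℝ, (∀ j ≠ i, |c j| ≤ 1) ∧ v i = ∑ j, c j • Function.update v i w j}
  have hsmall : MeasurableSet {v : ι → V | μ (parallelepiped v) ≤ η} :=
    (isClosed_le (continuous_addHaar_parallelepiped μ hcard) continuous_const).measurableSet
  have hcover : {v | μ (parallelepiped v) ≤ η} ⊆ ⋃ i, {v | μ (parallelepiped v) ≤ η} ∩ D i :=
    fun v hv => Set.mem_iUnion.2 ((exists_eq_sum_smul_update hcard hw v).imp fun i hi => ⟨hv, hi⟩)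
  calc _ ≤ ∑ i, (Measure.pi fun _ : ι => ρ) ({v | μ (parallelepiped v) ≤ η} ∩ D i) :=
        (measure_mono hcover).trans (measure_iUnion_fintype_le _ _)
    _ ≤ ∑ _i : ι, 2 ^ Fintype.card ι * η := by
        gcongr with i
        refine pi_le_of_forall_update_le ρ
          (hsmall.inter (measurableSet_setOf_eq_sum_smul_update i w)) i fun v => ?_
        refine (hρ _).trans (le_trans (measure_mono fun y hy => ?_)
          (addHaar_setOf_update_le μ hcard (Function.update v i w) i η))
        simpa [D, Function.update_idem] using hy
    _ = _ := by simp

theorem pi_setOf_addHaar_parallelepiped_sub_le [Nontrivial V]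
    (hcard : Fintype.card ι = Module.finrank ℝ V) {ρ : Measure V} [IsProbabilityMeasure ρ]
    (hρ : ρ ≤ μ) (x₀ : V) (η : ℝ≥0∞) :
    (Measure.pi fun _ : ι => ρ) {x | μ (parallelepiped fun i => x i - x₀) ≤ η}
      ≤ Fintype.card ι * (2 ^ Fintype.card ι * η) := by
  have hmeas : Measurable fun y : V => y - x₀ := by fun_prop
  have hρ' : ρ.map (· - x₀) ≤ μ :=
    (Measure.map_mono hρ hmeas).trans (measurePreserving_sub_right μ x₀).map_eq.le
  have : IsProbabilityMeasure (ρ.map (· - x₀)) :=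
    Measure.isProbabilityMeasure_map hmeas.aemeasurable
  have hpi := measurePreserving_pi (fun _ : ι => ρ) (fun _ => ρ.map (· - x₀))
    fun _ => hmeas.measurePreserving ρ
  have hsmall : MeasurableSet {v : ι → V | μ (parallelepiped v) ≤ η} :=
    (isClosed_le (continuous_addHaar_parallelepiped μ hcard) continuous_const).measurableSet
  exact (hpi.measure_preimage hsmall.nullMeasurableSet).trans_le
    (pi_setOf_addHaar_parallelepiped_le μ hcard hρ' η)

end SmallParallelepiped

section ConvexSet

theorem exists_notMem_lt_of_add_mul_lt_lintegral {α : Type*} [MeasurableSpace α] {ρ : Measure α}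
    [IsProbabilityMeasure ρ] {f : α → ℝ≥0∞} {a L : ℝ≥0∞} (hf : ∀ x, f x ≤ L) {S : Set α}
    (h : a + L * ρ S < ∫⁻ x, f x ∂ρ) : ∃ x ∉ S, a < f x := by
  by_contra! hle
  refine h.not_ge ?_
  calc ∫⁻ x, f x ∂ρ ≤ ∫⁻ x, a + S.indicator (fun _ => L) x ∂ρ := by
        gcongr with x
        by_cases hx : x ∈ S
        · simpa [hx] using le_add_left (hf x)
        · simpa [hx] using hle x hx
    _ = a + ∫⁻ x, S.indicator (fun _ => L) x ∂ρ := by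
        rw [lintegral_add_left measurable_const, lintegral_const, measure_univ, mul_one]
    _ ≤ a + L * ρ S := by
        gcongr
        exact lintegral_indicator_const_le S L

theorem exists_half_add_mul_lt {q M : ℝ≥0∞} (hq : q ≠ 0) (hq' : q ≠ ⊤) (hM : M ≠ ⊤) :
    ∃ η : ℝ≥0∞, η ≠ 0 ∧ q / 2 + M * η < q := by
  obtain ⟨η, hη, hlt⟩ := ENNReal.exists_nnreal_pos_mul_lt hM (ENNReal.half_pos hq).ne'
  refine ⟨η, by exact_mod_cast hη.ne', ?_⟩
  calc q / 2 + M * η < q / 2 + q / 2 := by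
        rw [mul_comm M]
        exact (ENNReal.add_lt_add_iff_left (by finiteness)).2 hlt
    _ = q := ENNReal.add_halves q

variable {ι V : Type*} [Fintype ι] [NormedAddCommGroup V] [NormedSpace ℝ V]

open scoped Pointwise in
theorem image_framePoint (x₀ : V) (x : ι → V) (s : Set (ι → ℝ)) :
    framePoint x₀ x '' s = x₀ +ᵥ Fintype.linearCombination ℝ (fun i => x i - x₀) '' s :=
  Set.image_comp (x₀ +ᵥ ·) (Fintype.linearCombination ℝ fun i => x i - x₀) s

theorem convex_image_framePoint (x₀ : V) (x : ι → V) {s : Set (ι → ℝ)} (hs : Convex ℝ s) :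
    Convex ℝ (framePoint x₀ x '' s) := by
  simpa only [image_framePoint] using (hs.linear_image _).vadd x₀

variable [FiniteDimensional ℝ V] [MeasurableSpace V] [BorelSpace V]
  (μ : Measure V) [μ.IsAddHaarMeasure]

theorem addHaar_image_framePoint (hcard : Fintype.card ι = Module.finrank ℝ V) (x₀ : V)
    (x : ι → V) (s : Set (ι → ℝ)) :
    μ (framePoint x₀ x '' s) = μ (parallelepiped fun i => x i - x₀) * volume s := by
  rw [image_framePoint, measure_vadd, addHaar_image_linearCombination μ hcard]

theorem addHaar_inter_image_framePoint (hcard : Fintype.card ι = Module.finrank ℝ V) (E : Set V)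
    (x₀ : V) (x : ι → V) (s : Set (ι → ℝ)) :
    μ (E ∩ framePoint x₀ x '' s)
      = μ (parallelepiped fun i => x i - x₀) * volume (s ∩ framePoint x₀ x ⁻¹' E) := by
  rw [Set.inter_comm, ← Set.image_inter_preimage, addHaar_image_framePoint μ hcard]

theorem exists_lt_addHaar_parallelepiped_and_lt_volume {E : Set V} (hE : MeasurableSet E)
    [IsProbabilityMeasure (μ.restrict E)] (hd : 0 < Module.finrank ℝ V) (x₀ : V) {R : ℝ}
    {a η : ℝ≥0∞}
    (h : a + volume (Metric.closedBall (0 : Fin (Module.finrank ℝ V) → ℝ) R) *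
        (Module.finrank ℝ V * (2 ^ Module.finrank ℝ V * η))
      < simplexIntegral (μ.restrict E) x₀ (Module.finrank ℝ V) R (E.indicator 1)) :
    ∃ x : Fin (Module.finrank ℝ V) → V, η < μ (parallelepiped fun i => x i - x₀) ∧
      a < volume (Metric.closedBall 0 R ∩ framePoint x₀ x ⁻¹' E) := by
  have : Nontrivial V := Module.nontrivial_of_finrank_pos (R := ℝ) hd
  have hcapture : ∀ x : Fin (Module.finrank ℝ V) → V,
      ∫⁻ b in Metric.closedBall 0 R, E.indicator 1 (framePoint x₀ x b)
        = volume (Metric.closedBall 0 R ∩ framePoint x₀ x ⁻¹' E) := fun x => by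
    have hpre : MeasurableSet (framePoint x₀ x ⁻¹' E) :=
      (show Measurable (framePoint x₀ x) by fun_prop) hE
    rw [Set.inter_comm, ← Measure.restrict_apply hpre, ← lintegral_indicator_one hpre]
    rfl
  have hsmall := pi_setOf_addHaar_parallelepiped_sub_le μ (Fintype.card_fin (Module.finrank ℝ V))
    (μ.restrict_le_self (s := E)) x₀ η
  rw [Fintype.card_fin] at hsmall
  simp only [simplexIntegral, hcapture] at h
  obtain ⟨x, hx, hax⟩ := exists_notMem_lt_of_add_mul_lt_lintegral
    (fun x => measure_mono Set.inter_subset_left) ((add_le_add_right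
      (mul_le_mul_right hsmall _) a).trans_lt h)
  exact ⟨x, not_le.1 hx, hax⟩

theorem exists_convex_le_addHaar_inter (hd : 2 ≤ Module.finrank ℝ V) {δ : ℝ}
    (hδ : 0 < δ) (hδ1 : δ ≤ 1) {p : ℝ≥0∞} (hp : p ≠ 0) (hp' : p ≠ ⊤) :
    ∃ c : ℝ≥0∞, c ≠ 0 ∧ ∀ (μ : Measure V) [μ.IsAddHaarMeasure] (E : Set V), MeasurableSet E →
      μ E = 1 → p ≤ ∫⁻ x in E, (∫⁻ y in E, chordKernel E δ x y ∂μ) ∂μ →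
      ∃ F, Convex ℝ F ∧ c ≤ μ (E ∩ F) ∧ c * μ F ≤ 1 := by
  set d := Module.finrank ℝ V
  set B := Metric.closedBall (0 : Fin d → ℝ) ((1 + 8 / δ) ^ d)
  set q := inversionConst d δ ^ d * p ^ 2 ^ d
  set L := volume B
  have hL : L ≠ ⊤ := (isCompact_closedBall _ _).measure_ne_top
  have hq : q ≠ 0 := mul_ne_zero (pow_ne_zero _ (inversionConst_pos d hδ).ne') (pow_ne_zero _ hp)
  have hq' : q ≠ ⊤ := ENNReal.mul_ne_top (ENNReal.pow_ne_top (inversionConst_ne_top d δ))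
    (ENNReal.pow_ne_top hp')
  obtain ⟨η, hη, hηq⟩ := exists_half_add_mul_lt hq hq'
    (by finiteness : L * (d * 2 ^ d) ≠ ⊤)
  rw [mul_assoc, mul_assoc] at hηq
  have hc : 0 < min (η * (q / 2)) (q / 2 / L) :=
    lt_min (ENNReal.mul_pos hη (ENNReal.half_pos hq).ne')
      (ENNReal.div_pos (ENNReal.half_pos hq).ne' hL)
  refine ⟨min (η * (q / 2)) (q / 2 / L), hc.ne', fun μ _ E hE hE1 hpE => ?_⟩
  have : IsProbabilityMeasure (μ.restrict E) := ⟨by rw [Measure.restrict_apply_univ, hE1]⟩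
  obtain ⟨x₀, -, hx₀⟩ := exists_mem_pow_mul_pow_le_simplexIntegral μ hE hδ hδ1 hd le_rfl
  have hq_le : q ≤ simplexIntegral (μ.restrict E) x₀ d ((1 + 8 / δ) ^ d) (E.indicator 1) :=
    le_trans (mul_le_mul_right (pow_le_pow_left₀ zero_le hpE _) _) hx₀
  obtain ⟨x, hpar, hcapture⟩ := exists_lt_addHaar_parallelepiped_and_lt_volume μ hE (by lia) x₀
    (hηq.trans_le hq_le)
  set m := μ (parallelepiped fun i => x i - x₀)
  have hmq : m * (q / 2) ≤ μ (E ∩ framePoint x₀ x '' B) := by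
    rw [addHaar_inter_image_framePoint μ (Fintype.card_fin d)]
    gcongr
  refine ⟨framePoint x₀ x '' B, convex_image_framePoint x₀ x (convex_closedBall 0 _), ?_, ?_⟩
  · calc min (η * (q / 2)) (q / 2 / L) ≤ η * (q / 2) := min_le_left _ _
      _ ≤ m * (q / 2) := by gcongr
      _ ≤ _ := hmq
  · calc min (η * (q / 2)) (q / 2 / L) * μ (framePoint x₀ x '' B)
        ≤ q / 2 / L * (m * L) := by
          rw [addHaar_image_framePoint μ (Fintype.card_fin d)]
          gcongr
          exact min_le_right _ _
      _ = m * (L * (q / 2 / L)) := by ring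
      _ ≤ m * (q / 2) := by gcongr; exact ENNReal.mul_div_le
      _ ≤ μ E := hmq.trans (measure_mono Set.inter_subset_left)
      _ = 1 := hE1

end ConvexSet

section Scaling

variable {V : Type*} [NormedAddCommGroup V] [NormedSpace ℝ V] [FiniteDimensional ℝ V]
  [MeasurableSpace V] [BorelSpace V]

theorem exists_mem_Ioo_ofReal_le {c : ℝ≥0∞} (hc : c ≠ 0) :
    ∃ c' ∈ Set.Ioo (0 : ℝ) 1, ENNReal.ofReal c' ≤ c := by
  obtain ⟨c', h0, hc'⟩ := ENNReal.lt_iff_exists_nnreal_btwn.1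
    (lt_min (pos_iff_ne_zero.2 hc) zero_lt_one)
  exact ⟨c', ⟨by exact_mod_cast h0, by exact_mod_cast hc'.trans_le (min_le_right c 1)⟩,
    by simpa using (hc'.trans_le (min_le_left c 1)).le⟩

theorem lintegral_lintegral_chordKernel_smul (μ : Measure V) [SFinite μ] (r : ℝ≥0∞) {E : Set V}
    (hE : MeasurableSet E) (δ : ℝ) :
    ∫⁻ x in E, (∫⁻ y in E, chordKernel E δ x y ∂r • μ) ∂r • μ
      = r ^ 2 * ∫⁻ x in E, (∫⁻ y in E, chordKernel E δ x y ∂μ) ∂μ := by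
  have hm : Measurable fun x => ∫⁻ y in E, chordKernel E δ x y ∂μ :=
    (measurable_chordKernel hE δ).lintegral_prod_right'
  simp only [Measure.restrict_smul, lintegral_smul_measure, smul_eq_mul]
  rw [lintegral_const_mul _ hm, sq, mul_assoc]

theorem exists_convex_comparable_of_le_lintegral_chordKernel (hd : 2 ≤ Module.finrank ℝ V) {δ : ℝ}
    (hδ : 0 < δ) (hδ1 : δ ≤ 1) {p : ℝ≥0∞} (hp : p ≠ 0) (hp' : p ≠ ⊤) :
    ∃ c' ∈ Set.Ioo (0 : ℝ) 1, ∀ (μ : Measure V) [μ.IsAddHaarMeasure] (E : Set V),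
      MeasurableSet E → 0 < μ E → μ E < ⊤ →
      p * μ E ^ 2 ≤ ∫⁻ x in E, (∫⁻ y in E, chordKernel E δ x y ∂μ) ∂μ →
      ∃ F, Convex ℝ F ∧ ENNReal.ofReal c' * μ E ≤ μ F ∧ μ F ≤ ENNReal.ofReal c'⁻¹ * μ E ∧
        ENNReal.ofReal c' * μ E ≤ μ (E ∩ F) := by
  obtain ⟨c, hc, hF⟩ := exists_convex_le_addHaar_inter hd hδ hδ1 hp hp'
  obtain ⟨c', hc', hcc'⟩ := exists_mem_Ioo_ofReal_le hc
  refine ⟨c', hc', fun μ _ E hE hE0 hEt hpE => ?_⟩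
  have hcancel : (μ E)⁻¹ * μ E = 1 := ENNReal.inv_mul_cancel hE0.ne' hEt.ne
  have : ((μ E)⁻¹ • μ).IsAddHaarMeasure := Measure.IsAddHaarMeasure.smul μ
    (ENNReal.inv_ne_zero.2 hEt.ne) (ENNReal.inv_ne_top.2 hE0.ne')
  obtain ⟨F, hconv, hinter, hvol⟩ := hF ((μ E)⁻¹ • μ) E hE hcancel <| by
    calc p = (μ E)⁻¹ ^ 2 * (p * μ E ^ 2) := by
          rw [mul_left_comm, ← mul_pow, hcancel, one_pow, mul_one]
      _ ≤ _ := by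
          rw [lintegral_lintegral_chordKernel_smul μ _ hE]
          gcongr
  have hEF : ENNReal.ofReal c' * μ E ≤ μ (E ∩ F) := by
    rw [← ENNReal.le_div_iff_mul_le (.inl hE0.ne') (.inl hEt.ne), ENNReal.div_eq_inv_mul]
    exact hcc'.trans hinter
  refine ⟨F, hconv, hEF.trans (measure_mono Set.inter_subset_right), ?_, hEF⟩
  rw [ENNReal.ofReal_inv_of_pos hc'.1, ← ENNReal.div_eq_inv_mul,
    ENNReal.le_div_iff_mul_le (.inl (by simpa using hc'.1)) (.inl ENNReal.ofReal_ne_top), mul_comm]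
  calc ENNReal.ofReal c' * μ F ≤ c * μ F := by gcongr
    _ = μ E * ((μ E)⁻¹ * (c * μ F)) := by
        rw [← mul_assoc, mul_comm (μ E), hcancel, one_mul]
    _ = μ E * (c * ((μ E)⁻¹ * μ F)) := by rw [mul_left_comm c]
    _ ≤ μ E * 1 := by gcongr; exact hvol
    _ = μ E := mul_one _

end Scaling

section LinearSets

theorem pow_mul_volume_le_mul_setLIntegral {S : Set ℝ} {s D : ℝ≥0∞}
    (h : ∀ r ∈ S, s ≤ D * ‖r‖ₑ) (k : ℕ) :
    s ^ k * volume S ≤ D ^ k * ∫⁻ r in S, ‖r‖ₑ ^ k := by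
  calc s ^ k * volume S = ∫⁻ _ in S, s ^ k := (setLIntegral_const S (s ^ k)).symm
    _ ≤ ∫⁻ r in S, D ^ k * ‖r‖ₑ ^ k :=
        setLIntegral_mono (by fun_prop) fun r hr => by rw [← mul_pow]; gcongr; exact h r hr
    _ = D ^ k * ∫⁻ r in S, ‖r‖ₑ ^ k := lintegral_const_mul _ (by fun_prop)

theorem le_two_mul_volume_diff_eball {A : Set ℝ} {s : ℝ≥0∞} (hs : s ≤ volume A) (hs' : s ≠ ⊤) :
    s ≤ 2 * volume (A \ Metric.eball 0 (s / 4)) := by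
  have hball : volume (Metric.eball (0 : ℝ) (s / 4)) = s / 2 := by
    rw [Real.volume_eball, ← mul_div_assoc, show (4 : ℝ≥0∞) = 2 * 2 by norm_num,
      ENNReal.mul_div_mul_left _ _ two_ne_zero ENNReal.ofNat_ne_top]
  calc s = 2 * (s - s / 2) := by
        rw [ENNReal.sub_half hs', ENNReal.mul_div_cancel two_ne_zero ENNReal.ofNat_ne_top]
    _ ≤ 2 * (volume A - volume (Metric.eball (0 : ℝ) (s / 4))) := by rw [hball]; gcongr
    _ ≤ _ := by gcongr; exact le_measure_sdiff

theorem pow_succ_le_setLIntegral_add_setLIntegral {A : Set ℝ} {s : ℝ≥0∞} (hs : s ≤ volume A)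
    (hs' : s ≠ ⊤) (D : ℝ≥0∞) (k : ℕ) :
    s ^ (k + 1) ≤ 2 * 4 ^ k * (∫⁻ r in A ∩ {r | D * ‖r‖ₑ ≤ volume A}, ‖r‖ₑ ^ k)
      + 2 * D ^ k * ∫⁻ r in A, ‖r‖ₑ ^ k := by
  set G := {r : ℝ | D * ‖r‖ₑ ≤ volume A}
  set A' := A \ Metric.eball 0 (s / 4)
  have hnear : s ^ k * volume (A' ∩ G) ≤ 4 ^ k * ∫⁻ r in A ∩ G, ‖r‖ₑ ^ k := by
    refine (pow_mul_volume_le_mul_setLIntegral (fun r hr => ?_) k).trans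
      (mul_le_mul_right (lintegral_mono_set (Set.inter_subset_inter_left G Set.sdiff_subset)) _)
    have hr' : s / 4 ≤ ‖r‖ₑ := by simpa using hr.1.2
    rwa [ENNReal.div_le_iff_le_mul (.inl four_ne_zero) (.inl ENNReal.ofNat_ne_top), mul_comm]
      at hr'
  have hfar : s ^ k * volume (A' \ G) ≤ D ^ k * ∫⁻ r in A, ‖r‖ₑ ^ k :=
    (pow_mul_volume_le_mul_setLIntegral (fun r hr => hs.trans (not_le.1 hr.2).le) k).trans
      (mul_le_mul_right (lintegral_mono_set (Set.sdiff_subset.trans Set.sdiff_subset)) _)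
  calc s ^ (k + 1) ≤ s ^ k * (2 * (volume (A' ∩ G) + volume (A' \ G))) := by
        rw [pow_succ]
        gcongr
        exact (le_two_mul_volume_diff_eball hs hs').trans
          (mul_le_mul_right (measure_le_inter_add_sdiff _ _ _) _)
    _ = 2 * (s ^ k * volume (A' ∩ G)) + 2 * (s ^ k * volume (A' \ G)) := by ring
    _ ≤ 2 * (4 ^ k * ∫⁻ r in A ∩ G, ‖r‖ₑ ^ k) + 2 * (D ^ k * ∫⁻ r in A, ‖r‖ₑ ^ k) := by gcongr
    _ = _ := by ring

theorem volume_pow_succ_le_setLIntegral_add_setLIntegral (A : Set ℝ) (D : ℝ≥0∞) (k : ℕ) :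
    volume A ^ (k + 1) ≤ 2 * 4 ^ k * (∫⁻ r in A ∩ {r | D * ‖r‖ₑ ≤ volume A}, ‖r‖ₑ ^ k)
      + 2 * D ^ k * ∫⁻ r in A, ‖r‖ₑ ^ k := by
  by_cases hA : volume A = ⊤
  · refine le_top.trans (ENNReal.eq_top_of_forall_nnreal_le fun r => ?_).ge
    calc (r : ℝ≥0∞) ≤ (max r 1 : NNReal) := by exact_mod_cast le_max_left r 1
      _ ≤ (max r 1 : NNReal) ^ (k + 1) :=
          le_self_pow₀ (by exact_mod_cast le_max_right r 1) k.succ_ne_zero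
      _ ≤ _ := pow_succ_le_setLIntegral_add_setLIntegral (hA ▸ le_top) ENNReal.coe_ne_top D k
  · exact pow_succ_le_setLIntegral_add_setLIntegral le_rfl hA D k

end LinearSets

section PolarCoordinates

variable {V : Type*} [NormedAddCommGroup V] [NormedSpace ℝ V] [FiniteDimensional ℝ V]
  [MeasurableSpace V] [BorelSpace V] (μ : Measure V) [μ.IsAddHaarMeasure]

theorem lintegral_toSphere_lintegral_Ioi [Nontrivial V] {h : V → ℝ≥0∞} (hh : Measurable h) :
    ∫⁻ ξ : Metric.sphere (0 : V) 1,
        (∫⁻ r in Set.Ioi (0 : ℝ), ‖r‖ₑ ^ (Module.finrank ℝ V - 1) * h (r • (ξ : V))) ∂μ.toSphere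
      = ∫⁻ y, h y ∂μ := by
  have hg : Measurable fun p : Metric.sphere (0 : V) 1 × Set.Ioi (0 : ℝ) =>
      h ((p.2 : ℝ) • (p.1 : V)) := by fun_prop
  have hpolar (y : ({0}ᶜ : Set V)) : h y = (fun p : Metric.sphere (0 : V) 1 × Set.Ioi (0 : ℝ) =>
      h ((p.2 : ℝ) • (p.1 : V))) (homeomorphUnitSphereProd V y) := by
    have hy : ‖(y : V)‖ ≠ 0 := norm_ne_zero_iff.2 y.2
    simp [smul_smul, hy]
  have hμ : ∫⁻ y, h y ∂μ = ∫⁻ y : ({0}ᶜ : Set V), h y ∂(μ.comap (↑)) := by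
    rw [lintegral_subtype_comap (measurableSet_singleton _).compl h, restrict_compl_singleton]
  rw [hμ, lintegral_congr hpolar, μ.measurePreserving_homeomorphUnitSphereProd.lintegral_comp hg,
    lintegral_prod _ hg.aemeasurable]
  refine lintegral_congr fun ξ => ?_
  have hξ : Measurable fun r : Set.Ioi (0 : ℝ) => h ((r : ℝ) • (ξ : V)) := by fun_prop
  rw [Measure.volumeIoiPow, lintegral_withDensity_eq_lintegral_mul _ (by fun_prop) hξ,
    ← lintegral_subtype_comap measurableSet_Ioi]
  refine lintegral_congr fun r => ?_
  rw [Pi.mul_apply, ENNReal.ofReal_pow r.2.le, Real.enorm_of_nonneg r.2.le]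

theorem lintegral_eq_setLIntegral_Ioi_add_comp_neg {f : ℝ → ℝ≥0∞} (hf : Measurable f) :
    ∫⁻ r, f r = ∫⁻ r in Set.Ioi 0, (f r + f (-r)) := by
  have hneg : ∫⁻ r in Set.Ioi (0 : ℝ), f (-r) = ∫⁻ r in Set.Iio 0, f r := by
    simpa using (Measure.measurePreserving_neg (volume : Measure ℝ)).setLIntegral_comp_preimage
      (measurableSet_Iio (a := 0)) hf
  rw [lintegral_add_left hf, hneg, ← lintegral_add_compl f measurableSet_Ioi, Set.compl_Ioi,
    setLIntegral_congr Iio_ae_eq_Iic]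

theorem lintegral_toSphere_lintegral_enorm [Nontrivial V] {h : V → ℝ≥0∞} (hh : Measurable h) :
    ∫⁻ ξ : Metric.sphere (0 : V) 1,
        (∫⁻ r : ℝ, ‖r‖ₑ ^ (Module.finrank ℝ V - 1) * h (r • (ξ : V))) ∂μ.toSphere
      = 2 * ∫⁻ y, h y ∂μ := by
  calc _ = ∫⁻ ξ : Metric.sphere (0 : V) 1, (∫⁻ r in Set.Ioi (0 : ℝ),
        ‖r‖ₑ ^ (Module.finrank ℝ V - 1) * (h (r • (ξ : V)) + h (-(r • (ξ : V))))) ∂μ.toSphere := by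
        refine lintegral_congr fun ξ => ?_
        rw [lintegral_eq_setLIntegral_Ioi_add_comp_neg (by fun_prop)]
        simp only [enorm_neg, neg_smul, mul_add]
    _ = ∫⁻ y, (h y + h (-y)) ∂μ :=
        lintegral_toSphere_lintegral_Ioi μ (h := fun y => h y + h (-y)) (by fun_prop)
    _ = 2 * ∫⁻ y, h y ∂μ := by
        rw [lintegral_add_left hh, lintegral_neg_eq_self h, two_mul]

end PolarCoordinates

section ChordPower

variable {V : Type*} [NormedAddCommGroup V] [NormedSpace ℝ V]

theorem enorm_mul_chordRatio_add_smul (E : Set V) (x ξ : V) {r : ℝ} (hr : r ≠ 0) :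
    ‖r‖ₑ * chordRatio E x (x + r • ξ) = volume {t : ℝ | x + t • ξ ∈ E} := by
  have hpre : AffineMap.lineMap x (x + r • ξ) ⁻¹' E = (· * r) ⁻¹' {t : ℝ | x + t • ξ ∈ E} := by
    ext u
    simp [AffineMap.lineMap_apply, mul_smul, add_comm x]
  rw [chordRatio, hpre, Real.volume_preimage_mul_right hr, ← mul_assoc, ← Real.enorm_eq_ofReal_abs,
    enorm_inv hr, ENNReal.mul_inv_cancel (by simpa) (by simp), one_mul]

theorem chordRatio_self_of_mem {E : Set V} {x : V} (hx : x ∈ E) : chordRatio E x x = ⊤ := by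
  have huniv : (AffineMap.lineMap x x ⁻¹' E : Set ℝ) = Set.univ := by
    ext u
    simpa using hx
  rw [chordRatio, huniv, Real.volume_univ]

theorem chordKernel_add_smul_eq_one {E : Set V} {δ : ℝ} {x ξ : V} {r : ℝ} (hx : x + r • ξ ∈ E)
    (hr : ENNReal.ofReal δ * ‖r‖ₑ ≤ volume {t : ℝ | x + t • ξ ∈ E}) :
    chordKernel E δ x (x + r • ξ) = 1 := by
  refine Set.indicator_of_mem (s := {y | ENNReal.ofReal δ ≤ chordRatio E x y}) ?_ 1
  rw [Set.mem_ofPred_eq]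
  rcases eq_or_ne r 0 with rfl | hr0
  · rw [zero_smul, add_zero] at hx ⊢
    exact (chordRatio_self_of_mem hx).ge.trans' le_top
  · rw [← enorm_mul_chordRatio_add_smul E x ξ hr0, mul_comm] at hr
    exact (ENNReal.mul_le_mul_iff_right (by simpa) (by simp)).1 hr

variable [MeasurableSpace V] [BorelSpace V] {E : Set V}

theorem volume_chord_pow_succ_le (hE : MeasurableSet E) (δ : ℝ) (k : ℕ) (x ξ : V) :
    volume {t : ℝ | x + t • ξ ∈ E} ^ (k + 1)
      ≤ 2 * 4 ^ k * (∫⁻ r : ℝ, ‖r‖ₑ ^ k * E.indicator (chordKernel E δ x) (x + r • ξ))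
        + 2 * ENNReal.ofReal δ ^ k * ∫⁻ r : ℝ, ‖r‖ₑ ^ k * E.indicator 1 (x + r • ξ) := by
  set A := {t : ℝ | x + t • ξ ∈ E}
  have hA : MeasurableSet A :=
    (by fun_prop : Measurable fun t : ℝ => x + t • ξ) hE
  have hG : MeasurableSet {r : ℝ | ENNReal.ofReal δ * ‖r‖ₑ ≤ volume A} :=
    measurableSet_le (by fun_prop) measurable_const
  refine (volume_pow_succ_le_setLIntegral_add_setLIntegral A (ENNReal.ofReal δ) k).trans
    (add_le_add (mul_le_mul_right ?_ _) (mul_le_mul_right ?_ _))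
  · rw [← lintegral_indicator (hA.inter hG)]
    refine lintegral_mono (Set.indicator_le fun r hr => ?_)
    rw [Set.indicator_of_mem (show x + r • ξ ∈ E from hr.1),
      chordKernel_add_smul_eq_one hr.1 hr.2, mul_one]
  · rw [← lintegral_indicator hA]
    refine lintegral_mono (Set.indicator_le fun r hr => ?_)
    rw [Set.indicator_of_mem (show x + r • ξ ∈ E from hr), Pi.one_apply, mul_one]

variable [FiniteDimensional ℝ V] (μ : Measure V) [μ.IsAddHaarMeasure]

theorem lintegral_toSphere_lintegral_indicator_add_smul [Nontrivial V] (hE : MeasurableSet E)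
    {f : V → ℝ≥0∞} (hf : Measurable f) (x : V) :
    ∫⁻ ξ : Metric.sphere (0 : V) 1, (∫⁻ r : ℝ, ‖r‖ₑ ^ (Module.finrank ℝ V - 1) *
        E.indicator f (x + r • (ξ : V))) ∂μ.toSphere
      = 2 * ∫⁻ y in E, f y ∂μ := by
  have hm : Measurable fun y => E.indicator f (x + y) := (hf.indicator hE).comp (by fun_prop)
  rw [lintegral_toSphere_lintegral_enorm μ hm, lintegral_add_left_eq_self (E.indicator f),
    lintegral_indicator hE]

theorem lintegral_toSphere_volume_chord_pow_le [Nontrivial V] (hE : MeasurableSet E) (δ : ℝ)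
    (x : V) :
    ∫⁻ ξ : Metric.sphere (0 : V) 1,
        volume {t : ℝ | x + t • (ξ : V) ∈ E} ^ Module.finrank ℝ V ∂μ.toSphere
      ≤ 4 ^ Module.finrank ℝ V * ∫⁻ y in E, chordKernel E δ x y ∂μ
        + 4 * ENNReal.ofReal δ ^ (Module.finrank ℝ V - 1) * μ E := by
  have hK : Measurable (chordKernel E δ x) := (measurable_chordKernel hE δ).of_uncurry_left
  have : Measurable (E.indicator (chordKernel E δ x)) := hK.indicator hE
  have : Measurable (E.indicator (1 : V → ℝ≥0∞)) := measurable_one.indicator hE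
  have hpolarK := lintegral_toSphere_lintegral_indicator_add_smul μ hE hK x
  have hpolar1 := lintegral_toSphere_lintegral_indicator_add_smul μ hE measurable_one x
  obtain ⟨k, hk⟩ := Nat.exists_eq_add_of_lt (Module.finrank_pos (R := ℝ) (M := V))
  rw [zero_add] at hk
  rw [hk, Nat.add_sub_cancel] at hpolarK hpolar1 ⊢
  refine (lintegral_mono fun ξ : Metric.sphere (0 : V) 1 =>
    volume_chord_pow_succ_le hE δ k x ξ).trans_eq ?_
  rw [lintegral_add_left (by fun_prop), lintegral_const_mul _ (by fun_prop),
    lintegral_const_mul _ (by fun_prop), hpolarK, hpolar1]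
  simp only [Pi.one_apply, setLIntegral_one]
  ring

/-- The `(d + 1)`-st power of the `L^(d + 1)` norm of the X-ray transform of the indicator of `E`,
where `d = dim V`, over the lines of a normed space `V` with Haar measure `μ`. The directions are
integrated against `μ.toSphere`, so that `μ` has its usual form in polar coordinates. -/
def xrayEnergy (μ : Measure V) (E : Set V) : ℝ≥0∞ :=
  ∫⁻ ξ : Metric.sphere (0 : V) 1,
    (∫⁻ x in E, volume {t : ℝ | x + t • (ξ : V) ∈ E} ^ Module.finrank ℝ V ∂μ) ∂μ.toSphere

theorem xrayEnergy_le [Nontrivial V] (hE : MeasurableSet E) (δ : ℝ) :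
    xrayEnergy μ E ≤ 4 ^ Module.finrank ℝ V * (∫⁻ x in E, (∫⁻ y in E, chordKernel E δ x y ∂μ) ∂μ)
      + 4 * ENNReal.ofReal δ ^ (Module.finrank ℝ V - 1) * μ E ^ 2 := by
  have hchord : Measurable fun p : Metric.sphere (0 : V) 1 × V =>
      volume {t : ℝ | p.2 + t • (p.1 : V) ∈ E} :=
    measurable_measure_prodMk_left ((by fun_prop :
      Measurable fun q : (Metric.sphere (0 : V) 1 × V) × ℝ => q.1.2 + q.2 • (q.1.1 : V)) hE)
  have hK : Measurable fun x => ∫⁻ y in E, chordKernel E δ x y ∂μ :=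
    (measurable_chordKernel hE δ).lintegral_prod_right'
  rw [xrayEnergy, lintegral_lintegral_swap (hchord.pow_const _).aemeasurable]
  refine (lintegral_mono fun x => lintegral_toSphere_volume_chord_pow_le μ hE δ x).trans_eq ?_
  rw [lintegral_add_right _ measurable_const, lintegral_const_mul _ hK, setLIntegral_const]
  ring

theorem mul_sq_le_lintegral_chordKernel (hd : 2 ≤ Module.finrank ℝ V) (hE : MeasurableSet E)
    (hEt : μ E ≠ ⊤) {C : ℝ} (hC : 0 < C) (h : ENNReal.ofReal C * μ E ^ 2 ≤ xrayEnergy μ E) :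
    ENNReal.ofReal (C / 2) / 4 ^ Module.finrank ℝ V * μ E ^ 2
      ≤ ∫⁻ x in E, (∫⁻ y in E, chordKernel E (min 1 (C / 8)) x y ∂μ) ∂μ := by
  have : Nontrivial V := Module.nontrivial_of_finrank_pos (R := ℝ) (by lia)
  set δ := min 1 (C / 8)
  set P := ∫⁻ x in E, (∫⁻ y in E, chordKernel E δ x y ∂μ) ∂μ
  have hδ : 4 * ENNReal.ofReal δ ^ (Module.finrank ℝ V - 1) ≤ ENNReal.ofReal (C / 2) :=
    calc 4 * ENNReal.ofReal δ ^ (Module.finrank ℝ V - 1) ≤ 4 * ENNReal.ofReal δ := by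
          gcongr
          exact pow_le_of_le_one zero_le (ENNReal.ofReal_le_one.2 (min_le_left _ _)) (by lia)
      _ ≤ 4 * ENNReal.ofReal (C / 8) := by gcongr; exact min_le_right _ _
      _ = ENNReal.ofReal (C / 2) := by
          rw [← ENNReal.ofReal_ofNat 4, ← ENNReal.ofReal_mul (by norm_num)]
          ring_nf
  have hhalf : ENNReal.ofReal (C / 2) * μ E ^ 2 ≤ 4 ^ Module.finrank ℝ V * P := by
    refine (ENNReal.add_le_add_iff_right
      (by finiteness : ENNReal.ofReal (C / 2) * μ E ^ 2 ≠ ⊤)).1 ?_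
    calc ENNReal.ofReal (C / 2) * μ E ^ 2 + ENNReal.ofReal (C / 2) * μ E ^ 2
        = ENNReal.ofReal C * μ E ^ 2 := by
          rw [← add_mul, ← ENNReal.ofReal_add (by positivity) (by positivity), add_halves]
      _ ≤ _ := h.trans (xrayEnergy_le μ hE δ)
      _ ≤ _ := by gcongr
  rw [← ENNReal.mul_div_right_comm]
  exact ENNReal.div_le_of_le_mul' hhalf

end ChordPower

theorem statement15_general {V : Type*} [NormedAddCommGroup V] [NormedSpace ℝ V]
    [FiniteDimensional ℝ V] [MeasurableSpace V] [BorelSpace V] (hd : 2 ≤ Module.finrank ℝ V)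
    {C : ℝ} (hC : 0 < C) :
    ∃ c' ∈ Set.Ioo (0 : ℝ) 1, ∀ (μ : Measure V) [μ.IsAddHaarMeasure] (E : Set V),
      MeasurableSet E → 0 < μ E → μ E < ⊤ → ENNReal.ofReal C * μ E ^ 2 ≤ xrayEnergy μ E →
      ∃ F, Convex ℝ F ∧ ENNReal.ofReal c' * μ E ≤ μ F ∧ μ F ≤ ENNReal.ofReal c'⁻¹ * μ E ∧
        ENNReal.ofReal c' * μ E ≤ μ (E ∩ F) := by
  obtain ⟨c', hc', hF⟩ := exists_convex_comparable_of_le_lintegral_chordKernel hd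
    (δ := min 1 (C / 8)) (p := ENNReal.ofReal (C / 2) / 4 ^ Module.finrank ℝ V) (by positivity)
    (min_le_left _ _) (ENNReal.div_pos (by simpa using hC) (by finiteness)).ne' (by finiteness)
  exact ⟨c', hc', fun μ _ E hE hE0 hEt h =>
    hF μ E hE hE0 hEt (mul_sq_le_lintegral_chordKernel μ hd hE hEt.ne hC h)⟩

/-- a large convexity index forces the presence of a comparable convex set. -/
theorem statement15 (n : ℕ) (hn : 2 ≤ n) (c : ℝ) (hc : c ∈ Set.Ioo (0 : ℝ) 1) :
    ∃ c' : ℝ, c' ∈ Set.Ioo (0 : ℝ) 1 ∧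
      ∀ E : Set (EuclideanSpace ℝ (Fin n)), MeasurableSet E →
        0 < volume E → volume E < ⊤ →
        ENNReal.ofReal (c * (n : ℝ) * ((n : ℝ) + 1)) * (volume E) ^ 2 ≤ Jn n E →
        ∃ F : Set (EuclideanSpace ℝ (Fin n)), Convex ℝ F ∧
          ENNReal.ofReal c' * volume E ≤ volume F ∧
          volume F ≤ ENNReal.ofReal c'⁻¹ * volume E ∧
          ENNReal.ofReal c' * volume E ≤ volume (E ∩ F) := by
  have hC : 0 < c * n * (n + 1) := by have := hc.1; positivity
  obtain ⟨c', hc', hF⟩ := statement15_general (V := EuclideanSpace ℝ (Fin n)) (by simpa) hC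
  exact ⟨c', hc', fun E hE hE0 hEt h => hF volume E hE hE0 hEt (by simpa [Jn, xrayEnergy] using h)⟩
end
end
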